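/- Let Γ = ℤ^6 ⋊ ℤ/12 where the generator of ℤ/12 acts on ℤ^6 by the matrix [[0,0,0,0,0,-1],[1,0,0,0,0,-1],[0,1,0,0,0,0],[0,0,1,0,0,1],[0,0,0,1,0,0],[0,0,0,0,1,-1]]. Then H^1(Γ,ℤ) = 0; H^2(Γ,ℤ) ≅ ℤ^3 ⊕ ℤ/12 ⊕ ℤ/3; H^3(Γ,ℤ) ≅ ℤ^2; H^4(Γ,ℤ) ≅ ℤ^3 ⊕ ℤ/12 ⊕ ℤ/6 ⊕ (ℤ/3)^3; H^5(Γ,ℤ) ≅ (ℤ/2)^2; H^6(Γ,ℤ) ≅ ℤ ⊕ ℤ/12 ⊕ (ℤ/6)^2 ⊕ (ℤ/3)^5; H^i(Γ,ℤ) ≅ (ℤ/2)^2 for all odd i ≥ 7; and H^i(Γ,ℤ) ≅ (ℤ/12)^2 ⊕ (ℤ/6)^2 ⊕ (ℤ/3)^5 for all even i ≥ 8. -/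

import Mathlib

open Matrix

namespace Crystal

/-- The lattice `ℤ^n`, written multiplicatively so that it can be a factor of a semidirect
product of groups. -/
abbrev Lat (n : ℕ) : Type := Multiplicative (Fin n → ℤ)

/-- The invertible integer matrix determined by `M` with `M ^ (m + 1) = 1`. -/
def matUnit {n : ℕ} (M : Matrix (Fin n) (Fin n) ℤ) (m : ℕ) (hm : M ^ (m + 1) = 1) :
    (Matrix (Fin n) (Fin n) ℤ)ˣ :=
  ⟨M, M ^ m, by rw [← pow_succ']; exact hm, by rw [← pow_succ]; exact hm⟩

/-- Linear automorphisms of `ℤ^n` as multiplicative automorphisms of the multiplicative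
version of `ℤ^n`. -/
def linToAut (n : ℕ) : ((Fin n → ℤ) ≃ₗ[ℤ] (Fin n → ℤ)) →* MulAut (Lat n) :=
  MonoidHom.mk' (fun e => AddEquiv.toMultiplicative e.toAddEquiv) (fun _ _ => rfl)

/-- An invertible integer matrix acts on the (multiplicative) lattice `ℤ^n` by (left)
matrix-vector multiplication. -/
def glToAut (n : ℕ) : (Matrix (Fin n) (Fin n) ℤ)ˣ →* MulAut (Lat n) :=
  (linToAut n).comp
    ((LinearMap.GeneralLinearGroup.generalLinearEquiv ℤ (Fin n → ℤ)).toMonoidHom.comp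
      (Matrix.GeneralLinearGroup.toLin).toMonoidHom)

/-- The homomorphism from `ℤ/m` (written multiplicatively) to a group `G` sending the
generator `1` to a chosen element `α` satisfying `α ^ m = 1`. -/
def zmodHom {G : Type*} [Group G] (m : ℕ) [NeZero m] (α : G) (hα : α ^ m = 1) :
    Multiplicative (ZMod m) →* G :=
  MonoidHom.mk' (fun g => α ^ (g.toAdd.val)) (by
    intro a b
    show α ^ (ZMod.val (a.toAdd + b.toAdd)) = α ^ (ZMod.val a.toAdd) * α ^ (ZMod.val b.toAdd)
    rw [ZMod.val_add, ← pow_eq_pow_mod _ hα, pow_add])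

/-- The action of `ℤ/q` on the lattice `ℤ^n` in which the generator `1` of `ℤ/q` acts by left
multiplication by the integer matrix `M`; `M` is required to satisfy `M ^ q = 1`. -/
def matAction {n : ℕ} (q : ℕ) [NeZero q] (M : Matrix (Fin n) (Fin n) ℤ)
    (hq : M ^ q = 1) : Multiplicative (ZMod q) →* MulAut (Lat n) :=
  zmodHom q (glToAut n (matUnit M (q - 1) (by
      rwa [Nat.sub_add_cancel (Nat.one_le_iff_ne_zero.2 (NeZero.ne q))])))
    (by
      rw [← map_pow]
      convert map_one (glToAut n)
      ext i j
      rw [Units.val_pow_eq_pow_val]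
      simp [matUnit, hq])

/-- The crystallographic group `ℤ^n ⋊ ℤ/q` in which the generator `1` of `ℤ/q` acts on the
lattice `ℤ^n` by left multiplication by the integer matrix `M` (with `M ^ q = 1`). -/
abbrev Crys {n : ℕ} (q : ℕ) [NeZero q] (M : Matrix (Fin n) (Fin n) ℤ) (hq : M ^ q = 1) : Type :=
  SemidirectProduct (Lat n) (Multiplicative (ZMod q)) (matAction q M hq)


open CategoryTheory groupCohomology

variable {k : Type} [CommRing k]

lemma comp_contractNth {G H : Type*} [Monoid G] [Monoid H] (f : G →* H) {n : ℕ}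
    (j : Fin (n + 1)) (g : Fin (n + 1) → G) (i : Fin n) :
    f (Fin.contractNth j (· * ·) g i) = Fin.contractNth j (· * ·) (fun l => f (g l)) i := by
  rcases lt_trichotomy (i : ℕ) j with h | h | h
  · rw [Fin.contractNth_apply_of_lt _ _ _ _ h, Fin.contractNth_apply_of_lt _ _ _ _ h]
  · rw [Fin.contractNth_apply_of_eq _ _ _ _ h, Fin.contractNth_apply_of_eq _ _ _ _ h,
      _root_.map_mul]
  · rw [Fin.contractNth_apply_of_gt _ _ _ _ h, Fin.contractNth_apply_of_gt _ _ _ _ h]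

/-- The map of inhomogeneous cochain complexes induced (contravariantly in the group,
covariantly in the coefficients) by a group homomorphism `f : H →* G` together with a
compatible linear map `τ : A → B` of coefficients. -/
def cochainsMap {G H : Type} [Group G] [Group H] (A : Rep k G) (B : Rep k H)
    (f : H →* G) (τ : A →ₗ[k] B)
    (hcomp : ∀ (h : H) (a : A), τ (A.ρ (f h) a) = B.ρ h (τ a)) :
    inhomogeneousCochains A ⟶ inhomogeneousCochains B where
  f n := ModuleCat.ofHom
    { toFun := fun F v => τ (F (fun i => f (v i)))
      map_add' := fun x y => by funext v; simp
      map_smul' := fun r x => by funext v; simp }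
  comm' i j hij := by
    have hij' : i + 1 = j := hij
    subst hij'
    rw [inhomogeneousCochains.d_def, inhomogeneousCochains.d_def]
    ext F v
    show (inhomogeneousCochains.d B i).hom (fun w => τ (F (fun l => f (w l)))) v
      = τ ((inhomogeneousCochains.d A i).hom F (fun l => f (v l)))
    simp only [inhomogeneousCochains.d_hom_apply, map_add, map_sum, _root_.map_smul]
    congr 1
    · exact (hcomp (v 0) _).symm
    · refine Finset.sum_congr rfl fun j' _ => ?_
      have hc : (fun l => f (j'.contractNth (· * ·) v l))
          = j'.contractNth (· * ·) (fun l => f (v l)) := by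
        funext l
        exact comp_contractNth f j' v l
      rw [hc]

lemma cochainsMap_eq_id {G : Type} [Group G] (A : Rep k G) (f : G →* G) (τ : A →ₗ[k] A)
    (hcomp : ∀ (h : G) (a : A), τ (A.ρ (f h) a) = A.ρ h (τ a))
    (hf : ∀ x, f x = x) (hτ : ∀ a, τ a = a) :
    cochainsMap A A f τ hcomp = 𝟙 _ := by
  apply HomologicalComplex.Hom.ext
  funext n
  ext F v
  show τ (F (fun i => f (v i))) = F v
  simp only [hf, hτ]

lemma cochainsMap_comp {G H K : Type} [Group G] [Group H] [Group K]
    (A : Rep k G) (B : Rep k H) (C : Rep k K)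
    (f₁ : H →* G) (τ₁ : A →ₗ[k] B) (h₁ : ∀ (h : H) (a : A), τ₁ (A.ρ (f₁ h) a) = B.ρ h (τ₁ a))
    (f₂ : K →* H) (τ₂ : B →ₗ[k] C) (h₂ : ∀ (h : K) (a : B), τ₂ (B.ρ (f₂ h) a) = C.ρ h (τ₂ a))
    (f₃ : K →* G) (τ₃ : A →ₗ[k] C) (h₃ : ∀ (h : K) (a : A), τ₃ (A.ρ (f₃ h) a) = C.ρ h (τ₃ a))
    (hf : ∀ x, f₁ (f₂ x) = f₃ x) (hτ : ∀ a, τ₂ (τ₁ a) = τ₃ a) :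
    cochainsMap A B f₁ τ₁ h₁ ≫ cochainsMap B C f₂ τ₂ h₂ = cochainsMap A C f₃ τ₃ h₃ := by
  apply HomologicalComplex.Hom.ext
  funext n
  ext F v
  show τ₂ (τ₁ (F (fun i => f₁ (f₂ (v i))))) = τ₃ (F (fun i => f₃ (v i)))
  simp only [hf]
  exact hτ _

/-- Given an action `φ` of a group `G` on a group `L` and a representation `ψ` of `G` on a
`k`-module `V`, this is `H^j(L, V)` (with `L` acting trivially on the coefficients `V`),
endowed with the `G`-action functorially induced by the action of `G` on `L` and on `V`:
`g` acts via the conjugation automorphism `φ g⁻¹` of `L` and via `ψ g` on `V`. -/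
noncomputable def cohRep {G L V : Type} [Group G] [Group L] [AddCommGroup V] [Module k V]
    (φ : G →* MulAut L) (ψ : Representation k G V) (j : ℕ) : Rep k G :=
  Rep.of (X := groupCohomology (Rep.trivial k L V) j)
    { toFun := fun g => ModuleCat.Hom.hom <| HomologicalComplex.homologyMap
        (cochainsMap (Rep.trivial k L V) (Rep.trivial k L V) (φ g⁻¹).toMonoidHom (ψ g)
          (fun _ _ => rfl)) j
      map_one' := by
        have h := cochainsMap_eq_id (Rep.trivial k L V) (φ 1⁻¹).toMonoidHom (ψ 1) (fun _ _ => rfl)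
          (fun x => by simp) (fun a => by simp)
        refine (congrArg (fun c => ModuleCat.Hom.hom (HomologicalComplex.homologyMap c j)) h).trans ?_
        exact congrArg ModuleCat.Hom.hom (HomologicalComplex.homologyMap_id _ j)
      map_mul' := fun g₁ g₂ => by
        have h := cochainsMap_comp (Rep.trivial k L V) (Rep.trivial k L V) (Rep.trivial k L V)
          (φ g₂⁻¹).toMonoidHom (ψ g₂) (fun _ _ => rfl)
          (φ g₁⁻¹).toMonoidHom (ψ g₁) (fun _ _ => rfl)
          (φ (g₁ * g₂)⁻¹).toMonoidHom (ψ (g₁ * g₂)) (fun _ _ => rfl)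
          (fun x => by simp [_root_.mul_inv_rev]) (fun a => by simp)
        rw [← h, HomologicalComplex.homologyMap_comp]
        rfl }


/-- `H^i(G, H^j(L, ℤ))`: the `i`-th cohomology of the cyclic group `ℤ/q` with coefficients in
the `j`-th cohomology of the lattice `ℤ^n` (with trivial `ℤ` coefficients), where the
`ℤ/q`-action on `H^j(ℤ^n, ℤ)` is the one functorially induced by the matrix action on the
lattice. -/
noncomputable abbrev cohOfCoh {n : ℕ} (q : ℕ) [NeZero q] (M : Matrix (Fin n) (Fin n) ℤ)
    (hq : M ^ q = 1) (i j : ℕ) : ModuleCat ℤ :=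
  groupCohomology
    (cohRep (matAction q M hq) (1 : Representation ℤ (Multiplicative (ZMod q)) ℤ) j) i

/-- `H^k(Γ, ℤ)` for `Γ = ℤ^n ⋊ ℤ/q`, with trivial coefficients `ℤ`. -/
noncomputable abbrev cohCrys {n : ℕ} (q : ℕ) [NeZero q] (M : Matrix (Fin n) (Fin n) ℤ)
    (hq : M ^ q = 1) (k : ℕ) : ModuleCat ℤ :=
  groupCohomology (Rep.trivial ℤ (Crys q M hq) ℤ) k

end Crystal

/-- The holonomy matrix. -/
def holM : Matrix (Fin 6) (Fin 6) ℤ := !![0, 0, 0, 0, 0, -1; 1, 0, 0, 0, 0, -1; 0, 1, 0, 0, 0, 0; 0, 0, 1, 0, 0, 1; 0, 0, 0, 1, 0, 0; 0, 0, 0, 0, 1, -1]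

lemma holM_pow : holM ^ 12 = 1 := by decide

/-- `H^k(ℤ^6 ⋊ ℤ/12, ℤ)`, where the generator of `ℤ/12` acts on `ℤ^6` by left
multiplication by the matrix `holM`. -/
noncomputable abbrev H (k : ℕ) : ModuleCat ℤ := Crystal.cohCrys 12 holM holM_pow k

/-- `H^i(ℤ/12, H^j(ℤ^6, ℤ))`, with the functorially induced action on coefficients. -/
noncomputable abbrev Hc (i j : ℕ) : ModuleCat ℤ := Crystal.cohOfCoh 12 holM holM_pow i j

/-!
The Koszul complex of the lattice `ℤ ^ 6` is a resolution of `ℤ[ℤ/12]` by free `ℤ[Γ]`-modules. If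
the action of a generator of `ℤ/12` lifted to an automorphism `s` of this complex with `s ^ 12 = 1`,
then combining it with the 2-periodic cyclic complex, whose differentials are `s - 1` and
`1 + s + ⋯ + s ^ 11`, would give a free resolution of `ℤ`. We only have a lift `s` which commutes
with a perturbation `b` of the Koszul differential, by terms raising the exterior degree, such that
`s ^ 12 = 1 - b ^ 2`. Then the squares of `b` and of the cyclic differential cancel, so their signed
sum is a differential, and it is exact because the Koszul complex and the cyclic complex are. The
monomials of exterior degree at most `m` span its degree `m`, so there are at most 64 generators in
each degree and the resolution is 2-periodic from degree 6 on. Its coinvariants are explicit integer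
matrices, which are diagonalised up to chain homotopy.

The identities for `s` and `b` and the diagonalisations are matrix identities over `ℤ[Γ]` and `ℤ`,
checked by evaluation in the kernel.
-/

section Telescoping

variable {M N : Type*} [AddCommGroup M] [AddCommGroup N]

/-- The signed sum of `f` from `0` to `m - 1`, so that its difference in `m` is `f`. -/
noncomputable def signedSum (f : ℤ → M) (m : ℤ) : M :=
  ∑ t ∈ Finset.Ico 0 m, f t - ∑ t ∈ Finset.Ico m 0, f t

lemma signedSum_add_one (f : ℤ → M) (m : ℤ) : signedSum f (m + 1) = signedSum f m + f m := by
  unfold signedSum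
  rcases le_or_gt 0 m with hm | hm
  · rw [Finset.Ico_eq_empty (by lia : ¬ m + 1 < 0), Finset.Ico_eq_empty (by lia : ¬ m < 0),
      ← Finset.insert_Ico_right_eq_Ico_add_one hm, Finset.sum_insert (by simp)]
    abel
  · rw [Finset.Ico_eq_empty (by lia : ¬ 0 < m + 1), Finset.Ico_eq_empty (by lia : ¬ 0 < m),
      ← Finset.insert_Ico_add_one_left_eq_Ico hm, Finset.sum_insert (by simp)]
    abel

lemma map_signedSum (φ : M →+ N) (f : ℤ → M) (m : ℤ) :
    φ (signedSum f m) = signedSum (fun t => φ (f t)) m := by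
  simp [signedSum]

lemma signedSum_sub (F : ℤ → M) (m : ℤ) :
    signedSum (fun t => F (t + 1) - F t) m = F m - F 0 := by
  induction m using Int.induction_on with
  | zero => simp [signedSum]
  | succ i ih => rw [signedSum_add_one, ih]; abel
  | pred i ih =>
    have h := signedSum_add_one (fun t => F (t + 1) - F t) (-i - 1)
    rw [sub_add_cancel, ih] at h
    rw [eq_sub_of_add_eq h.symm]
    abel

lemma signedSum_sub_distrib (f g : ℤ → M) (m : ℤ) :
    signedSum (fun t => f t - g t) m = signedSum f m - signedSum g m := by
  simp only [signedSum, Finset.sum_sub_distrib]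
  abel

end Telescoping

section IteratedContraction

variable {R : Type*} [Ring R] {ι : Type*}

lemma commute_one_sub_anticommutator {a b c : R} (hb : a * b + b * a = 0)
    (hc : a * c + c * a = 0) : Commute a (1 - (b * c + c * b)) := by
  have hab := eq_neg_of_add_eq_zero_left hb
  have hac := eq_neg_of_add_eq_zero_left hc
  refine (Commute.one_right a).sub_right ?_
  change a * (b * c + c * b) = (b * c + c * b) * a
  calc a * (b * c + c * b) = a * b * c + a * c * b := by noncomm_ring
    _ = -(b * a) * c + -(c * a) * b := by rw [hab, hac]
    _ = -(b * (a * c)) - c * (a * b) := by noncomm_ring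
    _ = -(b * -(c * a)) - c * -(b * a) := by rw [hab, hac]
    _ = (b * c + c * b) * a := by noncomm_ring

lemma commute_one_sub_anticommutator_self {a b : R} (ha : a * a = 0) :
    Commute a (1 - (a * b + b * a)) := by
  refine (Commute.one_right a).sub_right ?_
  change a * (a * b + b * a) = (a * b + b * a) * a
  rw [mul_add, ← mul_assoc, ha, add_mul, mul_assoc b, ha]
  simp [mul_assoc]

variable (d h : ι → R)

/-- The contraction of `∑ k ∈ l, d k` assembled from contractions `h k` of the individual `d k`,
each of which is a homotopy from the identity to `1 - (d k * h k + h k * d k)`. -/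
def iteratedContraction : List ι → R
  | [] => 0
  | k :: l => h k + (1 - (d k * h k + h k * d k)) * iteratedContraction l

variable {d h} (hdd : ∀ j k, j ≠ k → d j * d k + d k * d j = 0)
  (hdh : ∀ j k, j ≠ k → d j * h k + h k * d j = 0)

include hdd hdh in
lemma anticommute_iteratedContraction {j : ι} {l : List ι} (hj : j ∉ l) :
    d j * iteratedContraction d h l + iteratedContraction d h l * d j = 0 := by
  induction l with
  | nil => simp [iteratedContraction]
  | cons k l ih =>
    rw [List.mem_cons, not_or] at hj
    have hP := (commute_one_sub_anticommutator (hdd j k hj.1) (hdh j k hj.1)).eq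
    rw [iteratedContraction, mul_add, add_mul, ← mul_assoc, hP, add_add_add_comm, hdh j k hj.1,
      zero_add, mul_assoc, mul_assoc, ← mul_add, ih hj.2, mul_zero]

include hdd hdh in
theorem sum_mul_iteratedContraction_add (hd : ∀ k, d k * d k = 0) {l : List ι} (hl : l.Nodup) :
    (l.map d).sum * iteratedContraction d h l + iteratedContraction d h l * (l.map d).sum =
      1 - (l.map fun k => 1 - (d k * h k + h k * d k)).prod := by
  induction l with
  | nil => simp [iteratedContraction]
  | cons k l ih =>
    obtain ⟨hk, hl⟩ := List.nodup_cons.1 hl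
    have hne {j} (hj : j ∈ l) : j ≠ k := fun e => hk (e ▸ hj)
    set D := (l.map d).sum
    set I := iteratedContraction d h l
    set P := 1 - (d k * h k + h k * d k) with hP
    have d_P : d k * P = P * d k := (commute_one_sub_anticommutator_self (hd k)).eq
    have D_P : D * P = P * D :=
      (Commute.list_sum_left _ _ fun a ha => by
        obtain ⟨j, hj, rfl⟩ := List.mem_map.1 ha
        exact commute_one_sub_anticommutator (hdd j k (hne hj)) (hdh j k (hne hj))).eq
    have D_h : D * h k + h k * D = 0 := by
      rw [← List.sum_map_mul_right, ← List.sum_map_mul_left, ← List.sum_map_add]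
      exact List.sum_eq_zero fun a ha => by
        obtain ⟨j, hj, rfl⟩ := List.mem_map.1 ha
        exact hdh j k (hne hj)
    have d_I : d k * I + I * d k = 0 := anticommute_iteratedContraction hdd hdh hk
    rw [List.map_cons, List.sum_cons, List.map_cons, List.prod_cons, iteratedContraction]
    calc (d k + D) * (h k + P * I) + (h k + P * I) * (d k + D)
        = (d k * h k + h k * d k) + (D * h k + h k * D) + (d k * P * I + P * I * d k)
            + (D * P * I + P * I * D) := by noncomm_ring
      _ = (1 - P) + P * (d k * I + I * d k) + P * (D * I + I * D) := by
        rw [D_h, d_P, D_P, hP]; noncomm_ring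
      _ = 1 - P * _ := by rw [d_I, ih hl]; noncomm_ring

end IteratedContraction

section Exterior

open Finsupp

variable {ι : Type*} [LinearOrder ι] {A : Type*} [AddCommGroup A]

/-- The sign with which the generator `e_k` enters or leaves the exterior monomial `e_I`. -/
def exteriorSign (k : ι) (I : Finset ι) : ℤ := ∏ i ∈ I, if i < k then -1 else 1

lemma exteriorSign_mul_self (k : ι) (I : Finset ι) : exteriorSign k I * exteriorSign k I = 1 := by
  rw [exteriorSign, ← Finset.prod_mul_distrib]
  exact Finset.prod_eq_one fun i _ => by split_ifs <;> rfl

lemma exteriorSign_insert {j k : ι} {I : Finset ι} (hk : k ∉ I) :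
    exteriorSign j (insert k I) = (if k < j then -1 else 1) * exteriorSign j I :=
  Finset.prod_insert hk

lemma exteriorSign_erase {j k : ι} {I : Finset ι} (hk : k ∈ I) :
    exteriorSign j (I.erase k) = (if k < j then -1 else 1) * exteriorSign j I := by
  rw [← Finset.insert_erase hk, exteriorSign_insert (Finset.notMem_erase k I),
    Finset.erase_insert_eq_erase, Finset.erase_idem, ← mul_assoc]
  split_ifs <;> simp

/-- The operator `e_I ⊗ a ↦ ± e_{I ∖ k} ⊗ T a` on an exterior algebra tensored with `A`. -/
noncomputable def lower (k : ι) (T : Module.End ℤ A) : Module.End ℤ (Finset ι →₀ A) :=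
  lsum ℤ fun I => if k ∈ I then exteriorSign k I • (lsingle (I.erase k) ∘ₗ T) else 0

/-- The operator `e_I ⊗ a ↦ ± e_{I ∪ k} ⊗ T a` on an exterior algebra tensored with `A`. -/
noncomputable def raise (k : ι) (T : Module.End ℤ A) : Module.End ℤ (Finset ι →₀ A) :=
  lsum ℤ fun I => if k ∈ I then 0 else exteriorSign k I • (lsingle (insert k I) ∘ₗ T)

lemma lower_single (k : ι) (T : Module.End ℤ A) (I : Finset ι) (a : A) :
    lower k T (single I a) =
      if k ∈ I then exteriorSign k I • single (I.erase k) (T a) else 0 := by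
  unfold lower; split_ifs with h <;> simp [h]

lemma raise_single (k : ι) (T : Module.End ℤ A) (I : Finset ι) (a : A) :
    raise k T (single I a) =
      if k ∈ I then 0 else exteriorSign k I • single (insert k I) (T a) := by
  unfold raise; split_ifs with h <;> simp [h]

lemma lower_mul_lower_add {j k : ι} (hjk : j ≠ k) {S T : Module.End ℤ A} (hST : Commute S T) :
    lower j S * lower k T + lower k T * lower j S = 0 := by
  ext I a : 2
  by_cases hj : j ∈ I <;> by_cases hk : k ∈ I <;>
    simp only [LinearMap.coe_comp, Function.comp_apply, lsingle_apply, LinearMap.add_apply,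
      Module.End.mul_apply, lower_single, map_smul, map_zero, smul_zero, add_zero,
      hj, hk, Finset.mem_erase, hjk, hjk.symm, ne_eq, not_false_eq_true, and_true, and_false,
      if_true, if_false, LinearMap.zero_apply, LinearMap.zero_comp]
  have hTS : T (S a) = S (T a) := congrArg (· a) hST.eq.symm
  rw [exteriorSign_erase hj, exteriorSign_erase hk, Finset.erase_right_comm, hTS, smul_smul,
    smul_smul, ← add_smul]
  rcases hjk.lt_or_gt with h | h <;> simp [h, h.not_gt, mul_comm]

lemma lower_mul_lower_self (k : ι) (S T : Module.End ℤ A) : lower k S * lower k T = 0 := by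
  ext I a : 2
  by_cases hk : k ∈ I <;> simp [lower_single, hk]

lemma lower_mul_raise_add {j k : ι} (hjk : j ≠ k) {S T : Module.End ℤ A} (hST : Commute S T) :
    lower j S * raise k T + raise k T * lower j S = 0 := by
  ext I a : 2
  by_cases hj : j ∈ I <;> by_cases hk : k ∈ I <;>
    simp only [LinearMap.coe_comp, Function.comp_apply, lsingle_apply, LinearMap.add_apply,
      Module.End.mul_apply, lower_single, raise_single, map_smul, map_zero, smul_zero, add_zero,
      hj, hk, Finset.mem_erase, Finset.mem_insert, hjk, hjk.symm, ne_eq, not_false_eq_true,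
      and_true, and_false, or_true, or_false,
      if_true, if_false, LinearMap.zero_apply, LinearMap.zero_comp]
  have hTS : T (S a) = S (T a) := congrArg (· a) hST.eq.symm
  rw [exteriorSign_erase hj, exteriorSign_insert hk, Finset.erase_insert_of_ne hjk.symm, hTS,
    smul_smul, smul_smul, ← add_smul]
  rcases hjk.lt_or_gt with h | h <;> simp [h, h.not_gt, mul_comm]

lemma lower_raise_add_apply (k : ι) (S T : Module.End ℤ A) (I : Finset ι) (a : A) :
    (lower k S * raise k T + raise k T * lower k S) (single I a) =
      single I (if k ∈ I then T (S a) else S (T a)) := by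
  by_cases hk : k ∈ I
  · simp [lower_single, raise_single, hk, exteriorSign_erase hk, smul_smul,
      exteriorSign_mul_self]
  · simp [lower_single, raise_single, hk, exteriorSign_insert hk, smul_smul,
      exteriorSign_mul_self]

/-- The part of an exterior algebra tensored with `A` of degree at least `r`. -/
def degreeGE (r : ℕ) : Submodule ℤ (Finset ι →₀ A) :=
  supported A ℤ {I : Finset ι | r ≤ I.card}

omit [LinearOrder ι] in
lemma single_mem_degreeGE {r : ℕ} {I : Finset ι} (hI : r ≤ I.card) (a : A) :
    single I a ∈ degreeGE r :=
  single_mem_supported ℤ a hI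

omit [LinearOrder ι] in
lemma degreeGE_antitone : Antitone (degreeGE : ℕ → Submodule ℤ (Finset ι →₀ A)) :=
  fun _ _ hrs => supported_mono fun _ hI => hrs.trans hI

omit [LinearOrder ι] in
lemma map_mem_degreeGE {T : Module.End ℤ (Finset ι →₀ A)} {r s : ℕ}
    (hT : ∀ I : Finset ι, r ≤ I.card → ∀ a, T (single I a) ∈ degreeGE s)
    {v : Finset ι →₀ A} (hv : v ∈ degreeGE r) : T v ∈ degreeGE s := by
  rw [← v.sum_single, Finsupp.sum, map_sum]
  exact sum_mem fun I hI => hT I (hv hI) _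

lemma raise_mem_degreeGE (k : ι) (T : Module.End ℤ A) {r : ℕ} {v : Finset ι →₀ A}
    (hv : v ∈ degreeGE r) : raise k T v ∈ degreeGE (r + 1) := by
  refine map_mem_degreeGE (fun I hI a => ?_) hv
  rw [raise_single]
  split_ifs with hk
  · exact zero_mem _
  · refine zsmul_mem (single_mem_degreeGE ?_ _) _
    rw [Finset.card_insert_of_notMem hk]
    lia

end Exterior

section LatticeKoszul

open Finsupp

variable {G : Type*}

/-- The additive extension of a function on `G` to `ℤ[G]`. -/
noncomputable def groupRingLift {M : Type*} [AddCommGroup M] (f : G → M) :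
    MonoidAlgebra ℤ G →ₗ[ℤ] M :=
  Finsupp.linearCombination ℤ f ∘ₗ (MonoidAlgebra.coeffLinearEquiv ℤ).toLinearMap

@[simp]
lemma groupRingLift_single {M : Type*} [AddCommGroup M] (f : G → M) (γ : G) (c : ℤ) :
    groupRingLift f (.single γ c) = c • f γ := by
  simp [groupRingLift]

lemma groupRing_hom_ext {M : Type*} [AddCommGroup M] {f g : MonoidAlgebra ℤ G →ₗ[ℤ] M}
    (h : ∀ γ, f (.single γ 1) = g (.single γ 1)) : f = g := by
  ext γ
  simpa using h γ

/-- A subgroup `x(ℤⁿ)` of `G` together with a map `u` recording the position of an element in its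
coset: this identifies `G`, as a right `ℤⁿ`-set, with a union of copies of `ℤⁿ`. -/
structure LatticeCoordinates (G : Type*) [Group G] (n : ℕ) where
  x : (Fin n → ℤ) → G
  u : G → Fin n → ℤ
  x_add (v w) : x (v + w) = x v * x w
  u_mul_x (γ v) : u (γ * x v) = u γ + v

namespace LatticeCoordinates

variable [Group G] {n : ℕ} (L : LatticeCoordinates G n)

lemma x_zero : L.x 0 = 1 := by
  simpa using (L.x_add 0 0).symm

lemma x_mul_comm (v w : Fin n → ℤ) : L.x v * L.x w = L.x w * L.x v := by
  rw [← L.x_add, add_comm, L.x_add]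

/-- Right multiplication by `x_k - 1` on `ℤ[G]`. -/
noncomputable def diff (k : Fin n) : Module.End ℤ (MonoidAlgebra ℤ G) :=
  groupRingLift fun γ => .single (γ * L.x (Pi.single k 1)) 1 - .single γ 1

/-- The section of `diff k` summing from the hyperplane `u_k = 0`. -/
noncomputable def telescope (k : Fin n) : Module.End ℤ (MonoidAlgebra ℤ G) :=
  groupRingLift fun γ =>
    signedSum (fun t => .single (γ * L.x (Pi.single k (t - L.u γ k))) 1) (L.u γ k)

/-- The projection of `ℤ[G]` onto the hyperplane `u_k = 0`. -/
noncomputable def proj (k : Fin n) : Module.End ℤ (MonoidAlgebra ℤ G) :=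
  groupRingLift fun γ => .single (γ * L.x (Pi.single k (-L.u γ k))) 1

lemma commute_diff (j k : Fin n) : Commute (L.diff j) (L.diff k) := by
  refine groupRing_hom_ext fun γ => ?_
  simp only [Module.End.mul_apply, diff, groupRingLift_single, map_sub, one_smul, mul_assoc,
    L.x_mul_comm (Pi.single j 1)]
  abel

lemma commute_diff_telescope {j k : Fin n} (hjk : j ≠ k) :
    Commute (L.diff j) (L.telescope k) := by
  refine groupRing_hom_ext fun γ => ?_
  have hu : L.u (γ * L.x (Pi.single j 1)) k = L.u γ k := by simp [L.u_mul_x, hjk.symm]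
  simp only [Module.End.mul_apply, telescope, groupRingLift_single, one_smul]
  refine (map_signedSum (L.diff j).toAddMonoidHom _ _).trans ?_
  simp [diff, hu, signedSum_sub_distrib, mul_assoc, L.x_mul_comm (Pi.single j 1)]

lemma telescope_mul_diff (k : Fin n) : L.telescope k * L.diff k = 1 := by
  refine groupRing_hom_ext fun γ => ?_
  have hu : L.u (γ * L.x (Pi.single k 1)) k = L.u γ k + 1 := by simp [L.u_mul_x]
  have hx (t : ℤ) : γ * L.x (Pi.single k 1) * L.x (Pi.single k (t - (L.u γ k + 1))) =
      γ * L.x (Pi.single k (t - L.u γ k)) := by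
    rw [mul_assoc, ← L.x_add, ← Pi.single_add]; congr 3; ring
  simp [Module.End.mul_apply, diff, telescope, hu, hx, signedSum_add_one, L.x_zero]

lemma diff_mul_telescope (k : Fin n) : L.diff k * L.telescope k = 1 - L.proj k := by
  refine groupRing_hom_ext fun γ => ?_
  have hx (t : ℤ) : γ * L.x (Pi.single k (t - L.u γ k)) * L.x (Pi.single k 1) =
      γ * L.x (Pi.single k (t + 1 - L.u γ k)) := by
    rw [mul_assoc, ← L.x_add, ← Pi.single_add]; congr 3; ring
  have h := signedSum_sub
    (fun t => MonoidAlgebra.single (γ * L.x (Pi.single k (t - L.u γ k))) (1 : ℤ)) (L.u γ k)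
  simp only [Module.End.mul_apply, telescope, groupRingLift_single, one_smul]
  refine (map_signedSum (L.diff k).toAddMonoidHom _ _).trans ?_
  simpa [diff, proj, hx, L.x_zero] using h

lemma prod_proj_single (l : List (Fin n)) (γ : G) :
    (l.map L.proj).prod (.single γ 1) =
      .single (γ * L.x fun k => if k ∈ l then -L.u γ k else 0) 1 := by
  induction l with
  | nil => simp [← Pi.zero_def, L.x_zero]
  | cons k l ih =>
    rw [List.map_cons, List.prod_cons, Module.End.mul_apply, ih, proj, groupRingLift_single,
      one_smul, mul_assoc, ← L.x_add, L.u_mul_x]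
    congr 3
    ext i
    by_cases hi : i = k
    · subst hi
      by_cases hl : i ∈ l <;> simp [hl]
    · simp [hi]

/-- The projection of `ℤ[G]` onto the span of the elements with coordinate `0`. -/
noncomputable def retract : Module.End ℤ (MonoidAlgebra ℤ G) :=
  groupRingLift fun γ => .single (γ * L.x (-L.u γ)) 1

lemma prod_proj_finRange : ((List.finRange n).map L.proj).prod = L.retract :=
  groupRing_hom_ext fun γ => by
    simp [L.prod_proj_single, retract, ← Pi.neg_def]

/-- The Koszul differential `e_I ↦ ∑ ± (x_k - 1) e_{I ∖ k}` of the lattice, induced up to `G`. -/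
noncomputable def koszul : Module.End ℤ (Finset (Fin n) →₀ MonoidAlgebra ℤ G) :=
  ((List.finRange n).map fun k => lower k (L.diff k)).sum

lemma koszul_single (I : Finset (Fin n)) (a : MonoidAlgebra ℤ G) :
    L.koszul (single I a) = ∑ k ∈ I, exteriorSign k I • single (I.erase k) (L.diff k a) := by
  rw [koszul, ← Fin.sum_univ_def, LinearMap.sum_apply]
  simp only [lower_single, Finset.sum_ite_mem, Finset.univ_inter]

lemma koszul_mem_degreeGE {r : ℕ} {v : Finset (Fin n) →₀ MonoidAlgebra ℤ G}
    (hv : v ∈ degreeGE (r + 1)) : L.koszul v ∈ degreeGE r := by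
  refine map_mem_degreeGE (fun I hI a => ?_) hv
  rw [koszul_single]
  refine sum_mem fun k hk => zsmul_mem (single_mem_degreeGE ?_ _) _
  rw [Finset.card_erase_of_mem hk]
  lia

/-- The contraction of the Koszul complex onto its degree zero homology. -/
noncomputable def contraction : Module.End ℤ (Finset (Fin n) →₀ MonoidAlgebra ℤ G) :=
  iteratedContraction (fun k => lower k (L.diff k)) (fun k => raise k (L.telescope k))
    (List.finRange n)

lemma one_sub_anticommutator_single (k : Fin n) (I : Finset (Fin n)) (a : MonoidAlgebra ℤ G) :
    (1 - (lower k (L.diff k) * raise k (L.telescope k) +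
      raise k (L.telescope k) * lower k (L.diff k))) (single I a) =
        if k ∈ I then 0 else single I (L.proj k a) := by
  rw [LinearMap.sub_apply, lower_raise_add_apply, ← Module.End.mul_apply, ← Module.End.mul_apply,
    L.telescope_mul_diff, L.diff_mul_telescope]
  split_ifs <;> simp

lemma prod_one_sub_anticommutator_single (l : List (Fin n)) (I : Finset (Fin n))
    (a : MonoidAlgebra ℤ G) :
    (l.map fun k => 1 - (lower k (L.diff k) * raise k (L.telescope k) +
      raise k (L.telescope k) * lower k (L.diff k))).prod (single I a) =
        if ∃ k ∈ l, k ∈ I then 0 else single I ((l.map L.proj).prod a) := by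
  induction l with
  | nil => simp
  | cons k l ih =>
    rw [List.map_cons, List.prod_cons, Module.End.mul_apply, ih]
    by_cases hl : ∃ j ∈ l, j ∈ I
    · simp [hl]
    · rw [if_neg hl, one_sub_anticommutator_single]
      by_cases hk : k ∈ I <;> simp [hl, hk]

theorem koszul_contraction_add (v : Finset (Fin n) →₀ MonoidAlgebra ℤ G) :
    L.koszul (L.contraction v) + L.contraction (L.koszul v) =
      v - single ∅ (L.retract (v ∅)) := by
  have h := sum_mul_iteratedContraction_add
    (fun j k hjk => lower_mul_lower_add hjk (L.commute_diff j k))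
    (fun j k hjk => lower_mul_raise_add hjk (L.commute_diff_telescope hjk))
    (fun k => lower_mul_lower_self k _ _) (List.nodup_finRange n)
  refine (LinearMap.congr_fun h v).trans ?_
  rw [LinearMap.sub_apply, Module.End.one_apply]
  congr 1
  induction v using Finsupp.induction_linear with
  | zero => simp
  | add v w hv hw => rw [map_add, hv, hw, Finsupp.add_apply, map_add, Finsupp.single_add]
  | single I a =>
    rw [prod_one_sub_anticommutator_single, L.prod_proj_finRange]
    rcases I.eq_empty_or_nonempty with rfl | ⟨k, hk⟩
    · simp
    · rw [if_pos ⟨k, List.mem_finRange k, hk⟩, single_eq_of_ne (Finset.ne_empty_of_mem hk).symm]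
      simp

lemma contraction_mem_degreeGE {r : ℕ} {v : Finset (Fin n) →₀ MonoidAlgebra ℤ G}
    (hv : v ∈ degreeGE r) : L.contraction v ∈ degreeGE (r + 1) := by
  suffices h : ∀ l : List (Fin n), iteratedContraction (fun k => lower k (L.diff k))
      (fun k => raise k (L.telescope k)) l v ∈ degreeGE (r + 1) from h _
  intro l
  induction l with
  | nil => exact zero_mem _
  | cons k l ih =>
    rw [iteratedContraction, LinearMap.add_apply, Module.End.mul_apply]
    refine add_mem (raise_mem_degreeGE k _ hv) (map_mem_degreeGE (fun I hI a => ?_) ih)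
    rw [one_sub_anticommutator_single]
    split_ifs
    · exact zero_mem _
    · exact single_mem_degreeGE hI _

end LatticeCoordinates

end LatticeKoszul

section FreeResolution

open CategoryTheory Finsupp

lemma nonempty_homology_addEquiv {k : Type} [CommRing k] (S : ShortComplex (ModuleCat.{0} k))
    {A : Type} [AddCommGroup A] [Module k A] (φ : S.X₂ →ₗ[k] A)
    (hf : ∀ x, φ (S.f x) = 0) (hsurj : ∀ a, ∃ x, S.g x = 0 ∧ φ x = a)
    (hker : ∀ x, S.g x = 0 → φ x = 0 → ∃ y, S.f y = x) :
    Nonempty (S.homology ≃+ A) := by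
  let ψ : LinearMap.ker S.g.hom →ₗ[k] A := φ.domRestrict _
  have ψ_surjective : Function.Surjective ψ := fun a =>
    let ⟨x, hx, hxa⟩ := hsurj a
    ⟨⟨x, hx⟩, hxa⟩
  have range_eq_ker : LinearMap.range S.moduleCatToCycles = LinearMap.ker ψ := by
    apply le_antisymm
    · rintro _ ⟨y, rfl⟩
      exact hf y
    · rintro ⟨x, hx⟩ hψ
      obtain ⟨y, hy⟩ := hker x hx hψ
      exact ⟨y, Subtype.ext hy⟩
  exact ⟨(S.moduleCatHomologyIso.toLinearEquiv.trans <|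
    (Submodule.quotEquivOfEq _ _ range_eq_ker).trans <|
      ψ.quotKerEquivOfSurjective ψ_surjective).toAddEquiv⟩

variable (k G : Type) [CommRing k] [Group G]

/-- A resolution of the trivial representation `k` of `G` by the free modules on the types `ι n`. -/
structure FreeResolution where
  ι : ℕ → Type
  d (n : ℕ) : Rep.free k G (ι (n + 1)) ⟶ Rep.free k G (ι n)
  ε : Rep.free k G (ι 0) ⟶ Rep.trivial k G k
  d_d_apply (n : ℕ) (v) : (d n).hom ((d (n + 1)).hom v) = 0
  exists_d_eq (n : ℕ) (v) : (d n).hom v = 0 → ∃ w, (d (n + 1)).hom w = v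
  ε_d_apply (v) : ε.hom ((d 0).hom v) = 0
  exists_d_zero_eq (v) : ε.hom v = 0 → ∃ w, (d 0).hom w = v
  ε_surjective : Function.Surjective ε.hom

namespace FreeResolution

variable {k G} (R : FreeResolution k G)

/-- The chain complex of a free resolution. -/
noncomputable def complex : ChainComplex (Rep k G) ℕ :=
  ChainComplex.of (fun n => Rep.free k G (R.ι n)) R.d fun n => by
    ext1; ext1; exact LinearMap.ext (R.d_d_apply n)

lemma complex_d (n : ℕ) : R.complex.d (n + 1) n = R.d n :=
  ChainComplex.of_d (fun n => Rep.free k G (R.ι n)) R.d n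

/-- The map induced by `ε` from the complex to the trivial representation in degree `0`. -/
noncomputable def augmentation :
    R.complex ⟶ (ChainComplex.single₀ (Rep k G)).obj (Rep.trivial k G k) :=
  (R.complex.toSingle₀Equiv _).symm ⟨R.ε, by
    rw [complex_d]; ext1; ext1; exact LinearMap.ext R.ε_d_apply⟩

lemma complex_d_apply (n : ℕ) (v) : (R.complex.d (n + 1) n).hom v = (R.d n).hom v :=
  congrArg (fun f : Rep.free k G (R.ι (n + 1)) ⟶ Rep.free k G (R.ι n) => f.hom v) (R.complex_d n)

lemma quasiIso_augmentation : QuasiIso R.augmentation where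
  quasiIsoAt
    | 0 => by
      rw [ChainComplex.quasiIsoAt₀_iff, ShortComplex.quasiIso_iff_of_zeros' _ rfl rfl rfl]
      refine ⟨(forget₂ _ (ModuleCat k)).reflects_exact_of_faithful _ ?_,
        (Rep.epi_iff_surjective _).2 R.ε_surjective⟩
      rw [ShortComplex.moduleCat_exact_iff]
      intro x hx
      obtain ⟨w, hw⟩ := R.exists_d_zero_eq x hx
      exact ⟨w, (R.complex_d_apply 0 w).trans hw⟩
    | n + 1 => by
      rw [quasiIsoAt_iff_exactAt' (hL := ChainComplex.exactAt_succ_single_obj ..),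
        HomologicalComplex.exactAt_iff' _ (n + 2) (n + 1) n (by simp) (by simp)]
      apply (forget₂ _ (ModuleCat k)).reflects_exact_of_faithful
      rw [ShortComplex.moduleCat_exact_iff]
      intro x hx
      obtain ⟨w, hw⟩ := R.exists_d_eq n x ((R.complex_d_apply n x).symm.trans hx)
      exact ⟨w, (R.complex_d_apply (n + 1) w).trans hw⟩

/-- A free resolution as a projective resolution of the trivial representation. -/
noncomputable def projectiveResolution : ProjectiveResolution (Rep.trivial k G k) where
  complex := R.complex
  projective n := inferInstanceAs (Projective (Rep.free k G (R.ι n)))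
  π := R.augmentation
  quasiIso := R.quasiIso_augmentation

/-- The coboundary on `k`-valued functions on the generators, under
`Hom_G(free k G ι, k) = (ι → k)`. -/
noncomputable def coboundary (n : ℕ) (f : R.ι n → k) (i : R.ι (n + 1)) : k :=
  (Rep.freeLift (A := Rep.trivial k G k) k G f).hom ((R.d n).hom (single i (.single 1 1)))

lemma freeLiftLEquiv_comp_d (n : ℕ) (x : Rep.free k G (R.ι n) ⟶ Rep.trivial k G k) :
    Rep.freeLiftLEquiv k G _ _ (R.d n ≫ x) =
      R.coboundary n (Rep.freeLiftLEquiv k G _ _ x) := by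
  have hx := (Rep.freeLiftLEquiv k G _ _).symm_apply_apply x
  conv_lhs => rw [← hx]
  rfl

theorem nonempty_groupCohomology_addEquiv (n : ℕ) {A : Type} [AddCommGroup A] [Module k A]
    (φ : (R.ι (n + 1) → k) →ₗ[k] A) (hφ : ∀ f, φ (R.coboundary n f) = 0)
    (hsurj : ∀ a, ∃ f, R.coboundary (n + 1) f = 0 ∧ φ f = a)
    (hker : ∀ f, R.coboundary (n + 1) f = 0 → φ f = 0 → ∃ f', R.coboundary n f' = f) :
    Nonempty (groupCohomology (Rep.trivial k G k) (n + 1) ≃+ A) := by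
  let K := R.projectiveResolution.complex.linearYonedaObj k (Rep.trivial k G k)
  let L (m : ℕ) := Rep.freeLiftLEquiv k G (R.ι m) (Rep.trivial k G k)
  have hK (m : ℕ) (x : Rep.free k G (R.ι m) ⟶ Rep.trivial k G k) :
      L (m + 1) (K.d m (m + 1) x) = R.coboundary m (L m x) :=
    (congrArg (fun y => L (m + 1) (y ≫ x)) (R.complex_d m)).trans (R.freeLiftLEquiv_comp_d m x)
  obtain ⟨e⟩ : Nonempty ((K.sc' n (n + 1) (n + 2)).homology ≃+ A) := by
    refine nonempty_homology_addEquiv _ (φ ∘ₗ (L (n + 1)).toLinearMap)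
      (fun x => (congrArg φ (hK n x)).trans (hφ _)) (fun a => ?_) (fun x hx hφx => ?_)
    · obtain ⟨f, hf, rfl⟩ := hsurj a
      refine ⟨(L (n + 1)).symm f, (L (n + 2)).injective ((hK (n + 1) _).trans ?_), ?_⟩
      · rw [LinearEquiv.apply_symm_apply, hf]
        exact (map_zero (L (n + 2))).symm
      · exact congrArg φ ((L (n + 1)).apply_symm_apply f)
    · obtain ⟨f, hf⟩ := hker (L (n + 1) x)
        ((hK (n + 1) x).symm.trans ((congrArg _ hx).trans (map_zero (L (n + 2))))) hφx
      refine ⟨(L n).symm f, (L (n + 1)).injective ((hK n _).trans ?_)⟩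
      rw [LinearEquiv.apply_symm_apply, hf]
  exact ⟨(groupCohomologyIso (Rep.trivial k G k) (n + 1) R.projectiveResolution).toLinearEquiv
    |>.toAddEquiv.trans <| (K.homologyIsoSc' n (n + 1) (n + 2) (by simp) (by simp)).toLinearEquiv
    |>.toAddEquiv.trans e⟩

end FreeResolution

end FreeResolution

section TwistedDifferential

variable {R : Type*} [Ring R]

lemma twisted_mul_twisted {e f b C D : R} (hef : e + f = 1) (he : e * e = e) (hb : e * b = b * f)
    (hC : Commute C b) (hD : Commute D b) (heC : Commute e C) (heD : Commute e D)
    (hCD : C * D = -(b * b)) (hDC : D * C = -(b * b)) :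
    (b + C * e - D * f) * (b + D * e - C * f) = 0 := by
  obtain rfl : f = 1 - e := eq_sub_of_add_eq' hef
  have C_e_b : C * e * b = b * C * (1 - e) := by rw [mul_assoc, hb, ← mul_assoc, hC.eq]
  have D_f_b : D * (1 - e) * b = b * D * e := by
    rw [mul_assoc, sub_mul, hb, ← hD.eq]; noncomm_ring
  have e_D_e : e * D * e = D * e := by rw [heD.eq, mul_assoc, he]
  have e_C_e : e * C * e = C * e := by rw [heC.eq, mul_assoc, he]
  calc (b + C * e - D * (1 - e)) * (b + D * e - C * (1 - e))
      = b * b + b * D * e - b * C * (1 - e) + C * e * b - D * (1 - e) * b + C * (e * D * e)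
          - C * (e * C - e * C * e) - D * (D * e - e * D * e)
          + D * (C - e * C - (C * e - e * C * e)) := by noncomm_ring
    _ = b * b + C * D * e + D * C * (1 - e) := by
      rw [C_e_b, D_f_b, e_D_e, e_C_e, heC.eq]; noncomm_ring
    _ = 0 := by rw [hCD, hDC]; noncomm_ring

/-- The differential into degree `m - 1` of the `2`-periodic resolution of a cyclic group of order
`q` generated by `s`: the norm element alternates with `s - 1`. -/
def cyclicDifferential (s : R) (q m : ℕ) : R :=
  if Even m then ∑ i ∈ Finset.range q, s ^ i else s - 1

lemma cyclicDifferential_add_two (s : R) (q m : ℕ) :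
    cyclicDifferential s q (m + 2) = cyclicDifferential s q m := by
  simp [cyclicDifferential, Nat.even_add]

lemma cyclicDifferential_mul_add_one (s : R) (q m : ℕ) :
    cyclicDifferential s q m * cyclicDifferential s q (m + 1) = s ^ q - 1 := by
  unfold cyclicDifferential
  rcases Nat.even_or_odd m with hm | hm
  · rw [if_pos hm, if_neg (Nat.not_even_iff_odd.2 hm.add_one), geom_sum_mul]
  · rw [if_neg (Nat.not_even_iff_odd.2 hm), if_pos hm.add_one, mul_geom_sum]

lemma commute_cyclicDifferential {s b : R} (hsb : Commute s b) (q m : ℕ) :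
    Commute (cyclicDifferential s q m) b := by
  unfold cyclicDifferential
  split_ifs
  · exact Commute.sum_left _ _ _ fun i _ => hsb.pow_left i
  · exact hsb.sub_left (Commute.one_left b)

/-- The differential built from an operator `s` whose `q`-th power is only homotopic to the
identity, namely `s ^ q = 1 - b * b`: the `2`-periodic resolution of a cyclic group is perturbed
by `b`, which is odd for the grading whose even part is cut out by the idempotent `e`. -/
def twistedDifferential (e s b : R) (q m : ℕ) : R :=
  b + cyclicDifferential s q m * e - cyclicDifferential s q (m + 1) * (1 - e)

theorem twistedDifferential_mul_add_one {e s b : R} {q : ℕ} (he : e * e = e) (hs : Commute e s)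
    (hb : e * b = b * (1 - e)) (hsb : Commute s b) (hq : s ^ q = 1 - b * b) (m : ℕ) :
    twistedDifferential e s b q m * twistedDifferential e s b q (m + 1) = 0 := by
  rw [twistedDifferential, twistedDifferential, cyclicDifferential_add_two]
  apply twisted_mul_twisted (add_sub_cancel _ _) he hb (commute_cyclicDifferential hsb _ _)
    (commute_cyclicDifferential hsb _ _) (commute_cyclicDifferential hs.symm _ _).symm
    (commute_cyclicDifferential hs.symm _ _).symm
  · rw [cyclicDifferential_mul_add_one, hq, sub_sub_cancel_left]
  · rw [← cyclicDifferential_add_two s q m, cyclicDifferential_mul_add_one, hq,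
      sub_sub_cancel_left]

end TwistedDifferential

section CyclicGroupRing

open Representation Rep.FiniteCyclicGroup

lemma leftRegular_apply {Q : Type*} [Group Q] (y : Q) (a : MonoidAlgebra ℤ Q) :
    leftRegular ℤ Q y a = .single y 1 * a := by
  refine LinearMap.congr_fun (g := LinearMap.mulLeft ℤ (.single y 1)) ?_ a
  exact groupRing_hom_ext fun γ => by simp

lemma sum_single_mul {Q : Type*} [Group Q] (y : Q) (a : MonoidAlgebra ℤ Q) :
    groupRingLift (fun _ => (1 : ℤ)) (.single y 1 * a) = groupRingLift (fun _ => (1 : ℤ)) a := by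
  rw [← LinearMap.mulLeft_apply (R := ℤ), ← LinearMap.comp_apply]
  congr 1
  exact groupRing_hom_ext fun γ => by simp

variable {Q : Type} [CommGroup Q] [Finite Q] {g : Q}

omit [Finite Q] in
lemma norm_leftRegular_apply [Fintype Q] (hg : ∀ y, y ∈ Subgroup.zpowers g)
    (a : MonoidAlgebra ℤ Q) :
    (leftRegular ℤ Q).norm a =
      (∑ i ∈ Finset.range (Nat.card Q), MonoidAlgebra.single g (1 : ℤ) ^ i) * a := by
  classical
  have h := IsCyclic.image_range_card hg
  rw [Representation.norm, LinearMap.sum_apply, ← h, Finset.sum_image, Finset.sum_mul]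
  · exact Finset.sum_congr rfl fun i _ => by
      simp only [leftRegular_apply, MonoidAlgebra.single_pow, one_pow]
  · rw [← Finset.card_image_iff, h]
    simp

lemma exists_sub_one_mul_eq_of_sum_eq_zero (hg : ∀ y, y ∈ Subgroup.zpowers g)
    {a : MonoidAlgebra ℤ Q} (ha : groupRingLift (fun _ => (1 : ℤ)) a = 0) :
    ∃ b, (MonoidAlgebra.single g (1 : ℤ) - 1) * b = a := by
  have := Fintype.ofFinite Q
  obtain ⟨b, hb⟩ := (leftRegular.range_applyAsHom_sub_eq_ker_linearCombination ℤ g hg).ge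
    (show a ∈ LinearMap.ker _ from ha)
  refine ⟨b, Eq.trans ?_ hb⟩
  rw [sub_mul, one_mul, ← leftRegular_apply]
  rfl

theorem exists_cyclicDifferential_mul_eq (hg : ∀ y, y ∈ Subgroup.zpowers g) {m : ℕ}
    {a : MonoidAlgebra ℤ Q}
    (ha : cyclicDifferential (MonoidAlgebra.single g (1 : ℤ)) (Nat.card Q) m * a = 0) :
    ∃ b, cyclicDifferential (MonoidAlgebra.single g (1 : ℤ)) (Nat.card Q) (m + 1) * b = a := by
  have := Fintype.ofFinite Q
  unfold cyclicDifferential at *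
  rcases Nat.even_or_odd m with hm | hm
  · rw [if_pos hm, ← norm_leftRegular_apply hg] at ha
    obtain ⟨b, hb⟩ := (leftRegular.range_applyAsHom_sub_eq_ker_norm ℤ g hg).ge
      (show a ∈ LinearMap.ker _ from ha)
    refine ⟨b, Eq.trans ?_ hb⟩
    rw [if_neg (Nat.not_even_iff_odd.2 hm.add_one), sub_mul, one_mul, ← leftRegular_apply]
    rfl
  · rw [if_neg (Nat.not_even_iff_odd.2 hm), sub_mul, one_mul, ← leftRegular_apply] at ha
    obtain ⟨b, hb⟩ := (leftRegular.range_norm_eq_ker_applyAsHom_sub ℤ g hg).ge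
      (show a ∈ LinearMap.ker _ from ha)
    refine ⟨b, Eq.trans ?_ hb⟩
    rw [if_pos hm.add_one, ← norm_leftRegular_apply hg]
    rfl

end CyclicGroupRing

section FreeHom

open Finsupp

variable {k G : Type} [CommRing k] [Group G] {α β : Type}

lemma free_apply (γ : G) (v : α →₀ MonoidAlgebra k G) :
    Representation.free k G α γ v = MonoidAlgebra.single γ (1 : k) • v := by
  induction v using Finsupp.induction_linear with
  | zero => simp
  | add v w hv hw => rw [map_add, smul_add, hv, hw]
  | single i a =>
    rw [Finsupp.smul_single, smul_eq_mul]
    induction a using MonoidAlgebra.induction_linear with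
    | zero => simp
    | add a b ha hb => rw [Finsupp.single_add, map_add, ha, hb, mul_add, Finsupp.single_add]
    | single h r => simp

/-- A `k[G]`-linear map between free modules as a morphism of representations. -/
noncomputable def freeHom
    (T : (α →₀ MonoidAlgebra k G) →ₗ[MonoidAlgebra k G] β →₀ MonoidAlgebra k G) :
    Rep.free k G α ⟶ Rep.free k G β :=
  Rep.ofHom <|
    LinearMap.intertwiningMap_of_isIntertwiningMap _ _ (T.restrictScalars k) fun γ v => by
      rw [free_apply, free_apply]
      exact T.map_smul _ v

end FreeHom

section TwistedKoszul

open Finsupp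

/-- An extension of `Q` by the lattice `ℤⁿ`, coordinatised by a set-theoretic section `σ` of the
projection `π`. -/
structure LatticeExtension (G Q : Type*) [Group G] [Group Q] (n : ℕ) extends
    LatticeCoordinates G n where
  π : G →* Q
  σ : Q → G
  π_x (v) : π (x v) = 1
  π_σ (q) : π (σ q) = q
  mul_x_neg_u (γ) : γ * x (-u γ) = σ (π γ)

namespace LatticeExtension

variable {G Q : Type*} [Group G] [Group Q] {n : ℕ} (L : LatticeExtension G Q n)

/-- The map from the Koszul complex of the lattice to its degree zero homology `ℤ[Q]`. -/
noncomputable def bottom : (Finset (Fin n) →₀ MonoidAlgebra ℤ G) →ₗ[ℤ] MonoidAlgebra ℤ Q :=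
  groupRingLift (fun γ => .single (L.π γ) 1) ∘ₗ lapply ∅

lemma bottom_single_empty (γ : G) :
    L.bottom (single ∅ (.single γ 1)) = .single (L.π γ) 1 := by
  simp [bottom]

lemma bottom_eq_zero {v : Finset (Fin n) →₀ MonoidAlgebra ℤ G} (hv : v ∈ degreeGE 1) :
    L.bottom v = 0 := by
  have : v ∅ = 0 := by
    by_contra h
    exact absurd (hv (mem_support_iff.2 h)) (by simp)
  simp [bottom, this]

lemma bottom_koszul (v : Finset (Fin n) →₀ MonoidAlgebra ℤ G) : L.bottom (L.koszul v) = 0 := by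
  induction v using Finsupp.induction_linear with
  | zero => simp
  | add v w hv hw => rw [map_add, map_add, hv, hw, add_zero]
  | single I a =>
    refine LinearMap.congr_fun (f := L.bottom ∘ₗ L.koszul ∘ₗ lsingle I) (g := 0)
      (groupRing_hom_ext fun γ => ?_) a
    simp only [LinearMap.comp_apply, lsingle_apply, L.koszul_single, map_sum, LinearMap.zero_apply]
    refine Finset.sum_eq_zero fun k _ => ?_
    by_cases hI : I.erase k = ∅
    · simp [hI, bottom, LatticeCoordinates.diff, L.π_x]
    · simp [bottom, single_eq_of_ne (Ne.symm hI)]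

lemma exists_bottom_eq (y : MonoidAlgebra ℤ Q) : ∃ v, L.bottom v = y := by
  refine ⟨single ∅ (groupRingLift (fun q => .single (L.σ q) 1) y), ?_⟩
  refine LinearMap.congr_fun (f := L.bottom ∘ₗ lsingle ∅ ∘ₗ
    groupRingLift fun q => .single (L.σ q) 1) (g := LinearMap.id) (groupRing_hom_ext fun q => ?_) y
  simp [L.bottom_single_empty, L.π_σ]

lemma koszul_contraction_add_of_bottom_eq_zero {v : Finset (Fin n) →₀ MonoidAlgebra ℤ G}
    (hv : L.bottom v = 0) : L.koszul (L.contraction v) + L.contraction (L.koszul v) = v := by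
  have retract_eq : L.retract = groupRingLift (fun q => .single (L.σ q) 1) ∘ₗ
      groupRingLift (fun γ => .single (L.π γ) (1 : ℤ)) :=
    groupRing_hom_ext fun γ => by simp [LatticeCoordinates.retract, L.mul_x_neg_u]
  have retract_v : L.retract (v ∅) = 0 := by
    rw [retract_eq, LinearMap.comp_apply]
    erw [hv, map_zero]
  rw [L.koszul_contraction_add, retract_v, Finsupp.single_zero, sub_zero]

end LatticeExtension

/-- The projection of an exterior algebra onto the span of the monomials whose degree satisfies
`p`. -/
noncomputable def degreeProj (A ι : Type*) [Ring A] (p : ℕ → Prop) [DecidablePred p] :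
    Module.End A (Finset ι →₀ A) :=
  Finsupp.lsum ℕ fun I => if p I.card then lsingle I else 0

lemma degreeProj_single {A ι : Type*} [Ring A] (p : ℕ → Prop) [DecidablePred p] (I : Finset ι)
    (a : A) : degreeProj A ι p (single I a) = if p I.card then single I a else 0 := by
  unfold degreeProj
  split_ifs with h <;> simp [h]

lemma degreeProj_mul_self (A ι : Type*) [Ring A] (p : ℕ → Prop) [DecidablePred p] :
    degreeProj A ι p * degreeProj A ι p = degreeProj A ι p := by
  ext I : 2
  rw [LinearMap.comp_apply, lsingle_apply, Module.End.mul_apply, degreeProj_single]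
  split_ifs with h <;> simp [degreeProj_single, h]

/-- The projection of an exterior algebra onto its even part. -/
noncomputable abbrev evenProj (A ι : Type*) [Ring A] : Module.End A (Finset ι →₀ A) :=
  degreeProj A ι Even

/-- A perturbation `b` of the Koszul differential of the lattice which commutes with a lift `s` of
the action of the generator `g` of the cyclic quotient, up to the failure of `s` to have finite
order. -/
structure TwistedKoszul (G Q : Type) [Group G] [CommGroup Q] (n : ℕ) extends
    LatticeExtension G Q n where
  g : Q
  mem_zpowers (q) : q ∈ Subgroup.zpowers g
  s : Module.End (MonoidAlgebra ℤ G) (Finset (Fin n) →₀ MonoidAlgebra ℤ G)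
  b : Module.End (MonoidAlgebra ℤ G) (Finset (Fin n) →₀ MonoidAlgebra ℤ G)
  b_sub_koszul_mem {r v} : v ∈ degreeGE r → b v - toLatticeExtension.koszul v ∈ degreeGE (r + 1)
  s_mem {r v} : v ∈ degreeGE r → s v ∈ degreeGE r
  bottom_s (v) : toLatticeExtension.bottom (s v) = .single g 1 * toLatticeExtension.bottom v
  commute_evenProj : Commute (evenProj _ _) s
  evenProj_mul_b : evenProj _ _ * b = b * (1 - evenProj _ _)
  commute_s_b : Commute s b
  s_pow_card : s ^ Nat.card Q = 1 - b * b

namespace TwistedKoszul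

variable {G Q : Type} [Group G] [CommGroup Q] {n : ℕ} (K : TwistedKoszul G Q n)

/-- The differential from degree `m` to degree `m - 1`, before the truncation by exterior degree. -/
noncomputable def X (m : ℕ) :
    Module.End (MonoidAlgebra ℤ G) (Finset (Fin n) →₀ MonoidAlgebra ℤ G) :=
  twistedDifferential (evenProj _ _) K.s K.b (Nat.card Q) m

lemma X_X_apply (m : ℕ) (v) : K.X m (K.X (m + 1) v) = 0 :=
  LinearMap.congr_fun (f := K.X m * K.X (m + 1)) (g := 0)
    (twistedDifferential_mul_add_one (degreeProj_mul_self _ _ _) K.commute_evenProj K.evenProj_mul_b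
      K.commute_s_b K.s_pow_card m) v

lemma evenProj_mem {A ι : Type*} [Ring A] {r : ℕ} {v : Finset ι →₀ A} (hv : v ∈ degreeGE r) :
    evenProj A ι v ∈ degreeGE r :=
  map_mem_degreeGE (T := (evenProj A ι).restrictScalars ℤ) (fun I hI a => by
    change evenProj A ι _ ∈ _
    rw [degreeProj_single]
    split_ifs
    exacts [single_mem_degreeGE hI a, zero_mem _]) hv

lemma cyclicDifferential_s_mem (m : ℕ) {r : ℕ} {v : Finset (Fin n) →₀ MonoidAlgebra ℤ G}
    (hv : v ∈ degreeGE r) : cyclicDifferential K.s (Nat.card Q) m v ∈ degreeGE r := by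
  have pow_mem (i : ℕ) : (K.s ^ i) v ∈ degreeGE r := by
    induction i with
    | zero => exact hv
    | succ i ih => rw [pow_succ']; exact K.s_mem ih
  unfold cyclicDifferential
  split_ifs
  · rw [LinearMap.sum_apply]
    exact sum_mem fun i _ => pow_mem i
  · exact sub_mem (K.s_mem hv) hv

lemma X_apply (m : ℕ) (v : Finset (Fin n) →₀ MonoidAlgebra ℤ G) :
    K.X m v = K.b v + cyclicDifferential K.s (Nat.card Q) m (evenProj _ _ v) -
      cyclicDifferential K.s (Nat.card Q) (m + 1) (v - evenProj _ _ v) :=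
  rfl

lemma X_sub_koszul_mem {m r : ℕ} {v : Finset (Fin n) →₀ MonoidAlgebra ℤ G}
    (hv : v ∈ degreeGE r) : K.X m v - K.koszul v ∈ degreeGE r := by
  rw [X_apply, sub_right_comm, add_sub_right_comm]
  exact sub_mem (add_mem (degreeGE_antitone r.le_succ (K.b_sub_koszul_mem hv))
    (K.cyclicDifferential_s_mem m (evenProj_mem hv)))
    (K.cyclicDifferential_s_mem _ (sub_mem hv (evenProj_mem hv)))

lemma X_mem {m r : ℕ} {v : Finset (Fin n) →₀ MonoidAlgebra ℤ G}
    (hv : v ∈ degreeGE (r + 1)) : K.X m v ∈ degreeGE r := by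
  rw [← sub_add_cancel (K.X m v) (K.koszul v)]
  exact add_mem (K.X_sub_koszul_mem (degreeGE_antitone r.le_succ hv)) (K.koszul_mem_degreeGE hv)

lemma bottom_evenProj (v : Finset (Fin n) →₀ MonoidAlgebra ℤ G) :
    K.bottom (evenProj _ _ v) = K.bottom v := by
  induction v using Finsupp.induction_linear with
  | zero => simp
  | add v w hv hw => rw [map_add, map_add, map_add, hv, hw]
  | single I a =>
    rw [degreeProj_single]
    split_ifs with hI
    · rfl
    · rw [map_zero, K.bottom_eq_zero (single_mem_degreeGE (Nat.one_le_iff_ne_zero.2 _) a)]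
      exact fun h => hI (h ▸ Even.zero)

lemma bottom_b (v : Finset (Fin n) →₀ MonoidAlgebra ℤ G) : K.bottom (K.b v) = 0 := by
  rw [← sub_add_cancel (K.b v) (K.koszul v), map_add, K.bottom_koszul, add_zero]
  exact K.bottom_eq_zero (K.b_sub_koszul_mem (r := 0) fun I _ => Nat.zero_le _)

lemma bottom_cyclicDifferential (m : ℕ) (v : Finset (Fin n) →₀ MonoidAlgebra ℤ G) :
    K.bottom (cyclicDifferential K.s (Nat.card Q) m v) =
      cyclicDifferential (.single K.g 1) (Nat.card Q) m * K.bottom v := by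
  have bottom_pow (i : ℕ) : K.bottom ((K.s ^ i) v) = .single K.g 1 ^ i * K.bottom v := by
    induction i with
    | zero => simp
    | succ i ih => rw [pow_succ', Module.End.mul_apply, K.bottom_s, ih, ← mul_assoc, pow_succ']
  unfold cyclicDifferential
  split_ifs
  · rw [LinearMap.sum_apply, map_sum, Finset.sum_mul]
    exact Finset.sum_congr rfl fun i _ => bottom_pow i
  · rw [LinearMap.sub_apply, map_sub, K.bottom_s, Module.End.one_apply, sub_mul, one_mul]

lemma bottom_X (m : ℕ) (v : Finset (Fin n) →₀ MonoidAlgebra ℤ G) :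
    K.bottom (K.X m v) = cyclicDifferential (.single K.g 1) (Nat.card Q) m * K.bottom v := by
  rw [X_apply, map_sub, map_add, K.bottom_b, K.bottom_cyclicDifferential,
    K.bottom_cyclicDifferential, map_sub, K.bottom_evenProj, sub_self, mul_zero, sub_zero, zero_add]

/-- Contracting the Koszul differential pushes the defect `c - X w` one degree up at a time. -/
lemma exists_sub_X_mem_degreeGE_of_bottom_eq_zero {m : ℕ}
    {c : Finset (Fin n) →₀ MonoidAlgebra ℤ G} (hXc : K.X m c ∈ degreeGE m)
    (hc : K.bottom c = 0) {r : ℕ} (hr : r ≤ m + 1) :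
    ∃ w, c - K.X (m + 1) w ∈ degreeGE r ∧ K.bottom (c - K.X (m + 1) w) = 0 := by
  induction r with
  | zero => exact ⟨0, fun I _ => Nat.zero_le _, by simpa using hc⟩
  | succ r ih =>
    obtain ⟨w, hw, hw0⟩ := ih (by lia)
    set c' := c - K.X (m + 1) w with hc'
    have X_c' : K.X m c' = K.X m c := by rw [hc', map_sub, K.X_X_apply, sub_zero]
    have koszul_c' : K.koszul c' ∈ degreeGE r := by
      rw [← sub_sub_cancel (K.X m c') (K.koszul c'), X_c']
      exact sub_mem (degreeGE_antitone (by lia) hXc) (X_c' ▸ K.X_sub_koszul_mem hw)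
    have key : c' - K.X (m + 1) (K.contraction c') = K.contraction (K.koszul c') -
        (K.X (m + 1) (K.contraction c') - K.koszul (K.contraction c')) := by
      nth_rw 1 [← K.koszul_contraction_add_of_bottom_eq_zero hw0]
      abel
    have c'_mem : c' - K.X (m + 1) (K.contraction c') ∈ degreeGE (r + 1) := by
      rw [key]
      exact sub_mem (K.contraction_mem_degreeGE koszul_c')
        (K.X_sub_koszul_mem (K.contraction_mem_degreeGE hw))
    have c_eq : c - K.X (m + 1) (w + K.contraction c') =
        c' - K.X (m + 1) (K.contraction c') := by
      rw [map_add, ← sub_sub]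
    refine ⟨w + K.contraction c', ?_, ?_⟩ <;> rw [c_eq]
    · exact c'_mem
    · exact K.bottom_eq_zero (degreeGE_antitone (by lia) c'_mem)

theorem exists_sub_X_mem_degreeGE {m : ℕ} {c : Finset (Fin n) →₀ MonoidAlgebra ℤ G}
    (hXc : K.X m c ∈ degreeGE m)
    (hc : ∃ y, cyclicDifferential (.single K.g 1) (Nat.card Q) (m + 1) * y = K.bottom c) :
    ∃ w, c - K.X (m + 1) w ∈ degreeGE (m + 1) := by
  obtain ⟨y, hy⟩ := hc
  obtain ⟨w₀, rfl⟩ := K.exists_bottom_eq y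
  obtain ⟨w, hw, -⟩ := K.exists_sub_X_mem_degreeGE_of_bottom_eq_zero (m := m)
    (c := c - K.X (m + 1) w₀) (by rwa [map_sub, K.X_X_apply, sub_zero])
    (by rw [map_sub, K.bottom_X, hy, sub_self]) le_rfl
  exact ⟨w₀ + w, by rwa [map_add, ← sub_sub]⟩

/-- The generators of exterior degree at most `m`: they freely generate degree `m` of the
resolution. -/
abbrev Generators (n m : ℕ) : Type := {I : Finset (Fin n) // I.card ≤ m}

/-- The quotient map killing the exterior monomials of degree greater than `m`. -/
noncomputable def truncate (G : Type) [Group G] (n m : ℕ) :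
    (Finset (Fin n) →₀ MonoidAlgebra ℤ G) →ₗ[MonoidAlgebra ℤ G]
      Generators n m →₀ MonoidAlgebra ℤ G :=
  lsubtypeDomain {I : Finset (Fin n) | I.card ≤ m}

/-- The section of `truncate G n m` spanned by the exterior monomials of degree at most `m`. -/
noncomputable def extend (G : Type) [Group G] (n m : ℕ) :
    (Generators n m →₀ MonoidAlgebra ℤ G) →ₗ[MonoidAlgebra ℤ G]
      Finset (Fin n) →₀ MonoidAlgebra ℤ G :=
  lmapDomain _ _ Subtype.val

lemma truncate_extend {m : ℕ} (v : Generators n m →₀ MonoidAlgebra ℤ G) :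
    truncate G n m (extend G n m v) = v := by
  ext I : 1
  exact mapDomain_apply Subtype.val_injective v I

lemma truncate_single {m : ℕ} {I : Finset (Fin n)} (hI : I.card ≤ m) (a : MonoidAlgebra ℤ G) :
    truncate G n m (single I a) = single ⟨I, hI⟩ a := by
  rw [← truncate_extend (single ⟨I, hI⟩ a)]
  rw [extend, lmapDomain_apply, mapDomain_single]

lemma truncate_eq_zero {m : ℕ} {v : Finset (Fin n) →₀ MonoidAlgebra ℤ G} :
    truncate G n m v = 0 ↔ v ∈ degreeGE (m + 1) := by
  refine ⟨fun h I hI => ?_, fun h => ?_⟩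
  · by_contra hIm
    exact mem_support_iff.1 hI (DFunLike.congr_fun h ⟨I, by simpa using hIm⟩)
  · ext1 ⟨I, hI⟩
    by_contra hvI
    exact absurd (h (mem_support_iff.2 hvI)) (by simpa using hI)

/-- The differential induced on the quotients of the exterior algebra. -/
noncomputable def d (m : ℕ) : (Generators n (m + 1) →₀ MonoidAlgebra ℤ G) →ₗ[MonoidAlgebra ℤ G]
    Generators n m →₀ MonoidAlgebra ℤ G :=
  truncate G n m ∘ₗ K.X (m + 1) ∘ₗ extend G n (m + 1)

lemma d_truncate (m : ℕ) (v : Finset (Fin n) →₀ MonoidAlgebra ℤ G) :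
    K.d m (truncate G n (m + 1) v) = truncate G n m (K.X (m + 1) v) := by
  rw [d, LinearMap.comp_apply, LinearMap.comp_apply, ← sub_eq_zero, ← map_sub, ← map_sub,
    truncate_eq_zero]
  refine K.X_mem (truncate_eq_zero.1 ?_)
  rw [map_sub, truncate_extend, sub_self]

lemma d_d_apply (m : ℕ) (v) : K.d m (K.d (m + 1) v) = 0 := by
  rw [← truncate_extend v, d_truncate, d_truncate, K.X_X_apply, map_zero]

lemma exists_d_eq [Finite Q] (m : ℕ) (v) (hv : K.d m v = 0) : ∃ w, K.d (m + 1) w = v := by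
  rw [← truncate_extend v] at hv ⊢
  set c := extend G n (m + 1) v
  rw [d_truncate, truncate_eq_zero] at hv
  obtain ⟨w, hw⟩ := K.exists_sub_X_mem_degreeGE hv <|
    exists_cyclicDifferential_mul_eq K.mem_zpowers <| by
      rw [← K.bottom_X]
      exact K.bottom_eq_zero (degreeGE_antitone (by lia) hv)
  refine ⟨truncate G n (m + 2) w, ?_⟩
  rw [d_truncate, eq_comm, ← sub_eq_zero, ← map_sub]
  exact truncate_eq_zero.2 hw

lemma freeLift_one_truncate (v : Finset (Fin n) →₀ MonoidAlgebra ℤ G) :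
    (Rep.freeLift (A := Rep.trivial ℤ G ℤ) ℤ G fun _ : Generators n 0 => 1).hom
      (truncate G n 0 v) = groupRingLift (fun _ => (1 : ℤ)) (K.bottom v) := by
  induction v using Finsupp.induction_linear with
  | zero => simp
  | add v w hv hw => rw [map_add, map_add, map_add, map_add, hv, hw]
  | single I a =>
    by_cases hI : I = ∅
    · subst hI
      refine LinearMap.congr_fun
        (f := (Rep.freeLift (A := Rep.trivial ℤ G ℤ) ℤ G
            fun _ : Generators n 0 => 1).hom.toLinearMap ∘ₗ
          (truncate G n 0).restrictScalars ℤ ∘ₗ lsingle ∅)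
        (g := groupRingLift (fun _ => (1 : ℤ)) ∘ₗ K.bottom ∘ₗ lsingle ∅)
        (groupRing_hom_ext fun γ => ?_) a
      simp [K.bottom_single_empty, truncate_single (Finset.card_empty.le : _ ≤ 0)]
    · have mem := single_mem_degreeGE (Finset.one_le_card.2 (Finset.nonempty_iff_ne_empty.2 hI)) a
      rw [truncate_eq_zero.2 mem, K.bottom_eq_zero mem, map_zero, map_zero]

lemma exists_d_zero_eq [Finite Q] (v)
    (hv : (Rep.freeLift (A := Rep.trivial ℤ G ℤ) ℤ G fun _ : Generators n 0 => 1).hom v = 0) :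
    ∃ w, K.d 0 w = v := by
  rw [← truncate_extend v] at hv ⊢
  set c := extend G n 0 v
  rw [K.freeLift_one_truncate] at hv
  obtain ⟨y, hy⟩ := exists_sub_one_mul_eq_of_sum_eq_zero K.mem_zpowers hv
  obtain ⟨w, hw⟩ := K.exists_sub_X_mem_degreeGE (m := 0) (c := c) (fun I _ => Nat.zero_le _)
    ⟨y, by simpa [cyclicDifferential] using hy⟩
  refine ⟨truncate G n 1 w, ?_⟩
  rw [d_truncate, eq_comm, ← sub_eq_zero, ← map_sub]
  exact truncate_eq_zero.2 hw

/-- The resolution of `ℤ` over `ℤ[G]` obtained by truncating the twisted Koszul operators. -/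
noncomputable def resolution [Finite Q] : FreeResolution ℤ G where
  ι := Generators n
  d m := freeHom (K.d m)
  ε := Rep.freeLift (A := Rep.trivial ℤ G ℤ) ℤ G fun _ => 1
  d_d_apply := K.d_d_apply
  exists_d_eq := K.exists_d_eq
  ε_d_apply v := by
    rw [← truncate_extend v]
    change (Rep.freeLift (A := Rep.trivial ℤ G ℤ) ℤ G fun _ : Generators n 0 => 1).hom (K.d 0 _) = 0
    rw [d_truncate, K.freeLift_one_truncate, K.bottom_X]
    simp [cyclicDifferential, sub_mul, sum_single_mul]
  exists_d_zero_eq := K.exists_d_zero_eq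
  ε_surjective c := ⟨single ⟨∅, by simp⟩ (.single 1 c), by simp⟩

end TwistedKoszul

end TwistedKoszul

section Sparse

/-- A formal `ℤ`-linear combination of natural numbers, as a list of pairs (key, coefficient)
ordered by key, on which the kernel can compute. -/
abbrev Sparse := List (ℕ × ℤ)

/-- A matrix with natural number row indices and sparse rows. -/
abbrev Table := List Sparse

/-- Equal to `f n`. The kernel evaluates by name, but a recursion on `n` first reduces `n` to a
literal; this and the next three definitions use that to share intermediate results. -/
def forceNat {β : Type} (n : ℕ) (f : ℕ → β) : β :=
  Nat.rec (f 0) (fun k _ => f k.succ) n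

/-- Equal to `f n`, with `n` evaluated first. -/
def forceInt {β : Type} (n : ℤ) (f : ℤ → β) : β :=
  match n with
  | .ofNat n => forceNat n fun n => f (.ofNat n)
  | .negSucc n => forceNat n fun n => f (.negSucc n)

/-- Equal to `f v`, with `v` evaluated first. -/
def forceSparse {β : Type} (v : Sparse) : (Sparse → β) → β :=
  List.rec (fun f => f [])
    (fun t _ ih f => forceNat t.1 fun n => forceInt t.2 fun c => ih fun v => f ((n, c) :: v)) v

/-- Equal to `f T`, with `T` evaluated first. -/
def forceTable {β : Type} (T : Table) : (Table → β) → β :=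
  List.rec (fun f => f []) (fun v _ ih f => forceSparse v fun v => ih fun T => f (v :: T)) T

lemma forceNat_eq {β : Type} (n : ℕ) (f : ℕ → β) : forceNat n f = f n := by
  cases n <;> rfl

lemma forceInt_eq {β : Type} (n : ℤ) (f : ℤ → β) : forceInt n f = f n := by
  cases n <;> exact forceNat_eq _ fun n => f _

lemma forceSparse_eq {β : Type} (v : Sparse) (f : Sparse → β) : forceSparse v f = f v := by
  induction v generalizing f with
  | nil => rfl
  | cons t v ih =>
    change forceNat t.1 (fun n => forceInt t.2 fun c => forceSparse v fun v => f ((n, c) :: v)) = _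
    rw [forceNat_eq, forceInt_eq, ih]

lemma forceTable_eq {β : Type} (T : Table) (f : Table → β) : forceTable T f = f T := by
  induction T generalizing f with
  | nil => rfl
  | cons v T ih =>
    change forceSparse v (fun v => forceTable T fun T => f (v :: T)) = _
    rw [forceSparse_eq, ih]

namespace Sparse

variable {M : Type*} [AddCommGroup M]

/-- The linear combination of the `e n` with the coefficients of `v`. -/
def eval (e : ℕ → M) (v : Sparse) : M := (v.map fun t => t.2 • e t.1).sum

lemma eval_nil (e : ℕ → M) : eval e [] = 0 := rfl

lemma eval_cons (e : ℕ → M) (t : ℕ × ℤ) (v : Sparse) :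
    eval e (t :: v) = t.2 • e t.1 + eval e v := by
  simp [eval]

lemma eval_append (e : ℕ → M) (v w : Sparse) : eval e (v ++ w) = eval e v + eval e w := by
  simp [eval]

/-- Merges `x :: v` into its second argument, given that `r` merges `v`. -/
def mergeCons (x : ℕ × ℤ) (v : Sparse) (r : Sparse → Sparse) (w : Sparse) : Sparse :=
  List.rec (x :: v) (fun y w ih =>
    bif x.1.blt y.1 then x :: r (y :: w)
    else bif y.1.blt x.1 then y :: ih
    else forceInt (x.2 + y.2) fun c => if c = 0 then r w else (x.1, c) :: r w) w

/-- Addition of sparse vectors. -/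
def merge (v : Sparse) : Sparse → Sparse :=
  List.rec id (fun x v ih => mergeCons x v ih) v

lemma eval_mergeCons (e : ℕ → M) {x : ℕ × ℤ} {v : Sparse} {r : Sparse → Sparse}
    (hr : ∀ w, eval e (r w) = eval e v + eval e w) (w : Sparse) :
    eval e (mergeCons x v r w) = eval e (x :: v) + eval e w := by
  induction w with
  | nil => exact (add_zero _).symm
  | cons y w ih =>
    change eval e (bif x.1.blt y.1 then x :: r (y :: w)
      else bif y.1.blt x.1 then y :: mergeCons x v r w
      else forceInt (x.2 + y.2) fun c => if c = 0 then r w else (x.1, c) :: r w) = _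
    simp only [Bool.cond_eq_ite, Nat.blt_eq, forceInt_eq]
    split_ifs with hxy hyx hc
    · simp only [eval_cons, hr, add_assoc]
    · rw [eval_cons, ih, eval_cons e y, add_left_comm]
    all_goals
      have key_eq : y.1 = x.1 := by lia
      have cancel : eval e (x :: v) + eval e (y :: w) =
          (x.2 + y.2) • e x.1 + (eval e v + eval e w) := by
        rw [eval_cons, eval_cons, key_eq, add_smul, add_add_add_comm]
      rw [cancel]
    · rw [hc, hr, zero_smul, zero_add]
    · rw [eval_cons, hr]

lemma eval_merge (e : ℕ → M) (v w : Sparse) : eval e (merge v w) = eval e v + eval e w := by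
  induction v generalizing w with
  | nil => exact (zero_add _).symm
  | cons x v ih => exact eval_mergeCons e ih w

/-- Merges the consecutive pairs of a list of sparse vectors. -/
def mergePairs : List Sparse → List Sparse
  | v :: w :: l => merge v w :: mergePairs l
  | l => l

/-- The sum of a list of sparse vectors, by a balanced tree of merges. -/
def mergeAll (l : List Sparse) : Sparse := (mergePairs^[l.length.log2 + 1] l).flatten

lemma eval_flatten (e : ℕ → M) (l : List Sparse) : eval e l.flatten = (l.map (eval e)).sum := by
  induction l with
  | nil => rfl
  | cons v l ih => rw [List.flatten_cons, eval_append, ih, List.map_cons, List.sum_cons]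

lemma eval_mergePairs (e : ℕ → M) (l : List Sparse) :
    ((mergePairs l).map (eval e)).sum = (l.map (eval e)).sum := by
  induction l using mergePairs.induct with
  | case1 v w l ih => simp [mergePairs, ih, eval_merge, add_assoc]
  | case2 l h => rw [mergePairs.eq_2 l h]

lemma eval_mergeAll (e : ℕ → M) (l : List Sparse) :
    eval e (mergeAll l) = (l.map (eval e)).sum := by
  rw [mergeAll, eval_flatten]
  induction l.length.log2 + 1 with
  | zero => rfl
  | succ k ih => rw [Function.iterate_succ_apply', eval_mergePairs, ih]

lemma forall_mem_mergeCons {P : ℕ → Prop} {x : ℕ × ℤ} {v : Sparse} {r : Sparse → Sparse}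
    (hx : P x.1) (hv : ∀ t ∈ v, P t.1) (hr : ∀ w : Sparse, (∀ t ∈ w, P t.1) → ∀ t ∈ r w, P t.1)
    (w : Sparse) (hw : ∀ t ∈ w, P t.1) : ∀ t ∈ mergeCons x v r w, P t.1 := by
  induction w with
  | nil => exact List.forall_mem_cons.2 ⟨hx, hv⟩
  | cons y w ih =>
    change ∀ t ∈ (bif x.1.blt y.1 then x :: r (y :: w)
      else bif y.1.blt x.1 then y :: mergeCons x v r w
      else forceInt (x.2 + y.2) fun c => if c = 0 then r w else (x.1, c) :: r w), _
    obtain ⟨hy, hw'⟩ := List.forall_mem_cons.1 hw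
    simp only [Bool.cond_eq_ite, forceInt_eq]
    split_ifs
    · exact List.forall_mem_cons.2 ⟨hx, hr _ hw⟩
    · exact List.forall_mem_cons.2 ⟨hy, ih hw'⟩
    · exact hr _ hw'
    · exact List.forall_mem_cons.2 ⟨hx, hr _ hw'⟩

lemma forall_mem_merge {P : ℕ → Prop} {v w : Sparse} (hv : ∀ t ∈ v, P t.1)
    (hw : ∀ t ∈ w, P t.1) : ∀ t ∈ merge v w, P t.1 := by
  induction v generalizing w with
  | nil => exact hw
  | cons x v ih =>
    obtain ⟨hx, hv'⟩ := List.forall_mem_cons.1 hv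
    exact forall_mem_mergeCons hx hv' (fun w => ih hv') w hw

lemma forall_mem_mergePairs {P : ℕ → Prop} (l : List Sparse) (hl : ∀ v ∈ l, ∀ t ∈ v, P t.1) :
    ∀ v ∈ mergePairs l, ∀ t ∈ v, P t.1 := by
  induction l using mergePairs.induct with
  | case1 v w l ih =>
    simp only [List.forall_mem_cons, mergePairs] at hl ⊢
    exact ⟨forall_mem_merge hl.1 hl.2.1, ih hl.2.2⟩
  | case2 l h => rwa [mergePairs.eq_2 l h]

lemma forall_mem_mergeAll {P : ℕ → Prop} {l : List Sparse} (hl : ∀ v ∈ l, ∀ t ∈ v, P t.1) :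
    ∀ t ∈ mergeAll l, P t.1 := by
  have iterate (k : ℕ) : ∀ v ∈ mergePairs^[k] l, ∀ t ∈ v, P t.1 := by
    induction k with
    | zero => exact hl
    | succ k ih => rw [Function.iterate_succ_apply']; exact forall_mem_mergePairs _ ih
  intro t ht
  obtain ⟨v, hv, htv⟩ := List.mem_flatten.1 ht
  exact iterate _ v hv t htv

end Sparse

end Sparse

section Table

open Finsupp

/-- The exterior monomial with bit mask `n % 64`. -/
def monomial (n : ℕ) : Finset (Fin 6) := {k | n.testBit k}

/-- The bit mask of an exterior monomial. -/
def mask (I : Finset (Fin 6)) : ℕ := ∑ k ∈ I, 2 ^ (k : ℕ)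

lemma monomial_mask (I : Finset (Fin 6)) : monomial (mask I) = I := by
  revert I
  decide +kernel

lemma monomial_mod (n : ℕ) : monomial (n % 64) = monomial n := by
  ext k
  have testBit_mod : (n % 2 ^ 6).testBit k = n.testBit k := by
    rw [Nat.testBit_mod_two_pow, decide_eq_true k.2, Bool.true_and]
  simp [monomial, ← testBit_mod]

lemma mask_monomial (n : ℕ) : mask (monomial n) = n % 64 := by
  have mask_monomial_of_lt : ∀ n < 64, mask (monomial n) = n := by decide +kernel
  rw [← monomial_mod, mask_monomial_of_lt _ (n.mod_lt (by norm_num))]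

lemma mask_lt (I : Finset (Fin 6)) : mask I < 64 := by
  rw [← monomial_mask I, mask_monomial]
  exact Nat.mod_lt _ (by norm_num)

lemma getD_map_range {α : Type*} (f : ℕ → List α) (I : Finset (Fin 6)) :
    ((List.range 64).map f).getD (mask I) [] = f (mask I) := by
  rw [List.getD_eq_getElem _ _ (by simpa using mask_lt I)]
  simp

lemma getD_mem_of_mem_getD {α : Type*} {l : List (List α)} {i : ℕ} {a : α}
    (ha : a ∈ l.getD i []) : l.getD i [] ∈ l := by
  rw [List.getD_eq_getElem?_getD] at ha ⊢
  cases h : l[i]? with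
  | none => simp [h] at ha
  | some v => exact List.mem_of_getElem? h

namespace Sparse

/-- Multiplies the row `v` by the term `t`, adding the high parts of the keys. -/
def shift (t : ℕ × ℤ) (v : Sparse) : Sparse :=
  forceNat (t.1 / 64 * 64) fun m => List.rec []
    (fun s _ ih => forceNat (m + s.1) fun n => forceInt (t.2 * s.2) fun c => (n, c) :: ih) v

lemma shift_eq (t : ℕ × ℤ) (v : Sparse) :
    shift t v = v.map fun s => (t.1 / 64 * 64 + s.1, t.2 * s.2) := by
  rw [shift, forceNat_eq]
  induction v with
  | nil => rfl
  | cons s v ih => simp only [forceNat_eq, forceInt_eq] at ih ⊢; rw [ih, List.map_cons]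

end Sparse

namespace Table

variable {A : Type*} [Ring A]

/-- The row vector with a monomial and a coefficient for each key. -/
noncomputable def term (c : ℕ → A) (n : ℕ) : Finset (Fin 6) →₀ A := single (monomial n) (c (n / 64))

/-- The endomorphism of a free module on the exterior monomials whose matrix is a table: row `i` of
the table is the image of the monomial with mask `i`, and the key `n` stands for `c (n / 64)` times
the monomial with mask `n % 64`. -/
noncomputable def toEnd (c : ℕ → A) (T : Table) : Module.End A (Finset (Fin 6) →₀ A) :=
  linearCombination A fun I => Sparse.eval (term c) (T.getD (mask I) [])

lemma toEnd_single (c : ℕ → A) (T : Table) (I : Finset (Fin 6)) (a : A) :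
    toEnd c T (single I a) = a • Sparse.eval (term c) (T.getD (mask I) []) := by
  rw [toEnd, linearCombination_single]

/-- Matrix addition. -/
def add (S T : Table) : Table :=
  (List.range 64).map fun m => Sparse.merge (S.getD m []) (T.getD m [])

lemma toEnd_add (c : ℕ → A) (S T : Table) : toEnd c (add S T) = toEnd c S + toEnd c T := by
  ext1 I
  ext1
  simp only [LinearMap.comp_apply, lsingle_apply, LinearMap.add_apply, toEnd_single, one_smul]
  rw [add, getD_map_range, Sparse.eval_merge]

/-- Matrix multiplication for row vectors: `mul S T` applies `S` first. -/
def mul (S T : Table) : Table :=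
  forceTable T fun T => S.map fun v => .mergeAll (v.map fun t => .shift t (T.getD (t.1 % 64) []))

lemma mul_eq (S T : Table) : mul S T =
    S.map fun v => .mergeAll (v.map fun t => .shift t (T.getD (t.1 % 64) [])) :=
  forceTable_eq _ _

lemma eval_shift {c c₁ c₂ : ℕ → A} {t : ℕ × ℤ} {v : Sparse}
    (hc : ∀ s ∈ v, c (t.1 / 64 + s.1 / 64) = c₁ (t.1 / 64) * c₂ (s.1 / 64)) :
    Sparse.eval (term c) (.shift t v) = t.2 • c₁ (t.1 / 64) • Sparse.eval (term c₂) v := by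
  rw [Sparse.shift_eq]
  induction v with
  | nil => simp [Sparse.eval_nil]
  | cons s v ih =>
    obtain ⟨hs, hv⟩ := List.forall_mem_cons.1 hc
    have term_add : term c (t.1 / 64 * 64 + s.1) = c₁ (t.1 / 64) • term c₂ s.1 := by
      rw [term, ← monomial_mod, mul_comm, Nat.mul_add_mod, Nat.mul_add_div (by norm_num), hs, term,
        Finsupp.smul_single, monomial_mod, smul_eq_mul]
    rw [List.map_cons, Sparse.eval_cons, Sparse.eval_cons, ih hv, term_add, smul_add, smul_add,
      mul_smul, smul_comm (c₁ _) s.2]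

lemma toEnd_mul {c c₁ c₂ : ℕ → A} {S T : Table}
    (hc : ∀ v ∈ S, ∀ t ∈ v, ∀ w ∈ T, ∀ s ∈ w,
      c (t.1 / 64 + s.1 / 64) = c₁ (t.1 / 64) * c₂ (s.1 / 64)) :
    toEnd c (mul S T) = toEnd c₂ T * toEnd c₁ S := by
  ext1 I
  ext1
  have getD_mul : (mul S T).getD (mask I) [] = .mergeAll ((S.getD (mask I) []).map fun t =>
      .shift t (T.getD (t.1 % 64) [])) := by
    rw [mul_eq]
    exact List.getD_map S [] _
  simp only [LinearMap.comp_apply, lsingle_apply, Module.End.mul_apply, toEnd_single, one_smul]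
  rw [getD_mul, Sparse.eval_mergeAll, Sparse.eval, map_list_sum, List.map_map, List.map_map]
  congr 1
  refine List.map_congr_left fun t ht => ?_
  simp only [Function.comp_apply, map_zsmul, term, toEnd_single, mask_monomial]
  exact eval_shift fun s hs =>
    hc _ (getD_mem_of_mem_getD ht) _ ht _ (getD_mem_of_mem_getD hs) _ hs

end Table
end Table

section PackedExponents

/-- The base 128 digit of `m` at position `k`. -/
def digit (m k : ℕ) : ℕ := m / 128 ^ k % 128

/-- All digits of `m` are at most `2 * o`, so that they encode integers of size at most `o`. -/
def InRange (o m : ℕ) : Prop := ∀ k, digit m k ≤ 2 * o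

/-- The vector of integers encoded by the digits of `m` with offset `o`. -/
def exponent (o m : ℕ) (k : Fin 6) : ℤ := digit m k - o

/-- The code of `v` with offset `o`. -/
def pack (o : ℕ) (v : Fin 6 → ℤ) : ℕ := Nat.ofDigits 128 (List.ofFn fun k => (v k + o).toNat)

lemma digit_add {m n : ℕ} (h : ∀ k, digit m k + digit n k < 128) (k : ℕ) :
    digit (m + n) k = digit m k + digit n k := by
  have add_div (k : ℕ) : (m + n) / 128 ^ k = m / 128 ^ k + n / 128 ^ k := by
    induction k with
    | zero => simp
    | succ k ih => simp only [pow_succ, ← Nat.div_div_eq_div_mul, ih,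
        Nat.add_div_eq_of_add_mod_lt (h k)]
  rw [digit, add_div, Nat.add_mod_of_add_mod_lt (h k), digit, digit]

lemma digit_ofDigits {l : List ℕ} (hl : ∀ d ∈ l, d < 128) (k : ℕ) :
    digit (Nat.ofDigits 128 l) k = l.getD k 0 := by
  induction l generalizing k with
  | nil => simp [digit]
  | cons d l ih =>
    obtain ⟨hd, hl⟩ := List.forall_mem_cons.1 hl
    rw [Nat.ofDigits_cons]
    cases k with
    | zero => simp [digit, Nat.mod_eq_of_lt hd]
    | succ k =>
      rw [digit, pow_succ', ← Nat.div_div_eq_div_mul, Nat.add_mul_div_left _ _ (by norm_num),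
        Nat.div_eq_of_lt hd, zero_add, List.getD_cons_succ, ← ih hl, digit]

lemma InRange.add {o₁ o₂ m n : ℕ} (ho : 2 * (o₁ + o₂) < 128) (hm : InRange o₁ m)
    (hn : InRange o₂ n) (k : ℕ) : digit (m + n) k = digit m k + digit n k :=
  digit_add (fun k => by have := hm k; have := hn k; lia) k

lemma digit_pack {o : ℕ} (ho : 2 * o < 128) {v : Fin 6 → ℤ} (hv : ∀ k, -o ≤ v k ∧ v k ≤ o)
    (k : ℕ) : digit (pack o v) k = if hk : k < 6 then (v ⟨k, hk⟩ + o).toNat else 0 := by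
  have digit_lt : ∀ d ∈ List.ofFn fun k => (v k + o).toNat, d < 128 := by
    rw [List.forall_mem_ofFn_iff]
    intro k
    have := hv k
    lia
  rw [pack, digit_ofDigits digit_lt, List.getD_eq_getElem?_getD, List.getElem?_ofFn]
  split_ifs <;> rfl

lemma inRange_pack {o : ℕ} (ho : 2 * o < 128) {v : Fin 6 → ℤ} (hv : ∀ k, -o ≤ v k ∧ v k ≤ o) :
    InRange o (pack o v) := by
  intro k
  rw [digit_pack ho hv]
  split_ifs with hk
  · have := hv ⟨k, hk⟩
    lia
  · exact Nat.zero_le _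

lemma exponent_pack {o : ℕ} (ho : 2 * o < 128) {v : Fin 6 → ℤ} (hv : ∀ k, -o ≤ v k ∧ v k ≤ o) :
    exponent o (pack o v) = v := by
  ext k
  rw [exponent, digit_pack ho hv, dif_pos k.2, Fin.eta,
    Int.toNat_of_nonneg (neg_le_iff_add_nonneg.1 (hv k).1), add_sub_cancel_right]

end PackedExponents

section GroupTable

open Finsupp

/-- The coefficient of a raw table entry: its last hexadecimal digit, with offset 8. -/
def rawCoeff (n : ℕ) : ℤ := Int.subNatNat (n % 16) 8

/-- The lattice vector of a raw table entry: its first six hexadecimal digits, with offset 8. -/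
def rawExponent (n : ℕ) (k : Fin 6) : ℤ := Int.subNatNat (n / 16 ^ (8 - (k : ℕ)) % 16) 8

/-- Equal to `f v`, with `v` evaluated first. -/
def forceVec {β : Type} (v : Fin 6 → ℤ) (f : (Fin 6 → ℤ) → β) : β :=
  forceInt (v 0) fun a => forceInt (v 1) fun b => forceInt (v 2) fun c =>
    forceInt (v 3) fun d => forceInt (v 4) fun e => forceInt (v 5) fun g => f ![a, b, c, d, e, g]

/-- Equal to `f (α^[j] v)`, with all intermediate vectors evaluated. -/
def forceIterate {β : Type} (α : (Fin 6 → ℤ) → Fin 6 → ℤ) (f : (Fin 6 → ℤ) → β) (j : ℕ) :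
    (Fin 6 → ℤ) → β :=
  Nat.rec (fun v => forceVec v f) (fun _ ih v => forceVec v fun v => ih (α v)) j

lemma forceVec_eq {β : Type} (v : Fin 6 → ℤ) (f : (Fin 6 → ℤ) → β) : forceVec v f = f v := by
  simp only [forceVec, forceInt_eq]
  congr 1
  ext k
  fin_cases k <;> rfl

lemma forceIterate_eq {β : Type} (α : (Fin 6 → ℤ) → Fin 6 → ℤ) (f : (Fin 6 → ℤ) → β) (j : ℕ)
    (v : Fin 6 → ℤ) : forceIterate α f j v = f (α^[j] v) := by
  induction j generalizing v with
  | zero => exact forceVec_eq v f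
  | succ j ih =>
    change forceVec v (fun v => forceIterate α f j (α v)) = _
    rw [forceVec_eq, ih, Function.iterate_succ_apply]

/-- The table of the raw entries, with exponents twisted `j` times by `α` and packed with
offset `o`. -/
def Table.load (α : (Fin 6 → ℤ) → Fin 6 → ℤ) (j o : ℕ) (T : List (List ℕ)) : Table :=
  T.map fun v => .mergeAll <| v.map fun n =>
    forceIterate α (fun w => [(pack o w * 64 + n / 16 % 64, rawCoeff n)]) j (rawExponent n)

lemma Table.load_eq (α : (Fin 6 → ℤ) → Fin 6 → ℤ) (j o : ℕ) (T : List (List ℕ)) :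
    load α j o T = T.map fun v => .mergeAll <| v.map fun n =>
      [(pack o (α^[j] (rawExponent n)) * 64 + n / 16 % 64, rawCoeff n)] := by
  simp only [load, forceIterate_eq]

namespace LatticeCoordinates

variable {G : Type*} [Group G] (L : LatticeCoordinates G 6)

/-- A raw entry with vector `v`, mask `m` and coefficient `c` stands for `c • γ * x(v)` times the
monomial with mask `m`. -/
noncomputable def rawTerm (γ : G) (n : ℕ) : Finset (Fin 6) →₀ MonoidAlgebra ℤ G :=
  rawCoeff n • Finsupp.single (monomial (n / 16)) (.single (γ * L.x (rawExponent n)) 1)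

/-- The endomorphism of `ℤ[G]`-modules with a raw table as its matrix: the image of the exterior
monomial `I` is given by the row at `mask I`. -/
noncomputable def rawEnd (γ : G) (T : List (List ℕ)) :
    Module.End (MonoidAlgebra ℤ G) (Finset (Fin 6) →₀ MonoidAlgebra ℤ G) :=
  linearCombination _ fun I => ((T.getD (mask I) []).map (L.rawTerm γ)).sum

lemma rawEnd_single (γ : G) (T : List (List ℕ)) (I : Finset (Fin 6)) (a : MonoidAlgebra ℤ G) :
    L.rawEnd γ T (single I a) = a • ((T.getD (mask I) []).map (L.rawTerm γ)).sum :=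
  linearCombination_single ..

variable (τ : G)

/-- The group elements standing for the packed vectors in a table that goes from `j` to `p`. The
powers of `τ` are chosen such that multiplying group elements amounts to adding vectors. -/
noncomputable def transport (p j o m : ℕ) : MonoidAlgebra ℤ G :=
  .single (τ ^ p * L.x (exponent o m) * (τ ^ j)⁻¹) 1

/-- The table `T`, read as going from `j` to `p` with offset `o`, is the matrix of `f`. -/
structure Represents (p j o : ℕ) (T : Table)
    (f : Module.End (MonoidAlgebra ℤ G) (Finset (Fin 6) →₀ MonoidAlgebra ℤ G)) : Prop where
  inRange : ∀ v ∈ T, ∀ t ∈ v, InRange o (t.1 / 64)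
  toEnd_eq : Table.toEnd (L.transport τ p j o) T = f

variable {L τ}

lemma transport_add {p i j o₁ o₂ m n : ℕ} (ho : 2 * (o₁ + o₂) < 128) (hm : InRange o₁ m)
    (hn : InRange o₂ n) :
    L.transport τ p j (o₁ + o₂) (m + n) = L.transport τ p i o₁ m * L.transport τ i j o₂ n := by
  have exponent_add : exponent (o₁ + o₂) (m + n) = exponent o₁ m + exponent o₂ n := by
    ext k
    simp only [exponent, InRange.add ho hm hn, Pi.add_apply]
    push_cast
    ring
  rw [transport, transport, transport, MonoidAlgebra.single_mul_single, exponent_add, L.x_add]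
  simp only [mul_assoc, inv_mul_cancel_left, mul_one]

lemma Represents.mul {p i j o₁ o₂ : ℕ} {S T : Table} {f g} (ho : 2 * (o₁ + o₂) < 128)
    (hS : L.Represents τ p i o₁ S f) (hT : L.Represents τ i j o₂ T g) :
    L.Represents τ p j (o₁ + o₂) (.mul S T) (g * f) where
  inRange := by
    rw [Table.mul_eq, List.forall_mem_map]
    intro v hv
    refine Sparse.forall_mem_mergeAll (P := fun n => InRange _ (n / 64))
      (List.forall_mem_map.2 fun t ht => ?_)
    rw [Sparse.shift_eq, List.forall_mem_map]
    intro s hs k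
    have hs' := hT.inRange _ (getD_mem_of_mem_getD hs) s hs
    have := hS.inRange v hv t ht k
    have := hs' k
    rw [mul_comm, Nat.mul_add_div (by norm_num), InRange.add ho (hS.inRange v hv t ht) hs']
    lia
  toEnd_eq := by
    rw [← hS.toEnd_eq, ← hT.toEnd_eq]
    exact Table.toEnd_mul fun v hv t ht w hw s hs =>
      transport_add ho (hS.inRange v hv t ht) (hT.inRange w hw s hs)

lemma x_mul_pow {α : (Fin 6 → ℤ) → Fin 6 → ℤ} (hα : ∀ v, L.x v * τ = τ * L.x (α v)) (j : ℕ)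
    (v : Fin 6 → ℤ) : L.x v * τ ^ j = τ ^ j * L.x (α^[j] v) := by
  induction j generalizing v with
  | zero => simp
  | succ j ih =>
    rw [pow_succ', ← mul_assoc, hα, mul_assoc, ih, ← mul_assoc, Function.iterate_succ_apply]

lemma represents_load {α : (Fin 6 → ℤ) → Fin 6 → ℤ} (hα : ∀ v, L.x v * τ = τ * L.x (α v))
    {j o : ℕ} (d : ℕ) {T : List (List ℕ)} (ho : 2 * o < 128)
    (hT : ∀ v ∈ T, ∀ n ∈ v, ∀ k, -o ≤ α^[j] (rawExponent n) k ∧ α^[j] (rawExponent n) k ≤ o) :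
    L.Represents τ (d + j) j o (.load α j o T) (L.rawEnd (τ ^ d) T) := by
  have key_div (n m : ℕ) : (m * 64 + n / 16 % 64) / 64 = m := by lia
  refine ⟨?_, ?_⟩
  · rw [Table.load_eq, List.forall_mem_map]
    intro v hv
    refine Sparse.forall_mem_mergeAll (P := fun n => InRange _ (n / 64))
      (List.forall_mem_map.2 fun n hn => ?_)
    rw [List.forall_mem_singleton, key_div]
    exact inRange_pack ho (hT v hv n hn)
  · ext1 I
    ext1
    have getD_load : (Table.load α j o T).getD (mask I) [] = .mergeAll ((T.getD (mask I) []).map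
        fun n => [(pack o (α^[j] (rawExponent n)) * 64 + n / 16 % 64, rawCoeff n)]) := by
      rw [Table.load_eq]
      exact List.getD_map T [] _
    simp only [LinearMap.comp_apply, lsingle_apply, Table.toEnd_single, one_smul,
      rawEnd_single]
    rw [getD_load, Sparse.eval_mergeAll, List.map_map]
    congr 1
    refine List.map_congr_left fun n hn => ?_
    rw [Function.comp_apply, Sparse.eval_cons, Sparse.eval_nil, add_zero, Table.term, key_div,
      transport, rawTerm, exponent_pack ho (hT _ (getD_mem_of_mem_getD hn) n hn), pow_add,
      mul_assoc (τ ^ d), ← x_mul_pow hα, mul_assoc, mul_inv_cancel_right, ← monomial_mod]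
    simp [monomial_mod]

lemma Represents.unique {p j o : ℕ} {T : Table} {f g} (hf : L.Represents τ p j o T f)
    (hg : L.Represents τ p j o T g) : f = g :=
  hf.toEnd_eq.symm.trans hg.toEnd_eq

end LatticeCoordinates

end GroupTable

section TwistedPowers

open Finsupp

/-- The identity matrix, with packed exponents of offset `o`. -/
def Table.one (o : ℕ) : Table := (List.range 64).map fun m => [(pack o 0 * 64 + m, 1)]

namespace LatticeCoordinates

variable {G : Type*} [Group G] {L : LatticeCoordinates G 6} {τ : G}

lemma represents_one (p : ℕ) {o : ℕ} (ho : 2 * o < 128) :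
    L.Represents τ p p o (.one o) 1 := by
  have pack_zero (k : Fin 6) : -(o : ℤ) ≤ (0 : Fin 6 → ℤ) k ∧ (0 : Fin 6 → ℤ) k ≤ o := by simp
  refine ⟨?_, ?_⟩
  · rw [Table.one, List.forall_mem_map]
    intro m hm
    rw [List.forall_mem_singleton, mul_comm, Nat.mul_add_div (by norm_num),
      Nat.div_eq_of_lt (List.mem_range.1 hm), add_zero]
    exact inRange_pack ho pack_zero
  · ext1 I
    ext1
    simp only [LinearMap.comp_apply, lsingle_apply, Table.toEnd_single, one_smul,
      Module.End.one_apply]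
    rw [Table.one, getD_map_range, Sparse.eval_cons, Sparse.eval_nil, add_zero, one_smul,
      Table.term, ← monomial_mod, mul_comm, Nat.mul_add_mod, monomial_mod, monomial_mask,
      Nat.mul_add_div (by norm_num), Nat.div_eq_of_lt (mask_lt I), add_zero, transport,
      exponent_pack ho pack_zero, x_zero, mul_one, mul_inv_cancel, MonoidAlgebra.one_def]

lemma Represents.add {p j o : ℕ} {S T : Table} {f g} (hS : L.Represents τ p j o S f)
    (hT : L.Represents τ p j o T g) : L.Represents τ p j o (.add S T) (f + g) where
  inRange := by
    have getD_inRange {T : Table} (hT : ∀ v ∈ T, ∀ t ∈ v, InRange o (t.1 / 64)) (m : ℕ) :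
        ∀ t ∈ T.getD m [], InRange o (t.1 / 64) :=
      fun t ht => hT _ (getD_mem_of_mem_getD ht) t ht
    rw [Table.add, List.forall_mem_map]
    exact fun m _ => Sparse.forall_mem_merge (P := fun n => InRange o (n / 64))
      (getD_inRange hS.inRange m) (getD_inRange hT.inRange m)
  toEnd_eq := by rw [Table.toEnd_add, hS.toEnd_eq, hT.toEnd_eq]

lemma Represents.congr_pow {p q j o : ℕ} {T : Table} {f} (h : L.Represents τ p j o T f)
    (hpq : τ ^ p = τ ^ q) : L.Represents τ q j o T f :=
  ⟨h.inRange, by rw [← h.toEnd_eq]; unfold transport; rw [hpq]⟩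

end LatticeCoordinates

/-- The matrix of the powers of the operator with matrix `T`. -/
def Table.twistedPow (α : (Fin 6 → ℤ) → Fin 6 → ℤ) (o : ℕ) (T : List (List ℕ)) (j : ℕ) : Table :=
  Nat.rec (.one 0) (fun j ih => .mul (.load α j o T) ih) j

/-- All exponents in `T`, twisted less than `j` times, have absolute value at most `o`. -/
def TwistBound (α : (Fin 6 → ℤ) → Fin 6 → ℤ) (j o : ℕ) (T : List (List ℕ)) : Prop :=
  ∀ i < j, ∀ v ∈ T, ∀ n ∈ v, ∀ k, -o ≤ α^[i] (rawExponent n) k ∧ α^[i] (rawExponent n) k ≤ o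

lemma LatticeCoordinates.represents_twistedPow {G : Type*} [Group G] {L : LatticeCoordinates G 6}
    {τ : G} {α : (Fin 6 → ℤ) → Fin 6 → ℤ} (hα : ∀ v, L.x v * τ = τ * L.x (α v)) {o : ℕ}
    {T : List (List ℕ)} {j : ℕ} (hj : 2 * (j * o) < 128) (hT : TwistBound α j o T) :
    L.Represents τ j 0 (j * o) (Table.twistedPow α o T j) (L.rawEnd τ T ^ j) := by
  induction j with
  | zero => simpa [Table.twistedPow] using L.represents_one (τ := τ) 0 (o := 0) (by norm_num)
  | succ j ih =>
    have hj' : 2 * (o + j * o) < 128 := by lia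
    have load : L.Represents τ (j + 1) j o (.load α j o T) (L.rawEnd τ T) := by
      simpa [add_comm] using represents_load hα 1 (by lia) (hT j (by lia))
    rw [pow_succ, Nat.succ_mul, add_comm (j * o)]
    exact load.mul hj' (ih (by lia) fun i hi => hT i (by lia))

lemma twistBound_iff {α : (Fin 6 → ℤ) → Fin 6 → ℤ} {j o : ℕ} {T : List (List ℕ)} :
    TwistBound α j o T ↔ ∀ i < j, ∀ v ∈ T, ∀ n ∈ v,
      forceIterate α (fun w => decide (∀ k, -o ≤ w k ∧ w k ≤ o)) i (rawExponent n) = true := by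
  simp [TwistBound, forceIterate_eq]

end TwistedPowers

section OrbifoldGroup

/-- The extension of `Q` by `N ≅ ℤⁿ` given by a semidirect product. -/
def LatticeExtension.semidirectProduct {N Q : Type*} [Group N] [Group Q] (φ : Q →* MulAut N)
    {n : ℕ} (e : Multiplicative (Fin n → ℤ) ≃* N) : LatticeExtension (N ⋊[φ] Q) Q n where
  x v := .inl (e (.ofAdd v))
  u γ := (e.symm (φ γ.right⁻¹ γ.left)).toAdd
  x_add v w := by rw [ofAdd_add, map_mul, map_mul]
  u_mul_x γ v := by
    have cancel : φ γ.right⁻¹ (φ γ.right (e (.ofAdd v))) = e (.ofAdd v) := by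
      rw [← MulAut.mul_apply, ← map_mul, inv_mul_cancel, map_one, MulAut.one_apply]
    simp only [SemidirectProduct.mul_left, SemidirectProduct.mul_right,
      SemidirectProduct.left_inl, SemidirectProduct.right_inl, mul_one, map_mul, cancel,
      MulEquiv.symm_apply_apply, toAdd_mul, toAdd_ofAdd]
  π := SemidirectProduct.rightHom
  σ := SemidirectProduct.inr
  π_x v := by simp
  π_σ q := by simp
  mul_x_neg_u γ := by ext <;> simp

/-- The base change of the lattice in which the tables below are written. -/
def baseChange : (Matrix (Fin 6) (Fin 6) ℤ)ˣ where
  val := !![1, 0, 0, 0, 1, 0; 1, 1, 0, 0, 0, 1; 1, 1, 1, 0, 0, 0; 0, 1, 1, 1, 0, 0;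
    0, 0, 1, 1, 0, 0; 0, 0, 0, 1, 0, 0]
  inv := !![0, 0, 1, -1, 0, 1; 0, 0, 0, 1, -1, 0; 0, 0, 0, 0, 1, -1; 0, 0, 0, 0, 0, 1;
    1, 0, -1, 1, 0, -1; 0, 1, -1, 0, 1, -1]
  val_inv := by decide +kernel
  inv_val := by decide +kernel

/-- The orbifold group `ℤ⁶ ⋊ ℤ/12`. -/
abbrev OrbifoldGroup : Type := Crystal.Crys 12 holM holM_pow

/-- The orbifold group as an extension, with the coordinates of the new basis. -/
def orbifoldExtension : LatticeExtension OrbifoldGroup (Multiplicative (ZMod 12)) 6 :=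
  .semidirectProduct _ (Crystal.glToAut 6 baseChange)

/-- The generator of `ℤ/12` acting by the inverse of `holM`. -/
def generator : OrbifoldGroup := .inr (.ofAdd (-1))

/-- The action of `holM` on the lattice in the new basis. -/
def twist (v : Fin 6 → ℤ) : Fin 6 → ℤ :=
  ![-v 3 + v 5, v 0, v 1 + v 3, v 2, -v 5, v 4 - v 5]

lemma generator_pow : generator ^ 12 = 1 := by
  rw [generator, ← map_pow]
  exact map_one SemidirectProduct.inr

lemma holM_mulVec_baseChange_mulVec (v : Fin 6 → ℤ) :
    holM *ᵥ baseChange.1 *ᵥ v = baseChange.1 *ᵥ twist v := by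
  ext i
  fin_cases i <;> simp [holM, baseChange, twist, Matrix.mulVec, dotProduct, Fin.sum_univ_six] <;>
    ring

lemma matAction_one (a : Crystal.Lat 6) :
    Crystal.matAction 12 holM holM_pow (.ofAdd 1) a = .ofAdd (holM *ᵥ a.toAdd) :=
  congrArg (· a) (pow_one (Crystal.glToAut 6 (Crystal.matUnit holM 11 holM_pow)))

lemma x_mul_generator (v : Fin 6 → ℤ) :
    orbifoldExtension.x v * generator = generator * orbifoldExtension.x (twist v) := by
  have x_eq (v : Fin 6 → ℤ) :
      orbifoldExtension.x v = .inl (Multiplicative.ofAdd (baseChange.1 *ᵥ v)) := rfl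
  have action_generator : Crystal.matAction 12 holM holM_pow (.ofAdd (-1))
      (.ofAdd (baseChange.1 *ᵥ twist v)) = .ofAdd (baseChange.1 *ᵥ v) := by
    rw [← holM_mulVec_baseChange_mulVec, ← toAdd_ofAdd (baseChange.1 *ᵥ v), ← matAction_one,
      ← MulAut.mul_apply, ← map_mul, ← ofAdd_add, neg_add_cancel, ofAdd_zero, map_one,
      MulAut.one_apply, toAdd_ofAdd]
  rw [x_eq, x_eq, generator]
  ext : 1
  · simp only [SemidirectProduct.mul_left, SemidirectProduct.left_inl,
      SemidirectProduct.right_inl, SemidirectProduct.left_inr, SemidirectProduct.right_inr,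
      map_one, mul_one, one_mul, action_generator]
  · simp

end OrbifoldGroup

section KoszulTable

open Finsupp

/-- The raw table entry `c • x_k ^ δ * e_{I ∖ k}`, where `c = ±1` and `δ = 0, 1`. -/
def koszulEntry (I : Finset (Fin 6)) (k : Fin 6) (δ : ℕ) (c : ℤ) : ℕ :=
  0x888888000 + δ * 16 ^ (8 - (k : ℕ)) + 16 * mask (I.erase k) + (8 + c).toNat

/-- The row of the Koszul differential `e_I ↦ ∑ ± (x_k - 1) e_{I ∖ k}` in a raw table. -/
def koszulRow (I : Finset (Fin 6)) : List ℕ :=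
  (List.finRange 6).flatMap fun k => if k ∈ I then
    [koszulEntry I k 1 (exteriorSign k I), koszulEntry I k 0 (-exteriorSign k I)] else []

/-- The raw table of the sum of the Koszul differential and the map with table `T`. -/
def addKoszul (T : List (List ℕ)) : List (List ℕ) :=
  (List.range 64).map fun m => koszulRow (monomial m) ++ T.getD m []

lemma decode_koszulEntry {I : Finset (Fin 6)} {k : Fin 6} (hk : k ∈ I) :
    ∀ δ < 2, ∀ c ∈ [exteriorSign k I, -exteriorSign k I],
      monomial (koszulEntry I k δ c / 16) = I.erase k ∧
      rawExponent (koszulEntry I k δ c) = Pi.single k (δ : ℤ) ∧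
      rawCoeff (koszulEntry I k δ c) = c := by
  revert I k
  decide +kernel

lemma getD_addKoszul (T : List (List ℕ)) (I : Finset (Fin 6)) :
    (addKoszul T).getD (mask I) [] = koszulRow I ++ T.getD (mask I) [] := by
  rw [addKoszul, getD_map_range, monomial_mask]

namespace LatticeCoordinates

variable {G : Type*} [Group G] (L : LatticeCoordinates G 6)

lemma diff_one (k : Fin 6) : L.diff k 1 = .single (L.x (Pi.single k 1)) 1 - 1 := by
  rw [diff, MonoidAlgebra.one_def, groupRingLift_single, one_mul, one_smul]

lemma diff_eq_mul (k : Fin 6) (a : MonoidAlgebra ℤ G) : L.diff k a = a * L.diff k 1 := by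
  refine LinearMap.congr_fun (g := LinearMap.mulRight ℤ _) (groupRing_hom_ext fun γ => ?_) a
  simp only [LinearMap.mulRight_apply, diff_one]
  simp [diff, mul_sub]

lemma rawTerm_koszulEntry {I : Finset (Fin 6)} {k : Fin 6} (hk : k ∈ I) :
    L.rawTerm 1 (koszulEntry I k 1 (exteriorSign k I)) +
      L.rawTerm 1 (koszulEntry I k 0 (-exteriorSign k I)) =
    exteriorSign k I • single (I.erase k) (L.diff k 1) := by
  obtain ⟨mono₁, exp₁, coeff₁⟩ := decode_koszulEntry hk 1 (by simp) (exteriorSign k I) (by simp)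
  obtain ⟨mono₀, exp₀, coeff₀⟩ := decode_koszulEntry hk 0 (by simp) (-exteriorSign k I) (by simp)
  rw [rawTerm, rawTerm, mono₁, exp₁, coeff₁, mono₀, exp₀, coeff₀, Nat.cast_one, Nat.cast_zero,
    Pi.single_zero, x_zero, one_mul, one_mul, diff_one, single_sub, smul_sub, neg_smul,
    ← sub_eq_add_neg, MonoidAlgebra.one_def]

lemma sum_rawTerm_koszulRow (I : Finset (Fin 6)) (a : MonoidAlgebra ℤ G) :
    a • ((koszulRow I).map (L.rawTerm 1)).sum = L.koszul (single I a) := by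
  have sum_ite (k : Fin 6) : (((if k ∈ I then [koszulEntry I k 1 (exteriorSign k I),
      koszulEntry I k 0 (-exteriorSign k I)] else []).map (L.rawTerm 1)).sum =
      if k ∈ I then exteriorSign k I • single (I.erase k) (L.diff k 1)
      else 0) := by
    split_ifs with hk
    · simp [← L.rawTerm_koszulEntry hk]
    · simp
  rw [koszulRow, List.map_flatMap, List.flatMap_def, List.sum_flatten, List.map_map]
  simp only [Function.comp_def, sum_ite]
  rw [← Fin.sum_univ_def, Finset.sum_ite_mem, Finset.univ_inter, koszul_single, Finset.smul_sum]
  refine Finset.sum_congr rfl fun k _ => ?_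
  rw [smul_comm, Finsupp.smul_single, smul_eq_mul, ← diff_eq_mul]

lemma rawEnd_addKoszul (T : List (List ℕ)) (v : Finset (Fin 6) →₀ MonoidAlgebra ℤ G) :
    L.rawEnd 1 (addKoszul T) v = L.koszul v + L.rawEnd 1 T v := by
  induction v using Finsupp.induction_linear with
  | zero => simp
  | add v w hv hw => rw [map_add, map_add, map_add, hv, hw, add_add_add_comm]
  | single I a => rw [rawEnd_single, getD_addKoszul, List.map_append, List.sum_append, smul_add,
      sum_rawTerm_koszulRow, rawEnd_single]

end LatticeCoordinates

end KoszulTable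

/-- The raw table of a lift of the action of `generator` to the Koszul complex. -/
def shiftTable : List (List ℕ) := [
  [0x888888009], [0x888888029], [0x888888049], [0x888888069], [0x888888089], [0x8888880a9],
  [0x8888880c9], [0x8888880e9], [0x888888049, 0x789888017], [0x888888069, 0x789888039, 0x7798880f9,
  0x7898880f7, 0x6798880f7, 0x6898880f9], [0x789888059], [0x789888077], [0x8888880c7, 0x789888099,
  0x7788880f9, 0x6798880f7, 0x7789880f7, 0x6799880f9], [0x8888880e7, 0x7898880b7], [0x7898880d7],
  [0x7898880f9], [0x888888209], [0x888888229], [0x888888249], [0x888888269], [0x888888289],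
  [0x8888882a9], [0x8888882c9], [0x8888882e9], [0x888888249, 0x789888217], [0x888888269,
  0x789888239, 0x7798882f9, 0x7898882f7, 0x6798882f7, 0x6898882f9], [0x789888259], [0x789888277],
  [0x8888882c7, 0x789888299, 0x7788882f9, 0x6798882f7, 0x7789882f7, 0x6799882f9], [0x8888882e7,
  0x7898882b7], [0x7898882d7], [0x7898882f9], [0x888887207, 0x888877107, 0x888877019, 0x888877077,
  0x8789770e9], [0x888887227, 0x888877127, 0x888877037, 0x8888770f9, 0x7788770f9, 0x8788770f7,
  0x7888770f7], [0x888887247, 0x888877147, 0x888877057], [0x888887267, 0x888877167, 0x888877079],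
  [0x888887287, 0x888877187, 0x888877097, 0x8789770f9, 0x8888770f9, 0x7788770f9, 0x8788770f7,
  0x7789770f7], [0x8888872a7, 0x8888771a7, 0x8888770b9], [0x8888872c7, 0x8888771c7, 0x8888770d9],
  [0x8888872e7, 0x8888771e7, 0x8888770f7], [0x888887247, 0x888877147, 0x888877057, 0x789887219,
  0x789877119, 0x7799770f7], [0x888887267, 0x888877167, 0x888877079, 0x789887237, 0x789877137,
  0x7798872f7, 0x7898872f9, 0x7798771f7, 0x7898771f9, 0x6798872f9, 0x6798771f9, 0x6898872f7,
  0x6898771f7], [0x789887257, 0x789877157], [0x789887279, 0x789877179], [0x8888872c9, 0x8888771c9,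
  0x8888770d7, 0x789887297, 0x789877197, 0x7788872f7, 0x7788771f7, 0x6798872f9, 0x6798771f9,
  0x7789872f9, 0x7789771f9, 0x6799872f7, 0x6799771f7], [0x8888872e9, 0x8888771e9, 0x8888770f9,
  0x7898872b9, 0x7898771b9], [0x7898872d9, 0x7898771d9], [0x7898872f7, 0x7898771f7], [0x888877309,
  0x888877217, 0x7998870f9, 0x7898870f7, 0x68a8870f9, 0x6799770f7, 0x888877279, 0x8898780f9,
  0x8789780f9, 0x8888780f7, 0x7998770f7, 0x7899770f9, 0x77a9890f7, 0x779a780f9, 0x7799780f7,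
  0x769a890f7, 0x7799890f9, 0x7689780f9, 0x8689780f7, 0x8899770f7, 0x8898770f9, 0x8789772e7],
  [0x888877329, 0x888877239, 0x8888772f7, 0x7788772f7, 0x8788772f9, 0x7888772f9], [0x888877349,
  0x888877259], [0x888877369, 0x888877277], [0x888877389, 0x888877299, 0x8789772f7, 0x8888772f7,
  0x7788772f7, 0x8788772f9, 0x7789772f9], [0x8888773a9, 0x8888772b7], [0x8888773c9, 0x8888772d7],
  [0x8888773e9, 0x8888772f9], [0x888877349, 0x888877259, 0x789877317, 0x7799772f9], [0x888877369,
  0x888877277, 0x789877339, 0x7798773f9, 0x7898773f7, 0x6798773f7, 0x6898773f9], [0x789877359],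
  [0x789877377], [0x8888773c7, 0x8888772d9, 0x789877399, 0x7788773f9, 0x6798773f7, 0x7789773f7,
  0x6799773f9], [0x8888773e7, 0x8888772f7, 0x7898773b7], [0x7898773d7], [0x7898773f9]]

/-- The raw table of the perturbation of the Koszul differential. -/
def deformationTable : List (List ℕ) := [
  [], [0x788888057, 0x888888059], [0x8788880a7, 0x8888880a9], [0x7888880d6, 0x778988077,
  0x7788880d9, 0x778888079, 0x7988880d9, 0x788988079, 0x8888880da, 0x878988079, 0x8788880d7,
  0x878888077, 0x8988880d7, 0x888988077, 0x8788880b9, 0x8888880b7], [0x788888057, 0x789888059], [],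
  [0x8788880ea, 0x7798880ba, 0x7788880e7, 0x7788880b7, 0x8798880e7, 0x77a8880b7, 0x7798880e9,
  0x8888880e6, 0x7898880b6, 0x7888880e9, 0x7888880b9, 0x8898880e9, 0x78a8880b9, 0x7898880e7,
  0x788888077, 0x789888079], [0x8788880f6, 0x7788880f9, 0x8798880f9, 0x7798880f7, 0x8888880fa,
  0x7888880f7, 0x8898880f7, 0x7898880f9], [0x8788880a7, 0x8789880a9], [0x7888880d6, 0x778988076,
  0x7788880d9, 0x778888079, 0x7889880d9, 0x778a88079, 0x7789880d7, 0x8888880da, 0x87898807a,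
  0x8788880d7, 0x878888077, 0x8889880d7, 0x878a88077, 0x8789880d9, 0x8788880b9, 0x8789880b7], [],
  [0x7888880f9, 0x8888880f7], [0x7888880d6, 0x778988076, 0x7788880d9, 0x778888079, 0x7889880d9,
  0x778a88079, 0x7789880d7, 0x7898880da, 0x77998807a, 0x7798880d7, 0x779888077, 0x7899880d7,
  0x779a88077, 0x7799880d9, 0x8788880e7, 0x8789880e9], [0x8788880f9, 0x8789880f7], [0x7888880f6,
  0x7788880f9, 0x7889880f9, 0x7789880f7, 0x7898880fa, 0x7798880f7, 0x7899880f7, 0x7799880f9], [],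
  [0x7788980f9, 0x7798980f7, 0x7888980f7, 0x7898980fa, 0x8788880fa, 0x8798880f7, 0x8888880f6,
  0x8898880f9, 0x7788880f6, 0x7798880f9, 0x7888880f9, 0x7898880f7, 0x6798980f9, 0x6898980f7,
  0x888898067, 0x799898099, 0x8898980a7, 0x789998037, 0x789898097, 0x8789880a9, 0x689898057,
  0x988888067, 0x888888069, 0x898888059, 0x889888037, 0x888888039, 0x9888880c7, 0x8888880c9,
  0x889888099], [0x788888157, 0x788898079, 0x8888880d9, 0x6998980d7, 0x689998077, 0x6898980d9,
  0x7889880d9, 0x778a88079, 0x7789880d7, 0x7888880d7, 0x778988077, 0x888888159, 0x7998980d9,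
  0x789998079, 0x7898980d7, 0x8889880d7, 0x878a88077, 0x8789880d9, 0x878988079, 0x8898980b9,
  0x8789880b7, 0x988888079, 0x888888077], [0x8788881a7, 0x8788880b9, 0x8888980ea, 0x7898980b9,
  0x9789880e7, 0x8799880b7, 0x8789880e9, 0x7798980e9, 0x67a8980b9, 0x6798980e7, 0x6798980b7,
  0x8788980e7, 0x7798980b7, 0x8888881a9, 0x8888880b7, 0x8988980e7, 0x9889880e9, 0x8899880b9,
  0x8889880e7, 0x7898980e7, 0x68a8980b7, 0x6898980e9, 0x6898980b9, 0x689898077, 0x898888079,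
  0x9888880e9, 0x8888880e7, 0x8898880b9], [0x7888881d6, 0x7888980f6, 0x778988177, 0x7788881d9,
  0x7788980f9, 0x778888179, 0x8788880f6, 0x7788880f9, 0x7988881d9, 0x7988980f9, 0x788988179,
  0x8888881da, 0x878988179, 0x8788881d7, 0x878888177, 0x9788880f9, 0x8988881d7, 0x888988177,
  0x8788881b9, 0x8888881b7, 0x9888880f7, 0x8888880f9], [0x788888157, 0x788898079, 0x8888880d9,
  0x6998980d7, 0x689998077, 0x6898980d9, 0x7889880d9, 0x778a88079, 0x7789880d7, 0x7888880d7,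
  0x778988077, 0x789888159, 0x789898077, 0x69a8980d9, 0x68a998079, 0x68a8980d7, 0x7899880d7,
  0x779a88077, 0x7799880d9, 0x7898880d9, 0x779988079, 0x7998980d9, 0x8898980e7, 0x789998079,
  0x7898980d7, 0x8789880e9, 0x889888079, 0x888888077], [0x8898980f9, 0x8789880f7], [0x8788881ea,
  0x8788880fa, 0x7798881ba, 0x7788881e7, 0x7788880f7, 0x7788881b7, 0x7888980fa, 0x8789880f7,
  0x7788980f7, 0x8798881e7, 0x8798880f7, 0x77a8881b7, 0x7798881e9, 0x7798880f9, 0x8888881e6,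
  0x8888880f7, 0x7898881b6, 0x7888881e9, 0x7888881b9, 0x7988980f7, 0x8889880f9, 0x8898881e9,
  0x8898880f9, 0x78a8881b9, 0x7898881e7, 0x788888177, 0x789888179, 0x7998980f9, 0x7898980f7],
  [0x8788881f6, 0x7788881f9, 0x8798881f9, 0x7798881f7, 0x8888881fa, 0x7888881f7, 0x8898881f7,
  0x7898881f9], [0x8788881a7, 0x8788880b9, 0x8888980ea, 0x7898980b9, 0x9789880e7, 0x8799880b7,
  0x8789880e9, 0x7798980e9, 0x67a8980b9, 0x6798980e7, 0x6798980b7, 0x8788980e7, 0x7798980b7,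
  0x8789881a9, 0x8789880b7, 0x8889980e7, 0x978a880e9, 0x879a880b9, 0x878a880e7, 0x7799980e7,
  0x67a9980b7, 0x6799980e9, 0x6799980b9, 0x8789980e9, 0x7799980b9, 0x6898980d9, 0x9888880e9,
  0x8888880e7, 0x8988880d7, 0x8898880b9, 0x8888880b7], [0x7888881d6, 0x7888980f6, 0x778988176,
  0x8789880fa, 0x7788881d9, 0x7788980f9, 0x778888179, 0x8788880f6, 0x7788880f9, 0x6898980f9,
  0x7889881d9, 0x7889980f9, 0x778a88179, 0x7789881d7, 0x7789980f7, 0x7789880f7, 0x8888881da,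
  0x87898817a, 0x9789880f7, 0x8788881d7, 0x878888177, 0x9788880f9, 0x7898980f7, 0x8889881d7,
  0x878a88177, 0x8789881d9, 0x8788881b9, 0x8789881b7, 0x9888880f7, 0x8888880f9], [0x6898980f9,
  0x8988880f7], [0x7888881f9, 0x8888881f7], [0x7888881d6, 0x7888980f6, 0x778988176, 0x8789880fb,
  0x7788881d9, 0x7788980f9, 0x778888179, 0x8788880f6, 0x7788880f9, 0x6898980f9, 0x7889881d9,
  0x7889980f9, 0x778a88179, 0x878a880f7, 0x7789881d7, 0x7789980f7, 0x7789880f7, 0x7898881da,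
  0x7898980f9, 0x77998817a, 0x8799880f7, 0x7798881d7, 0x779888177, 0x8798880f9, 0x7798880f7,
  0x68a8980f7, 0x7899881d7, 0x7899980f7, 0x779a88177, 0x7799881d9, 0x7799880f9, 0x8788881e7,
  0x8789881e9, 0x8898880f7, 0x8888880f9], [0x8788881f9, 0x8789881f7], [0x7888881f6, 0x7788881f9,
  0x7889881f9, 0x7789881f7, 0x7898881fa, 0x7798881f7, 0x7899881f7, 0x7799881f9], [], [0x7699890f6,
  0x76a9890f9, 0x7799890fb, 0x77a9890f7, 0x6699890f9, 0x66a9890f7, 0x6799890f7, 0x67a9890f9,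
  0x7689890f9, 0x7789890f7, 0x7788880f7, 0x7798880f9, 0x7888880f9, 0x7898880f6, 0x6798880f7,
  0x7798890f7, 0x6898880f9, 0x7788890f9, 0x8888890c7, 0x879989069, 0x77a989039, 0x789989057,
  0x779989067, 0x878989067, 0x779989037, 0x689888059, 0x8689890a7, 0x8898880a9, 0x888888069,
  0x799888097, 0x789888099, 0x789988039], [0x788888257, 0x788888077, 0x7898890d7, 0x6998880d9,
  0x689988079, 0x6898880d7, 0x7789890d7, 0x768a89077, 0x7689890d9, 0x768989079, 0x7888890d9,
  0x778989079, 0x888888259, 0x8898890d9, 0x7998880d7, 0x789988077, 0x7898880d9, 0x8789890d9,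
  0x868a89079, 0x8689890d7, 0x868989077, 0x8689890b9, 0x8898880b7], [0x8788882a7, 0x8788890e9,
  0x8888880e6, 0x7898880b7, 0x8699890e9, 0x76a9890b9, 0x7699890e7, 0x8689890e7, 0x7699890b7,
  0x7798880e7, 0x67a8880b7, 0x6798880e9, 0x6798880b9, 0x8788880e9, 0x7798880b9, 0x8888882a9,
  0x8988880e9, 0x8799890e7, 0x77a9890b7, 0x7799890e9, 0x8789890e9, 0x7799890b9, 0x7898880e9,
  0x68a8880b9, 0x6898880e7, 0x6898880b7, 0x789989077, 0x689888079], [0x7888882d6, 0x7888880fa,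
  0x778988277, 0x7788882d9, 0x7788880f7, 0x778888279, 0x7798890f9, 0x7988882d9, 0x7988880f7,
  0x788988279, 0x7788890f7, 0x8888882da, 0x878988279, 0x8788882d7, 0x878888277, 0x8798890f7,
  0x8988882d7, 0x888988277, 0x8788882b9, 0x8689890f9, 0x8888882b7, 0x8789890f7], [0x788888257,
  0x788888077, 0x7898890d6, 0x779989077, 0x6998880d9, 0x689988079, 0x6898880d7, 0x7789890d7,
  0x768a89077, 0x7689890d9, 0x768989079, 0x7888890d9, 0x778989079, 0x789888259, 0x789888079,
  0x78a8890d9, 0x69a8880d7, 0x68a988077, 0x68a8880d9, 0x7799890d9, 0x769a89079, 0x7699890d7,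
  0x769989077, 0x8689890e7, 0x8898880e9, 0x7998880d7, 0x7898880d9, 0x789988077], [0x8689890f9,
  0x8898880f7], [0x8788882ea, 0x7798882ba, 0x7798890f6, 0x7788882e7, 0x7788882b7, 0x7788890f9,
  0x7888880f6, 0x7788880f9, 0x8798882e7, 0x77a8882b7, 0x77a8890f9, 0x7798882e9, 0x8888882e6,
  0x7898882b6, 0x7888882e9, 0x7888882b9, 0x7988880f9, 0x8898882e9, 0x78a8882b9, 0x7898882e7,
  0x788888277, 0x789888279, 0x7998880f7, 0x7898880f9], [0x8788882f6, 0x7788882f9, 0x8798882f9,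
  0x7798882f7, 0x8888882fa, 0x7888882f7, 0x8898882f7, 0x7898882f9], [0x8788882a7, 0x8788890e9,
  0x8888880e6, 0x7898880b7, 0x8699890e9, 0x76a9890b9, 0x7699890e7, 0x8689890e7, 0x7699890b7,
  0x7798880e7, 0x67a8880b7, 0x6798880e9, 0x6798880b9, 0x8788880e9, 0x7798880b9, 0x8789882a9,
  0x8889880e9, 0x869a890e7, 0x76aa890b7, 0x769a890e9, 0x868a890e9, 0x769a890b9, 0x7799880e9,
  0x67a9880b9, 0x6799880e7, 0x6799880b7, 0x8789880e7, 0x7799880b7, 0x8799890e7, 0x77a9890b7,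
  0x7899890d9, 0x7799890e9, 0x7799890b9, 0x6898880d7], [0x7888882d6, 0x7888880fa, 0x778988276,
  0x7788882d9, 0x7788880f7, 0x778888279, 0x7798890f9, 0x6898880f7, 0x7788890f7, 0x7889882d9,
  0x7889880f7, 0x778a88279, 0x7789882d7, 0x7789880f9, 0x8888882da, 0x87898827a, 0x8788882d7,
  0x878888277, 0x8798890f7, 0x7898880f9, 0x8889882d7, 0x878a88277, 0x8789882d9, 0x8788882b9,
  0x8689890f9, 0x8789882b7, 0x868a890f7, 0x8799890f9, 0x7799890f7], [0x7899890f9, 0x6898880f7],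
  [0x7888882f9, 0x8888882f7], [0x7888882d6, 0x7888880fa, 0x778988276, 0x7788882d9, 0x7788880f7,
  0x778888279, 0x7798890fa, 0x6898880f7, 0x7788890f7, 0x7889882d9, 0x7889880f7, 0x778a88279,
  0x7789882d7, 0x7789880f9, 0x7898882da, 0x7898880f7, 0x77998827a, 0x7798882d7, 0x779888277,
  0x77a8890f7, 0x68a8880f9, 0x7899882d7, 0x7899880f9, 0x779a88277, 0x7799882d9, 0x8788882e7,
  0x8789882e9, 0x77a9890f9, 0x7799890f7], [0x8788882f9, 0x8789882f7], [0x7888882f6, 0x7788882f9,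
  0x7889882f9, 0x7789882f7, 0x7898882fa, 0x7798882f7, 0x7899882f7, 0x7799882f9], [], [0x7788982f9,
  0x7798982f7, 0x7888982f7, 0x7898982fa, 0x8788882fa, 0x8798882f7, 0x8888882f6, 0x8898882f9,
  0x7788882f6, 0x7798882f9, 0x7888882f9, 0x7898882f7, 0x7699891fa, 0x76a9891f7, 0x7799891f5,
  0x77a9891f9, 0x6699891f7, 0x66a9891f9, 0x6799891f9, 0x67a9891f7, 0x7689891f7, 0x7789891f9,
  0x7788881f9, 0x7798881f7, 0x7888881f7, 0x7898881fa, 0x6798982f9, 0x6798881f9, 0x7798891f9,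
  0x6898982f7, 0x6898881f7, 0x7788891f7, 0x888898267, 0x799898077, 0x7998980e9, 0x7898980e7,
  0x77a999079, 0x779999077, 0x68a898077, 0x789898079, 0x8789990e7, 0x8689990e9, 0x8888990e9,
  0x799898299, 0x7998980b9, 0x7998990d7, 0x7a98980d9, 0x78a9990d7, 0x68a9990d9, 0x7899990d9,
  0x69a8980d9, 0x7998980d6, 0x8898982a7, 0x8998980e7, 0x79a8980b7, 0x87a9990e9, 0x77b9990b9,
  0x77a9990e7, 0x8799990e7, 0x77a9990b6, 0x78a8980e7, 0x68b8980b7, 0x68a8980e9, 0x68a8980b9,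
  0x8898980e9, 0x78a8980b9, 0x789998237, 0x789999077, 0x799998079, 0x77aa99077, 0x67aa99079,
  0x779a99079, 0x68a998079, 0x789998077, 0x789898297, 0x7898980b7, 0x7898990d9, 0x77a9990d9,
  0x67a9990d7, 0x7799990d7, 0x68a8980d7, 0x7898980d9, 0x7699990b9, 0x8789882a9, 0x8789890e9,
  0x8889880e9, 0x7899880b9, 0x869a890e7, 0x76aa890b7, 0x769a890e9, 0x769a890b9, 0x7799880e9,
  0x67a9880b9, 0x6799880e7, 0x6799880b7, 0x8789880e7, 0x7799880b7, 0x689898257, 0x68a8990d7,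
  0x67a999077, 0x6799990d7, 0x669a99077, 0x6699990d9, 0x669999079, 0x6898990d9, 0x679999079,
  0x988888267, 0x9898890e7, 0x8998880e9, 0x8898880e7, 0x879989079, 0x789888077, 0x9789890e6,
  0x9888890e9, 0x888888269, 0x799888079, 0x8898890e9, 0x7998880e7, 0x7898880e9, 0x8888890e7,
  0x898888259, 0x8998890d9, 0x889989079, 0x7a98880d7, 0x799988077, 0x7998880da, 0x8889890d9,
  0x878a89079, 0x8789890d7, 0x878989076, 0x8988890d7, 0x888989077, 0x889888237, 0x889889077,
  0x88a8890b7, 0x79a8880b9, 0x78a8880b7, 0x8799890b6, 0x8898890ba, 0x888888239, 0x888889079,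
  0x7998880b7, 0x7898880b9, 0x888888079, 0x8789890b9, 0x8689890b7, 0x8888890b7, 0x9888882c7,
  0x9888880e9, 0x9799890e9, 0x8899880e7, 0x968a890e9, 0x8888882c9, 0x8888880e7, 0x8799890e7,
  0x7899880e9, 0x7799890d9, 0x6898880d7, 0x889888299, 0x8898880b9, 0x8898890d7, 0x87a9890b9,
  0x78a9880b7, 0x869a890b9, 0x8888891c9, 0x879989167, 0x77a989137, 0x789989159, 0x779989169,
  0x878989169, 0x779989139, 0x689888157, 0x8689891a9, 0x8898881a7, 0x888888167, 0x799888199,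
  0x789888197, 0x789988137], [0x788888357, 0x788898279, 0x788888179, 0x8888882d9, 0x8888880f7,
  0x7898891d9, 0x7898990f9, 0x6998982d7, 0x6998881d7, 0x689998277, 0x689988177, 0x6898982d9,
  0x6898881d9, 0x67a9990f7, 0x7889882d9, 0x7889880f7, 0x778a88279, 0x7789882d7, 0x7789880f9,
  0x7888882d7, 0x7888880f9, 0x778988277, 0x7789891d9, 0x7789990f9, 0x768a89179, 0x868a890f7,
  0x7689891d7, 0x7689990f7, 0x768989177, 0x8689890fa, 0x6699990f9, 0x7888891d7, 0x7888990f7,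
  0x778989177, 0x7689890f7, 0x888888359, 0x8898891d7, 0x8898990f7, 0x7998982d9, 0x7998881d9,
  0x789998279, 0x789988179, 0x7898982d7, 0x7898881d7, 0x77a9990fa, 0x8889882d7, 0x878a88277,
  0x8789882d9, 0x878988279, 0x8789891d7, 0x868a89177, 0x8689891d9, 0x868989179, 0x9689890f7,
  0x7699990f7, 0x9789890f9, 0x7998980f7, 0x7898980f9, 0x8898982b9, 0x8998980f9, 0x87a9990f7,
  0x8799990f9, 0x78a8980f9, 0x68a8980f7, 0x8898980f7, 0x8789882b7, 0x988888279, 0x9898890f9,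
  0x8998880f7, 0x8898880f9, 0x9888890f7, 0x888888277, 0x8898890f7, 0x7998880f9, 0x7898880f7,
  0x8888890f9, 0x8689891b7, 0x8898881b9], [0x8788883a7, 0x8788882b9, 0x8788891e7, 0x8788890f7,
  0x8888982ea, 0x8888881ea, 0x8888880fa, 0x7898982b9, 0x7898881b9, 0x7898990f7, 0x9789882e7,
  0x8799882b7, 0x8799890fa, 0x8789882e9, 0x7899880f7, 0x8699891e7, 0x8699890f7, 0x76a9891b7,
  0x7699891e9, 0x7699890f9, 0x8689891e9, 0x8689890f9, 0x7699891b9, 0x769a890f7, 0x7798982e9,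
  0x7798881e9, 0x7798880f9, 0x67a8982b9, 0x67a8881b9, 0x67a8990f7, 0x6798982e7, 0x6798881e7,
  0x6798880f7, 0x6798982b7, 0x6798881b7, 0x6798990f9, 0x6799880f9, 0x8788982e7, 0x8788881e7,
  0x8788880f7, 0x7798982b7, 0x7798881b7, 0x7798990f9, 0x8888883a9, 0x8888882b7, 0x8888890f9,
  0x8988982e7, 0x8988881e7, 0x8988880f7, 0x9889882e9, 0x8899882b9, 0x8899890f7, 0x8889882e7,
  0x7999880f9, 0x8799891e9, 0x77a9891b9, 0x7799891e7, 0x8789891e7, 0x8789890f6, 0x7799891b7,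
  0x779a890f9, 0x7898982e7, 0x7898881e7, 0x7898880f7, 0x68a8982b7, 0x68a8881b7, 0x6898982e9,
  0x6898881e9, 0x6898982b9, 0x6898881b9, 0x6899880f7, 0x7a98980f9, 0x78a9990f7, 0x7899990f9,
  0x69a8980f9, 0x7998980f6, 0x77a9990f9, 0x7799990f7, 0x68a8980f7, 0x7898980f9, 0x689898277,
  0x898888279, 0x8998890f9, 0x7a98880f7, 0x7998880fa, 0x8889890f9, 0x8988890f7, 0x9888882e9,
  0x8888882e7, 0x8898882b9, 0x8898890f7, 0x789989179, 0x689888177], [0x7888883d6, 0x7888982f6,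
  0x7888881f6, 0x778988377, 0x7788883d9, 0x7788982f9, 0x7788881f9, 0x778888379, 0x8788882f6,
  0x7798891f7, 0x7788882f9, 0x7988883d9, 0x7988982f9, 0x7988881f9, 0x788988379, 0x7788891f9,
  0x8888883da, 0x878988379, 0x8788883d7, 0x878888377, 0x9788882f9, 0x8798891f9, 0x8988883d7,
  0x888988377, 0x8788883b9, 0x8689891f7, 0x8888883b7, 0x8789891f9, 0x9888882f7, 0x8888882f9],
  [0x788888357, 0x788898279, 0x788888179, 0x8888882d9, 0x8888880f7, 0x7898891da, 0x7898990fa,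
  0x779989179, 0x6998982d7, 0x6998881d7, 0x689998277, 0x689988177, 0x7899880f9, 0x6898982d9,
  0x6898881d9, 0x67a9990f7, 0x7889882d9, 0x7889880f7, 0x778a88279, 0x7789882d7, 0x7789880f9,
  0x7888882d7, 0x7888880f9, 0x778988277, 0x7789891d9, 0x7789990f9, 0x768a89179, 0x868a890f7,
  0x7689891d7, 0x7689990f7, 0x768989177, 0x8689890fa, 0x6699990f9, 0x7888891d7, 0x7888990f7,
  0x778989177, 0x7689890f7, 0x789888359, 0x789898277, 0x789888177, 0x78a8891d7, 0x78a8990f7,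
  0x69a8982d9, 0x69a8881d9, 0x68a998279, 0x68a988179, 0x68a8982d7, 0x68a8881d7, 0x67b9990f9,
  0x7899882d7, 0x779a88277, 0x7799882d9, 0x7898882d9, 0x7898880f6, 0x779988279, 0x7799891d7,
  0x7799990f7, 0x769a89177, 0x7699891d9, 0x769989179, 0x8699890f7, 0x66a9990f7, 0x7699890f9,
  0x7998982d9, 0x7998980f7, 0x8898982e7, 0x79a8980f9, 0x77b9990f7, 0x77a9990fa, 0x68b8980f9,
  0x68a8980f7, 0x78a8980f7, 0x789998279, 0x7898982d7, 0x7898980f9, 0x8789882e9, 0x889888279,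
  0x88a8890f9, 0x79a8880f7, 0x78a8880f9, 0x8898890f6, 0x888888277, 0x7998880f9, 0x8888890f9,
  0x8689891e9, 0x8898881e7, 0x7998881d9, 0x7898881d7, 0x789988179], [0x8898982f9, 0x8789882f7,
  0x8689891f7, 0x8898881f9], [0x8788883ea, 0x8788882fa, 0x7798883ba, 0x7798891fa, 0x7788883e7,
  0x7788882f7, 0x7788883b7, 0x7788891f7, 0x7888982fa, 0x7888881fa, 0x8789882f7, 0x7788982f7,
  0x7788881f7, 0x8798883e7, 0x8798882f7, 0x77a8883b7, 0x77a8891f7, 0x7798883e9, 0x7798882f9,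
  0x8888883e6, 0x8888882f7, 0x7898883b6, 0x7888883e9, 0x7888883b9, 0x7988982f7, 0x7988881f7,
  0x8889882f9, 0x8898883e9, 0x8898882f9, 0x78a8883b9, 0x7898883e7, 0x788888377, 0x789888379,
  0x7998982f9, 0x7898982f7, 0x7998881f9, 0x7898881f7], [0x8788883f6, 0x7788883f9, 0x8798883f9,
  0x7798883f7, 0x8888883fa, 0x7888883f7, 0x8898883f7, 0x7898883f9], [0x8788883a7, 0x8788882b9,
  0x8788891e7, 0x8788890f7, 0x8888982ea, 0x8888881ea, 0x8888880fa, 0x7898982b9, 0x7898881b9,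
  0x7898990f7, 0x9789882e7, 0x8799882b7, 0x8799890fa, 0x8789882e9, 0x7899880f7, 0x8699891e7,
  0x8699890f7, 0x76a9891b7, 0x7699891e9, 0x7699890f9, 0x67a9990f9, 0x8689891e9, 0x8689890f9,
  0x7699891b9, 0x769a890f6, 0x7798982e9, 0x7798881e9, 0x7798880f9, 0x67a8982b9, 0x67a8881b9,
  0x67a8990f7, 0x6798982e7, 0x6798881e7, 0x6798880f7, 0x6798982b7, 0x6798881b7, 0x6798990f9,
  0x6799880fa, 0x8788982e7, 0x8788881e7, 0x8788880f7, 0x7798982b7, 0x7798881b7, 0x7798990f9,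
  0x8789883a9, 0x8789882b7, 0x8789890f7, 0x8889982e7, 0x8889881e7, 0x8889880f7, 0x978a882e9,
  0x879a882b9, 0x879a890f7, 0x878a882e7, 0x789a880f9, 0x869a891e9, 0x869a890f9, 0x76aa891b9,
  0x769a891e7, 0x868a891e7, 0x868a890f7, 0x769a891b7, 0x769b890f9, 0x7799982e7, 0x7799881e7,
  0x7799880f7, 0x67a9982b7, 0x67a9881b7, 0x6799982e9, 0x6799881e9, 0x6799982b9, 0x6799881b9,
  0x679a880f7, 0x8789982e9, 0x8789881e9, 0x8789880f9, 0x7799982b9, 0x7799881b9, 0x7799990f6,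
  0x7998980f7, 0x77a9990f9, 0x68a8980f7, 0x7898980f9, 0x7999980f9, 0x77aa990f7, 0x779a990f9,
  0x68a9980f9, 0x7899980f7, 0x6898982d9, 0x9888882e9, 0x7898880f7, 0x8888882e7, 0x7998880f9,
  0x8988882d7, 0x8899890f9, 0x7999880f7, 0x878a890f9, 0x8889890f7, 0x8898882b9, 0x8898890f7,
  0x8888882b7, 0x8888890f9, 0x8799891e9, 0x77a9891b9, 0x7899891d7, 0x7799891e7, 0x7799891b7,
  0x6898881d9], [0x7888883d6, 0x7888982f6, 0x7888881f6, 0x778988376, 0x8789882fa, 0x7788883d9,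
  0x7788982f9, 0x7788881f9, 0x778888379, 0x8788882f6, 0x7798891f7, 0x7788882f9, 0x6898982f9,
  0x6898881f9, 0x7788891f9, 0x7889883d9, 0x7889982f9, 0x7889881f9, 0x778a88379, 0x7789883d7,
  0x7789982f7, 0x7789881f7, 0x7789882f7, 0x8888883da, 0x87898837a, 0x9789882f7, 0x8788883d7,
  0x878888377, 0x9788882f9, 0x8798891f9, 0x7898982f7, 0x7898881f7, 0x8889883d7, 0x878a88377,
  0x8789883d9, 0x8788883b9, 0x8689891f7, 0x8789883b7, 0x868a891f9, 0x9888882f7, 0x8888882f9,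
  0x8799891f7, 0x7799891f9], [0x6898982f9, 0x8988882f7, 0x7899891f7, 0x6898881f9], [0x7888883f9,
  0x8888883f7], [0x7888883d6, 0x7888982f6, 0x7888881f6, 0x778988376, 0x8789882fb, 0x7788883d9,
  0x7788982f9, 0x7788881f9, 0x778888379, 0x8788882f6, 0x7798891f6, 0x7788882f9, 0x6898982f9,
  0x6898881f9, 0x7788891f9, 0x7889883d9, 0x7889982f9, 0x7889881f9, 0x778a88379, 0x878a882f7,
  0x7789883d7, 0x7789982f7, 0x7789881f7, 0x7789882f7, 0x7898883da, 0x7898982f9, 0x7898881f9,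
  0x77998837a, 0x8799882f7, 0x7798883d7, 0x779888377, 0x8798882f9, 0x77a8891f9, 0x7798882f7,
  0x68a8982f7, 0x68a8881f7, 0x7899883d7, 0x7899982f7, 0x7899881f7, 0x779a88377, 0x7799883d9,
  0x7799882f9, 0x8788883e7, 0x8789883e9, 0x8898882f7, 0x8888882f9, 0x77a9891f7, 0x7799891f9],
  [0x8788883f9, 0x8789883f7], [0x7888883f6, 0x7788883f9, 0x7889883f9, 0x7789883f7, 0x7898883fa,
  0x7798883f7, 0x7899883f7, 0x7799883f9], []]

section OrbifoldTables

set_option maxRecDepth 100000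

/-- The raw table of the Koszul differential perturbed by `deformationTable`. -/
def koszulTable : List (List ℕ) := addKoszul deformationTable

lemma twistBound_shiftTable : TwistBound twist 12 4 shiftTable :=
  twistBound_iff.2 (by decide +kernel)

lemma twistBound_koszulTable : TwistBound twist 2 4 koszulTable :=
  twistBound_iff.2 (by decide +kernel)

lemma mul_load_comm : Table.mul (.load twist 0 4 shiftTable) (.load twist 0 4 koszulTable) =
    .mul (.load twist 1 4 koszulTable) (.load twist 0 4 shiftTable) := by
  decide +kernel

lemma pow_add_mul_load : Table.add (.twistedPow twist 4 shiftTable 12)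
    (.mul (.load twist 0 24 koszulTable) (.load twist 0 24 koszulTable)) = .one 48 := by
  decide +kernel

end OrbifoldTables

section OrbifoldResolution

open Finsupp

/-- The map with table `T` raises the exterior degree by at least `d`. -/
def RaisesDegree (d : ℕ) (T : List (List ℕ)) : Prop :=
  ∀ I, ∀ n ∈ T.getD (mask I) [], I.card + d ≤ (monomial (n / 16)).card

namespace LatticeCoordinates

variable {G : Type*} [Group G] (L : LatticeCoordinates G 6) (γ : G) {T : List (List ℕ)}

lemma rawEnd_mem_degreeGE {d r : ℕ} (hT : RaisesDegree d T)
    {v : Finset (Fin 6) →₀ MonoidAlgebra ℤ G} (hv : v ∈ degreeGE r) :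
    L.rawEnd γ T v ∈ degreeGE (r + d) := by
  refine map_mem_degreeGE (T := (L.rawEnd γ T).restrictScalars ℤ) (fun I hI a => ?_) hv
  rw [LinearMap.restrictScalars_apply, rawEnd_single, List.smul_sum, List.map_map]
  refine list_sum_mem (List.forall_mem_map.2 fun n hn => ?_)
  have := hT I n hn
  rw [Function.comp_apply, rawTerm, smul_comm, Finsupp.smul_single]
  exact zsmul_mem (single_mem_degreeGE (by lia) _) _

lemma evenProj_rawEnd_single {I : Finset (Fin 6)} {p : Prop} [Decidable p]
    (hI : ∀ n ∈ T.getD (mask I) [], Even (monomial (n / 16)).card ↔ p) (a : MonoidAlgebra ℤ G) :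
    evenProj _ _ (L.rawEnd γ T (single I a)) = if p then L.rawEnd γ T (single I a) else 0 := by
  have evenProj_row : (T.getD (mask I) []).map (evenProj _ _ ∘ L.rawTerm γ) =
      (T.getD (mask I) []).map fun n => if p then L.rawTerm γ n else 0 := by
    refine List.map_congr_left fun n hn => ?_
    rw [Function.comp_apply, rawTerm, map_zsmul, degreeProj_single, if_congr (hI n hn) rfl rfl]
    split_ifs <;> simp
  rw [rawEnd_single, map_smul, map_list_sum, List.map_map, evenProj_row]
  split_ifs <;> simp

lemma commute_evenProj_rawEnd
    (hT : ∀ I, ∀ n ∈ T.getD (mask I) [], Even (monomial (n / 16)).card ↔ Even I.card) :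
    Commute (evenProj _ _) (L.rawEnd γ T) := by
  ext1 I
  ext1
  simp only [LinearMap.comp_apply, lsingle_apply, Module.End.mul_apply,
    L.evenProj_rawEnd_single γ (hT I), degreeProj_single]
  split_ifs <;> simp

lemma evenProj_mul_rawEnd
    (hT : ∀ I, ∀ n ∈ T.getD (mask I) [], Even (monomial (n / 16)).card ↔ ¬ Even I.card) :
    evenProj _ _ * L.rawEnd γ T = L.rawEnd γ T * (1 - evenProj _ _) := by
  ext1 I
  ext1
  simp only [LinearMap.comp_apply, lsingle_apply, Module.End.mul_apply, LinearMap.sub_apply,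
    Module.End.one_apply, L.evenProj_rawEnd_single γ (hT I), degreeProj_single]
  split_ifs <;> simp

end LatticeCoordinates

lemma LatticeExtension.bottom_rawEnd {G Q : Type*} [Group G] [Group Q] (L : LatticeExtension G Q 6)
    (γ : G) {T : List (List ℕ)} (hT : RaisesDegree 0 T) (hT₀ : T.getD 0 [] = [0x888888009])
    (hγ : ∀ q, Commute q (L.π γ)) (v : Finset (Fin 6) →₀ MonoidAlgebra ℤ G) :
    L.bottom (L.rawEnd γ T v) = .single (L.π γ) 1 * L.bottom v := by
  induction v using Finsupp.induction_linear with
  | zero => simp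
  | add v w hv hw => rw [map_add, map_add, map_add, mul_add, hv, hw]
  | single I a =>
    by_cases hI : I = ∅
    · subst hI
      refine LinearMap.congr_fun (f := L.bottom ∘ₗ (L.rawEnd γ T).restrictScalars ℤ ∘ₗ lsingle ∅)
        (g := LinearMap.mulLeft ℤ (MonoidAlgebra.single (L.π γ) 1) ∘ₗ L.bottom ∘ₗ lsingle ∅)
        (groupRing_hom_ext fun δ => ?_) a
      have rawTerm_eq : L.rawTerm γ 0x888888009 = Finsupp.single ∅ (.single γ 1) := by
        have decode : monomial (0x888888009 / 16) = ∅ ∧ rawExponent 0x888888009 = 0 ∧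
          rawCoeff 0x888888009 = 1 := by decide +kernel
        rw [LatticeCoordinates.rawTerm, decode.1, decode.2.1, decode.2.2,
          LatticeCoordinates.x_zero, mul_one, one_smul]
      have mask_empty : mask ∅ = 0 := rfl
      simp [LatticeCoordinates.rawEnd_single, mask_empty, hT₀, rawTerm_eq, L.bottom_single_empty,
        -List.getD_eq_getElem?_getD, (hγ (L.π δ)).eq]
    · have mem := single_mem_degreeGE (Finset.one_le_card.2 (Finset.nonempty_iff_ne_empty.2 hI)) a
      rw [L.bottom_eq_zero mem, L.bottom_eq_zero (L.rawEnd_mem_degreeGE γ hT mem), mul_zero]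

lemma raisesDegree_deformationTable : RaisesDegree 1 deformationTable := by
  unfold RaisesDegree
  decide +kernel

lemma raisesDegree_shiftTable : RaisesDegree 0 shiftTable := by
  unfold RaisesDegree
  decide +kernel

lemma even_card_of_mem_shiftTable : ∀ I, ∀ n ∈ shiftTable.getD (mask I) [],
    Even (monomial (n / 16)).card ↔ Even I.card := by
  decide +kernel

lemma even_card_of_mem_koszulTable : ∀ I, ∀ n ∈ koszulTable.getD (mask I) [],
    Even (monomial (n / 16)).card ↔ ¬ Even I.card := by
  decide +kernel

lemma commute_rawEnd_koszulTable :
    Commute (orbifoldExtension.rawEnd generator shiftTable)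
      (orbifoldExtension.rawEnd 1 koszulTable) := by
  have shift := LatticeCoordinates.represents_load x_mul_generator (j := 0) (o := 4) 1
    (by norm_num) (twistBound_shiftTable 0 (by norm_num))
  have koszul (j : ℕ) (hj : j < 2) := LatticeCoordinates.represents_load x_mul_generator (j := j)
    (o := 4) 0 (by norm_num) (twistBound_koszulTable j hj)
  have mul₁ := shift.mul (by norm_num) (koszul 0 (by norm_num))
  have mul₂ := (koszul 1 (by norm_num)).mul (by norm_num) shift
  rw [mul_load_comm] at mul₁
  simpa [commute_iff_eq] using mul₂.unique mul₁

lemma rawEnd_shiftTable_pow : orbifoldExtension.rawEnd generator shiftTable ^ 12 =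
    1 - orbifoldExtension.rawEnd 1 koszulTable * orbifoldExtension.rawEnd 1 koszulTable := by
  have shift := (LatticeCoordinates.represents_twistedPow x_mul_generator (j := 12) (o := 4)
    (by norm_num) twistBound_shiftTable).congr_pow (q := 0) (by rw [generator_pow, pow_zero])
  have koszul := LatticeCoordinates.represents_load x_mul_generator (j := 0) (o := 24) 0
    (by norm_num) fun v hv n hn k => by
      have := twistBound_koszulTable 0 (by norm_num) v hv n hn k
      push_cast at this ⊢
      lia
  have sum := shift.add (koszul.mul (o₁ := 24) (by norm_num) koszul)
  rw [pow_add_mul_load] at sum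
  have pow_add : orbifoldExtension.rawEnd generator shiftTable ^ 12 +
      orbifoldExtension.rawEnd 1 koszulTable * orbifoldExtension.rawEnd 1 koszulTable = 1 := by
    simpa using sum.unique (LatticeCoordinates.represents_one 0 (by norm_num))
  exact LinearMap.ext fun v => eq_sub_of_add_eq (LinearMap.congr_fun pow_add v)

/-- The twisted Koszul operators given by the tables. -/
noncomputable def orbifoldKoszul : TwistedKoszul OrbifoldGroup (Multiplicative (ZMod 12)) 6 where
  toLatticeExtension := orbifoldExtension
  g := .ofAdd (-1)
  mem_zpowers q := ⟨-(q.toAdd.val : ℤ), by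
    change Multiplicative.ofAdd (-1) ^ (-(q.toAdd.val : ℤ)) = q
    rw [← ofAdd_zsmul]
    simp⟩
  s := orbifoldExtension.rawEnd generator shiftTable
  b := orbifoldExtension.rawEnd 1 koszulTable
  b_sub_koszul_mem hv := by
    rw [koszulTable, LatticeCoordinates.rawEnd_addKoszul, add_sub_cancel_left]
    exact LatticeCoordinates.rawEnd_mem_degreeGE _ _ raisesDegree_deformationTable hv
  s_mem hv := LatticeCoordinates.rawEnd_mem_degreeGE _ _ raisesDegree_shiftTable hv
  bottom_s := orbifoldExtension.bottom_rawEnd _ raisesDegree_shiftTable (by decide +kernel)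
    fun _ => Commute.all _ _
  commute_evenProj := LatticeCoordinates.commute_evenProj_rawEnd _ _ even_card_of_mem_shiftTable
  evenProj_mul_b := LatticeCoordinates.evenProj_mul_rawEnd _ _ even_card_of_mem_koszulTable
  commute_s_b := commute_rawEnd_koszulTable
  s_pow_card := by
    rw [Nat.card_eq_fintype_card, Fintype.card_multiplicative, ZMod.card]
    exact rawEnd_shiftTable_pow

end OrbifoldResolution

section Coinvariants

open Finsupp

variable {G : Type*} [Group G] {α ι : Type*}

/-- The projection of a free `ℤ[G]`-module onto its coinvariants. -/
noncomputable def augment : (α →₀ MonoidAlgebra ℤ G) →ₗ[ℤ] α →₀ ℤ :=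
  mapRange.linearMap (groupRingLift fun _ => 1)

lemma augment_single (i : α) (γ : G) : augment (single i (.single γ 1)) = single i 1 := by
  simp [augment]

lemma hom_ext_single_group {M : Type*} [AddCommGroup M]
    {f g : (α →₀ MonoidAlgebra ℤ G) →ₗ[ℤ] M}
    (h : ∀ i γ, f (single i (.single γ 1)) = g (single i (.single γ 1))) : f = g :=
  Finsupp.lhom_ext' fun i => groupRing_hom_ext (h i)

/-- The map induced by a `ℤ[G]`-linear endomorphism on coinvariants. -/
noncomputable def coinvariantsMap (T : Module.End (MonoidAlgebra ℤ G) (α →₀ MonoidAlgebra ℤ G)) :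
    Module.End ℤ (α →₀ ℤ) :=
  linearCombination ℤ fun i => augment (T (single i 1))

lemma augment_single_smul (γ : G) (v : α →₀ MonoidAlgebra ℤ G) :
    augment (MonoidAlgebra.single γ (1 : ℤ) • v) = augment v := by
  induction v using Finsupp.induction_linear with
  | zero => rw [smul_zero]
  | add v w hv hw => rw [smul_add, map_add, map_add, hv, hw]
  | single i a =>
    rw [Finsupp.smul_single, smul_eq_mul]
    induction a using MonoidAlgebra.induction_linear with
    | zero => rw [mul_zero]
    | add a b ha hb =>
      rw [mul_add, Finsupp.single_add, Finsupp.single_add, map_add, map_add, ha, hb]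
    | single δ c =>
      simp [augment]

lemma augment_apply (T : Module.End (MonoidAlgebra ℤ G) (α →₀ MonoidAlgebra ℤ G)) (v) :
    augment (T v) = coinvariantsMap T (augment v) := by
  refine LinearMap.congr_fun (f := augment ∘ₗ T.restrictScalars ℤ)
    (g := coinvariantsMap T ∘ₗ augment) (hom_ext_single_group fun i γ => ?_) v
  have single_eq : (single i (.single γ 1) : α →₀ MonoidAlgebra ℤ G) =
      MonoidAlgebra.single γ (1 : ℤ) • single i 1 := by simp
  simp only [LinearMap.comp_apply, LinearMap.restrictScalars_apply]
  rw [augment_single, single_eq, map_smul, augment_single_smul, coinvariantsMap,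
    linearCombination_single, one_smul]

lemma coinvariantsMap_eq_of_augment {T : Module.End (MonoidAlgebra ℤ G) (α →₀ MonoidAlgebra ℤ G)}
    {f : Module.End ℤ (α →₀ ℤ)} (h : ∀ v, augment (T v) = f (augment v)) :
    coinvariantsMap T = f := by
  ext1 i
  ext1
  have augment_one : augment (single i (1 : MonoidAlgebra ℤ G)) = single i 1 := augment_single i 1
  simp only [LinearMap.comp_apply, lsingle_apply]
  rw [← augment_one, ← augment_apply, h]

/-- Passage to coinvariants, as a ring homomorphism. -/
noncomputable def coinvariants :
    Module.End (MonoidAlgebra ℤ G) (α →₀ MonoidAlgebra ℤ G) →+* Module.End ℤ (α →₀ ℤ) where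
  toFun := coinvariantsMap
  map_one' := coinvariantsMap_eq_of_augment fun _ => rfl
  map_mul' S T := coinvariantsMap_eq_of_augment fun v => by
    rw [Module.End.mul_apply, Module.End.mul_apply, augment_apply, augment_apply]
  map_zero' := coinvariantsMap_eq_of_augment fun _ => map_zero _
  map_add' S T := coinvariantsMap_eq_of_augment fun v => by
    rw [LinearMap.add_apply, LinearMap.add_apply, map_add, augment_apply, augment_apply]

lemma augment_apply_eq_coinvariants (T : Module.End (MonoidAlgebra ℤ G) (α →₀ MonoidAlgebra ℤ G))
    (v) : augment (T v) = coinvariants T (augment v) :=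
  augment_apply T v

lemma coinvariants_eq_of_augment {T : Module.End (MonoidAlgebra ℤ G) (α →₀ MonoidAlgebra ℤ G)}
    {f : Module.End ℤ (α →₀ ℤ)} (h : ∀ v, augment (T v) = f (augment v)) : coinvariants T = f :=
  coinvariantsMap_eq_of_augment h

lemma coinvariants_degreeProj (p : ℕ → Prop) [DecidablePred p] :
    coinvariants (degreeProj (MonoidAlgebra ℤ G) ι p) = degreeProj ℤ ι p := by
  refine coinvariants_eq_of_augment fun v => ?_
  refine LinearMap.congr_fun
    (f := augment ∘ₗ (degreeProj (MonoidAlgebra ℤ G) ι p).restrictScalars ℤ)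
    (g := degreeProj ℤ ι p ∘ₗ augment) (hom_ext_single_group fun I γ => ?_) v
  simp only [LinearMap.comp_apply, LinearMap.restrictScalars_apply]
  rw [augment_single, degreeProj_single, degreeProj_single]
  split_ifs
  exacts [augment_single I γ, map_zero _]

lemma map_twistedDifferential {R S : Type*} [Ring R] [Ring S] (φ : R →+* S) (e s b : R) (q m : ℕ) :
    φ (twistedDifferential e s b q m) = twistedDifferential (φ e) (φ s) (φ b) q m := by
  have map_cyclicDifferential (m : ℕ) :
      φ (cyclicDifferential s q m) = cyclicDifferential (φ s) q m := by
    unfold cyclicDifferential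
    split_ifs <;> simp
  simp [twistedDifferential, map_cyclicDifferential]

end Coinvariants

section Boundary

open Finsupp

/-- Data diagonalising the cohomology of the functionals on `W` that are invariant under `P`, where
the coboundaries are composition with `D` and with `D'`. The values at `U j` are the coordinates of
a cocycle in `∏ j, ℤ/ord j`, dual to the cocycles `ψ j`, the functional `q j` shows that
`ord j • ψ j` is a coboundary, and the homotopy `(h, h')`, up to the factor `N`, shows that the
coordinates determine the cohomology class. -/
structure Splitting {W : Type*} [AddCommGroup W] (P D D' : Module.End ℤ W) {J : Type*} [Fintype J]
    [DecidableEq J] (ord : J → ℕ) where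
  U : J → W
  ψ : J → Module.Dual ℤ W
  q : J → Module.Dual ℤ W
  h : Module.End ℤ W
  h' : Module.End ℤ W
  N : ℤ
  N_ne_zero : N ≠ 0
  ord_dvd (j) (f : Module.Dual ℤ W) : (ord j : ℤ) ∣ f (D (U j))
  ψ_P_U (i j) : ψ i (P (U j)) = if i = j then 1 else 0
  ψ_D' (j v) : ψ j (D' v) = 0
  ord_mul_ψ (j v) : ord j * ψ j v = q j (D v)
  homotopy (v) : N • (P v - ∑ j, ψ j v • U j - h (D v)) = D' (h' v)

namespace Splitting

variable {W J : Type*} [AddCommGroup W] {P D D' : Module.End ℤ W} [Fintype J] [DecidableEq J]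
  {ord : J → ℕ} (S : Splitting P D D' ord)

/-- The coordinates of a functional in the cohomology group diagonalised by `S`. -/
noncomputable def coordinates : Module.Dual ℤ W →ₗ[ℤ] ∀ j, ZMod (ord j) :=
  LinearMap.pi fun j => (Int.castAddHom (ZMod (ord j))).toIntLinearMap ∘ₗ LinearMap.applyₗ (S.U j)

lemma coordinates_apply (f : Module.Dual ℤ W) (j : J) :
    S.coordinates f j = (f (S.U j) : ZMod (ord j)) := rfl

lemma coordinates_comp_D (f : Module.Dual ℤ W) : S.coordinates (f ∘ₗ D) = 0 := by
  ext j
  exact (ZMod.intCast_zmod_eq_zero_iff_dvd _ _).2 (S.ord_dvd j f)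

lemma exists_coordinates_comp_P_eq (a : ∀ j, ZMod (ord j)) :
    ∃ f : Module.Dual ℤ W, f ∘ₗ D' = 0 ∧ S.coordinates (f ∘ₗ P) = a := by
  choose y hy using fun j => ZMod.intCast_surjective (a j)
  refine ⟨∑ j, y j • S.ψ j, ?_, ?_⟩
  · ext v
    simp [S.ψ_D']
  · ext j
    simp [coordinates_apply, S.ψ_P_U, hy]

lemma exists_comp_D_eq {f : Module.Dual ℤ W} (hP : f ∘ₗ P = f) (hD' : f ∘ₗ D' = 0)
    (hf : S.coordinates f = 0) : ∃ g : Module.Dual ℤ W, g ∘ₗ D = f := by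
  have ord_dvd_f (j) : (ord j : ℤ) ∣ f (S.U j) :=
    (ZMod.intCast_zmod_eq_zero_iff_dvd _ _).1 (congrFun hf j)
  choose y hy using ord_dvd_f
  refine ⟨∑ j, y j • S.q j + f ∘ₗ S.h, LinearMap.ext fun v => ?_⟩
  have homotopy : f (P v - ∑ j, S.ψ j v • S.U j - S.h (D v)) = 0 := by
    have f_D' := LinearMap.congr_fun hD' (S.h' v)
    rw [LinearMap.comp_apply, ← S.homotopy, map_smul] at f_D'
    exact (smul_eq_zero.1 f_D').resolve_left S.N_ne_zero
  have f_v : f v = ∑ j, S.ψ j v * f (S.U j) + f (S.h (D v)) := by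
    rw [map_sub, map_sub, map_sum, ← LinearMap.comp_apply, hP] at homotopy
    simp only [map_smul, smul_eq_mul] at homotopy
    lia
  have q_D (j) : y j * S.q j (D v) = S.ψ j v * f (S.U j) := by
    rw [← S.ord_mul_ψ, hy]
    ring
  simp [f_v, q_D]

end Splitting

namespace TwistedKoszul

variable {G Q : Type} [Group G] [CommGroup Q] {n : ℕ} (K : TwistedKoszul G Q n)

/-- The differential from degree `m + 1` to degree `m` of the coinvariants of the resolution,
extended by zero to all exterior monomials. -/
noncomputable def boundary (m : ℕ) : Module.End ℤ (Finset (Fin n) →₀ ℤ) :=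
  degreeProj ℤ _ (· ≤ m) * coinvariants (K.X (m + 1)) * degreeProj ℤ _ (· ≤ m + 1)

/-- The extension by zero of a cochain to a functional on all exterior monomials. -/
noncomputable def extendByZero (n m : ℕ) :
    (Generators n m → ℤ) →ₗ[ℤ] Module.Dual ℤ (Finset (Fin n) →₀ ℤ) :=
  Fintype.linearCombination ℤ fun I : Generators n m => lapply I.1

lemma extendByZero_single {m : ℕ} (f : Generators n m → ℤ) (I : Finset (Fin n)) (a : ℤ) :
    extendByZero n m f (single I a) = if h : I.card ≤ m then a * f ⟨I, h⟩ else 0 := by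
  simp only [extendByZero, Fintype.linearCombination_apply, LinearMap.sum_apply,
    LinearMap.smul_apply, lapply_apply, smul_eq_mul]
  split_ifs with h
  · rw [Finset.sum_eq_single ⟨I, h⟩, single_eq_same, mul_comm]
    · intro J _ hJ
      rw [single_eq_of_ne fun hIJ => hJ (Subtype.ext hIJ), mul_zero]
    · simp
  · refine Finset.sum_eq_zero fun J _ => ?_
    rw [single_eq_of_ne (a := I) (a' := J.1) (by rintro rfl; exact h J.2), mul_zero]

lemma extendByZero_injective (n m : ℕ) : Function.Injective (extendByZero n m) := by
  intro f g h
  ext ⟨I, hI⟩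
  simpa [extendByZero_single, hI] using LinearMap.congr_fun h (single I 1)

lemma extendByZero_restrict {m : ℕ} (f : Module.Dual ℤ (Finset (Fin n) →₀ ℤ)) :
    extendByZero n m (fun I => f (single I 1)) = f ∘ₗ degreeProj ℤ _ (· ≤ m) := by
  ext I
  by_cases hI : I.card ≤ m <;> simp [extendByZero_single, degreeProj_single, hI]

lemma extendByZero_comp_degreeProj {m : ℕ} (f : Generators n m → ℤ) :
    extendByZero n m f ∘ₗ degreeProj ℤ _ (· ≤ m) = extendByZero n m f := by
  ext I
  by_cases hI : I.card ≤ m <;> simp [extendByZero_single, degreeProj_single, hI]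

lemma freeLift_truncate {m : ℕ} (f : Generators n m → ℤ) (v : Finset (Fin n) →₀ MonoidAlgebra ℤ G) :
    (Rep.freeLift (A := Rep.trivial ℤ G ℤ) ℤ G f).hom (truncate G n m v) =
      extendByZero n m f (augment v) := by
  refine LinearMap.congr_fun
    (f := (Rep.freeLift (A := Rep.trivial ℤ G ℤ) ℤ G f).hom.toLinearMap ∘ₗ
      (truncate G n m).restrictScalars ℤ)
    (g := extendByZero n m f ∘ₗ augment) (hom_ext_single_group fun I γ => ?_) v
  simp only [LinearMap.comp_apply, augment_single, extendByZero_single]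
  split_ifs with hI
  · simp [truncate_single hI]
  · have mem : Finsupp.single I (MonoidAlgebra.single γ (1 : ℤ)) ∈ degreeGE (m + 1) :=
      single_mem_degreeGE (by lia) _
    exact (congrArg _ (truncate_eq_zero.2 mem)).trans (map_zero _)

lemma degreeProj_eq_one {m : ℕ} (hm : n ≤ m) : degreeProj ℤ (Fin n) (· ≤ m) = 1 := by
  ext I : 2
  have card_le : I.card ≤ m := (card_finset_fin_le I).trans hm
  simp [degreeProj_single, card_le]

lemma boundary_add_two {m : ℕ} (hm : n ≤ m) : K.boundary (m + 2) = K.boundary m := by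
  have X_add_two : K.X (m + 3) = K.X (m + 1) := by
    simp [X, twistedDifferential, cyclicDifferential, Nat.even_add, parity_simps]
  rw [boundary, boundary, X_add_two, degreeProj_eq_one hm, degreeProj_eq_one (by lia : n ≤ m + 1),
    degreeProj_eq_one (by lia : n ≤ m + 2), degreeProj_eq_one (by lia : n ≤ m + 2 + 1)]

lemma nonempty_splitting_add {m : ℕ} (hm : n ≤ m) {J : Type} [Fintype J] [DecidableEq J]
    {ord : J → ℕ}
    (h : Nonempty (Splitting (degreeProj ℤ _ (· ≤ m + 1)) (K.boundary m) (K.boundary (m + 1)) ord))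
    (k : ℕ) : Nonempty (Splitting (degreeProj ℤ _ (· ≤ m + 2 * k + 1)) (K.boundary (m + 2 * k))
      (K.boundary (m + 2 * k + 1)) ord) := by
  induction k with
  | zero => exact h
  | succ k ih =>
    rw [degreeProj_eq_one (by lia)] at ih ⊢
    rwa [show m + 2 * (k + 1) = m + 2 * k + 2 by ring, boundary_add_two K (by lia),
      show m + 2 * k + 2 + 1 = m + 2 * k + 1 + 2 by ring, boundary_add_two K (by lia)]

lemma coinvariants_X (m : ℕ) : coinvariants (K.X m) =
    twistedDifferential (evenProj ℤ (Fin n)) (coinvariants K.s) (coinvariants K.b)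
      (Nat.card Q) m := by
  have map_X := map_twistedDifferential (coinvariants (G := G) (α := Finset (Fin n)))
    (evenProj _ _) K.s K.b (Nat.card Q) m
  rw [coinvariants_degreeProj] at map_X
  exact map_X

variable [Finite Q]

/-- The coboundary of the resolution, on functions on the exterior monomials. -/
noncomputable def coboundary (m : ℕ) (f : Generators n m → ℤ) : Generators n (m + 1) → ℤ :=
  K.resolution.coboundary m f

lemma coboundary_apply (m : ℕ) (f : Generators n m → ℤ) (I : Generators n (m + 1)) :
    K.coboundary m f I =
      (Rep.freeLift (A := Rep.trivial ℤ G ℤ) ℤ G f).hom (K.d m (Finsupp.single I 1)) :=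
  rfl

lemma extendByZero_coboundary (m : ℕ) (f : Generators n m → ℤ) :
    extendByZero n (m + 1) (K.coboundary m f) = extendByZero n m f ∘ₗ K.boundary m := by
  ext1 I
  ext1
  simp only [LinearMap.comp_apply, lsingle_apply, boundary, Module.End.mul_apply,
    degreeProj_single, extendByZero_single]
  rw [← LinearMap.comp_apply, extendByZero_comp_degreeProj]
  split_ifs with hI
  · rw [one_mul, coboundary_apply, ← augment_single I (1 : G), ← augment_apply_eq_coinvariants,
      ← freeLift_truncate, ← d_truncate, truncate_single hI, MonoidAlgebra.one_def]
  · rw [map_zero, map_zero]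

lemma coboundary_eq_iff (m : ℕ) (f : Generators n m → ℤ) (g : Generators n (m + 1) → ℤ) :
    K.coboundary m f = g ↔ extendByZero n m f ∘ₗ K.boundary m = extendByZero n (m + 1) g := by
  rw [← extendByZero_coboundary, (extendByZero_injective n _).eq_iff]

lemma coboundary_restrict_eq_iff (m : ℕ) (f : Module.Dual ℤ (Finset (Fin n) →₀ ℤ))
    (g : Generators n (m + 1) → ℤ) :
    K.coboundary m (fun I => f (Finsupp.single I 1)) = g ↔
      f ∘ₗ K.boundary m = extendByZero n (m + 1) g := by
  rw [coboundary_eq_iff, extendByZero_restrict, LinearMap.comp_assoc, boundary,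
    ← Module.End.mul_eq_comp, ← mul_assoc, ← mul_assoc, degreeProj_mul_self]

theorem nonempty_groupCohomology_addEquiv (m : ℕ) {J : Type} [Fintype J] [DecidableEq J]
    {ord : J → ℕ}
    (S : Splitting (degreeProj ℤ _ (· ≤ m + 1)) (K.boundary m) (K.boundary (m + 1)) ord) :
    Nonempty (groupCohomology (Rep.trivial ℤ G ℤ) (m + 1) ≃+ ∀ j, ZMod (ord j)) := by
  let φ : (Generators n (m + 1) → ℤ) →ₗ[ℤ] ∀ j, ZMod (ord j) :=
    S.coordinates ∘ₗ extendByZero n (m + 1)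
  have φ_coboundary (f : Generators n m → ℤ) : φ (K.coboundary m f) = 0 := by
    rw [LinearMap.comp_apply, extendByZero_coboundary, S.coordinates_comp_D]
  have exists_cocycle (a) :
      ∃ f : Generators n (m + 1) → ℤ, K.coboundary (m + 1) f = 0 ∧ φ f = a := by
    obtain ⟨f, hf, rfl⟩ := S.exists_coordinates_comp_P_eq a
    refine ⟨fun I => f (Finsupp.single I 1), ?_, ?_⟩
    · rw [coboundary_restrict_eq_iff, hf, map_zero]
    · rw [LinearMap.comp_apply, extendByZero_restrict]
  have exists_coboundary_eq (f : Generators n (m + 1) → ℤ) (hf : K.coboundary (m + 1) f = 0)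
      (hφ : φ f = 0) : ∃ g : Generators n m → ℤ, K.coboundary m g = f := by
    rw [coboundary_eq_iff, map_zero] at hf
    obtain ⟨g, hg⟩ := S.exists_comp_D_eq (extendByZero_comp_degreeProj f) hf hφ
    exact ⟨fun I => g (Finsupp.single I 1), (K.coboundary_restrict_eq_iff m g f).2 hg⟩
  exact K.resolution.nonempty_groupCohomology_addEquiv m φ φ_coboundary exists_cocycle
    exists_coboundary_eq

end TwistedKoszul

end Boundary

section IntegerTables

open Finsupp

namespace Table

/-- The endomorphism of a free abelian group on the exterior monomials with a given matrix. -/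
noncomputable def intEnd (T : Table) : Module.End ℤ (Finset (Fin 6) →₀ ℤ) :=
  toEnd (fun _ => 1) T

lemma intEnd_single (T : Table) (I : Finset (Fin 6)) (a : ℤ) :
    intEnd T (single I a) = a • Sparse.eval (term fun _ => 1) (T.getD (mask I) []) :=
  toEnd_single _ _ _ _

lemma intEnd_add (S T : Table) : intEnd (add S T) = intEnd S + intEnd T :=
  toEnd_add _ _ _

lemma intEnd_mul (S T : Table) : intEnd (mul S T) = intEnd T * intEnd S :=
  toEnd_mul fun _ _ _ _ _ _ _ _ => (mul_one 1).symm

/-- The multiple by `c` of the projection to the monomials whose degree satisfies `p`. -/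
def degree (c : ℤ) (p : ℕ → Prop) [DecidablePred p] : Table :=
  (List.range 64).map fun n => if p (monomial n).card then [(n, c)] else []

lemma intEnd_degree (c : ℤ) (p : ℕ → Prop) [DecidablePred p] :
    intEnd (degree c p) = c • degreeProj ℤ _ p := by
  ext1 I
  ext1
  simp only [LinearMap.comp_apply, lsingle_apply, LinearMap.smul_apply, intEnd_single, one_smul]
  rw [degree, getD_map_range, degreeProj_single, monomial_mask]
  split_ifs
  · simp [Sparse.eval_cons, Sparse.eval_nil, term, monomial_mask]
  · simp [Sparse.eval_nil]

/-- The multiple by `c` of the identity. -/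
def scalar (c : ℤ) : Table := degree c fun _ => True

lemma intEnd_scalar (c : ℤ) : intEnd (scalar c) = c • 1 := by
  rw [scalar, intEnd_degree]
  congr 1
  ext I : 2
  simp [degreeProj_single]

/-- The matrix of `1 + s + ⋯ + s ^ (q - 1)`, by Horner's rule. -/
def norm (T : Table) (q : ℕ) : Table :=
  forceTable T fun T => Nat.rec [] (fun _ ih => add (scalar 1) (mul T ih)) q

lemma intEnd_norm (T : Table) (q : ℕ) :
    intEnd (norm T q) = ∑ i ∈ Finset.range q, intEnd T ^ i := by
  rw [norm, forceTable_eq]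
  induction q with
  | zero =>
    ext
    simp [intEnd_single, Sparse.eval_nil]
  | succ q ih =>
    rw [intEnd_add, intEnd_mul, ih, intEnd_scalar, one_smul, Finset.sum_range_succ', pow_zero,
      Finset.sum_mul, add_comm]
    simp only [pow_succ]

/-- The matrix of `cyclicDifferential`. -/
def cyclic (T : Table) (q m : ℕ) : Table :=
  if Even m then norm T q else add T (scalar (-1))

lemma intEnd_cyclic (T : Table) (q m : ℕ) :
    intEnd (cyclic T q m) = cyclicDifferential (intEnd T) q m := by
  unfold cyclic cyclicDifferential
  split_ifs
  · exact intEnd_norm T q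
  · rw [intEnd_add, intEnd_scalar, neg_one_smul, sub_eq_add_neg]

/-- The matrix of `twistedDifferential`, for the grading by parity of the exterior degree. -/
def twisted (S B : Table) (q m : ℕ) : Table :=
  add B (add (mul (degree 1 Even) (cyclic S q m))
    (mul (add (degree 1 Even) (scalar (-1))) (cyclic S q (m + 1))))

lemma intEnd_twisted (S B : Table) (q m : ℕ) : intEnd (twisted S B q m) =
    twistedDifferential (evenProj ℤ (Fin 6)) (intEnd S) (intEnd B) q m := by
  simp only [twisted, twistedDifferential, intEnd_add, intEnd_mul, intEnd_degree, intEnd_scalar,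
    intEnd_cyclic, one_smul, neg_one_smul]
  rw [← sub_eq_add_neg, ← neg_sub 1, mul_neg, ← sub_eq_add_neg, add_sub_assoc]

/-- The matrix on coinvariants of the operator with raw matrix `T`. -/
def ofRaw (T : List (List ℕ)) : Table :=
  T.map fun v => .mergeAll <| v.map fun n => [(n / 16 % 64, rawCoeff n)]

end Table

lemma LatticeCoordinates.coinvariants_rawEnd {G : Type*} [Group G] (L : LatticeCoordinates G 6)
    (γ : G) (T : List (List ℕ)) : coinvariants (L.rawEnd γ T) = (Table.ofRaw T).intEnd := by
  ext1 I
  ext1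
  have getD_ofRaw : (Table.ofRaw T).getD (mask I) [] =
      .mergeAll ((T.getD (mask I) []).map fun n => [(n / 16 % 64, rawCoeff n)]) :=
    List.getD_map T [] _
  simp only [LinearMap.comp_apply, lsingle_apply, Table.intEnd_single, one_smul]
  rw [← augment_single I (1 : G), ← augment_apply_eq_coinvariants, rawEnd_single, getD_ofRaw,
    Sparse.eval_mergeAll, ← MonoidAlgebra.one_def, one_smul, map_list_sum, List.map_map,
    List.map_map]
  congr 1
  refine List.map_congr_left fun n _ => ?_
  simp [rawTerm, augment, Sparse.eval_cons, Sparse.eval_nil, Table.term, monomial_mod]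

/-- The matrix of the differential of the coinvariants, before truncation by exterior degree. -/
def differentialTable (m : ℕ) : Table :=
  .twisted (.ofRaw shiftTable) (.ofRaw koszulTable) 12 m

lemma differentialTable_add_two (m : ℕ) : differentialTable (m + 2) = differentialTable m := by
  have cyclic_add_two (T : Table) (m : ℕ) : T.cyclic 12 (m + 2) = T.cyclic 12 m :=
    if_congr (Nat.even_add.trans (by simp)) rfl rfl
  simp only [differentialTable, Table.twisted, Nat.add_right_comm m 2 1, cyclic_add_two]

lemma intEnd_differentialTable (m : ℕ) :
    (differentialTable m).intEnd = coinvariants (orbifoldKoszul.X m) := by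
  have card_eq : Nat.card (Multiplicative (ZMod 12)) = 12 := by
    rw [Nat.card_eq_fintype_card, Fintype.card_multiplicative, ZMod.card]
  rw [TwistedKoszul.coinvariants_X, card_eq, differentialTable, Table.intEnd_twisted]
  simp only [orbifoldKoszul, LatticeCoordinates.coinvariants_rawEnd]

/-- The matrix obtained from `T` by keeping the entries from degree at most `m + 1` to degree at
most `m`. -/
def Table.truncate (m : ℕ) (T : Table) : Table :=
  .mul (.mul (.degree 1 (· ≤ m + 1)) T) (.degree 1 (· ≤ m))

lemma intEnd_truncate_differentialTable (m : ℕ) :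
    ((differentialTable (m + 1)).truncate m).intEnd = orbifoldKoszul.boundary m := by
  rw [Table.truncate, Table.intEnd_mul, Table.intEnd_mul, intEnd_differentialTable,
    Table.intEnd_degree, Table.intEnd_degree, one_smul, one_smul, ← mul_assoc,
    TwistedKoszul.boundary]

end IntegerTables

section Certificates

open Finsupp

namespace Table

/-- The table with `r` rows whose entries are packed as `2 ^ 16 * row + 2 ^ 8 * key + digit`, where
the digit is the coefficient plus `128`. -/
def ofEntries (r : ℕ) (l : List ℕ) : Table :=
  (List.range r).map fun i =>
    (l.filter fun n => n / 65536 = i).map fun n => (n / 256 % 256, Int.subNatNat (n % 256) 128)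

/-- The diagonal matrix with the given entries. -/
def diag (d : List ℕ) : Table :=
  d.mapIdx fun (j a : ℕ) => if a = 0 then [] else [(j, (a : ℤ))]

lemma getD_mask_monomial {r : ℕ} (hr : r ≤ 64) (T : Table) (j : Fin r) :
    T.getD (mask (monomial j)) [] = T.getD j [] := by
  rw [mask_monomial, Nat.mod_eq_of_lt (j.2.trans_le hr)]

lemma monomial_inj {r : ℕ} (hr : r ≤ 64) {i j : Fin r} : monomial i = monomial j ↔ i = j := by
  refine ⟨fun h => Fin.ext ?_, fun h => h ▸ rfl⟩
  simpa [mask_monomial, Nat.mod_eq_of_lt (i.2.trans_le hr), Nat.mod_eq_of_lt (j.2.trans_le hr)]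
    using congrArg mask h

lemma intEnd_eq_sum {T : Table} {r : ℕ} (hr : r ≤ 64) (hT : T.length = r)
    (w : Finset (Fin 6) →₀ ℤ) :
    intEnd T w = ∑ j : Fin r, w (monomial j) • intEnd T (single (monomial j) 1) := by
  induction w using Finsupp.induction_linear with
  | zero => simp
  | add v w hv hw =>
    simp only [map_add, Finsupp.add_apply, add_smul, Finset.sum_add_distrib, hv, hw]
  | single I a =>
    have eq_mask {j : Fin r} (h : monomial j = I) : j = mask I := by
      rw [← h, mask_monomial, Nat.mod_eq_of_lt (j.2.trans_le hr)]
    simp only [intEnd_single, one_smul]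
    by_cases hI : mask I < r
    · rw [Finset.sum_eq_single ⟨mask I, hI⟩]
      · rw [monomial_mask, single_eq_same]
      · intro j _ hj
        rw [single_eq_of_ne fun h => hj (Fin.ext (eq_mask h)), zero_smul]
      · simp
    · rw [List.getD_eq_default _ _ (by lia), Sparse.eval_nil, smul_zero]
      refine (Finset.sum_eq_zero fun j _ => ?_).symm
      rw [single_eq_of_ne fun h => hI (eq_mask h ▸ j.2), zero_smul]

lemma intEnd_diag_apply {d : List ℕ} (hd : d.length ≤ 64) (w : Finset (Fin 6) →₀ ℤ)
    (j : Fin d.length) : intEnd (diag d) w (monomial j) = d[j] * w (monomial j) := by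
  have diag_single (i : Fin d.length) :
      intEnd (diag d) (single (monomial i) 1) = single (monomial i) (d[i] : ℤ) := by
    rw [intEnd_single, getD_mask_monomial hd, diag, List.getD_eq_getElem _ _ (by simp),
      List.getElem_mapIdx]
    split_ifs with hi
    · simp [hi, Sparse.eval_nil]
    · simp [Sparse.eval_cons, Sparse.eval_nil, term]
  rw [intEnd_eq_sum hd (by simp [diag]), Finsupp.finsetSum_apply, Finset.sum_eq_single j]
  · simp [diag_single, mul_comm]
  · intro i _ hi
    rw [diag_single, Finsupp.smul_apply, single_eq_of_ne fun h => hi ((monomial_inj hd).1 h).symm,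
      smul_zero]
  · simp

lemma dvd_map_eval {c : ℤ} {v : Sparse} (hv : ∀ t ∈ v, c ∣ t.2)
    (f : Module.Dual ℤ (Finset (Fin 6) →₀ ℤ)) : c ∣ f (Sparse.eval (term fun _ => 1) v) := by
  rw [Sparse.eval, map_list_sum, List.map_map]
  refine List.dvd_sum fun a ha => ?_
  obtain ⟨t, ht, rfl⟩ := List.mem_map.1 ha
  rw [Function.comp_apply, map_smul]
  exact (hv t ht).mul_right _

lemma intEnd_replicate_nil (k : ℕ) : intEnd (.replicate k []) = 0 := by
  ext1 I
  ext1
  simp [intEnd_single, Sparse.eval_nil]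

lemma intEnd_intEnd_single_monomial {r : ℕ} (hr : r ≤ 64) (S T : Table) (j : Fin r) :
    intEnd T (intEnd S (single (monomial j) 1)) =
      Sparse.eval (term fun _ => 1) ((mul S T).getD j []) := by
  rw [← Module.End.mul_apply, ← intEnd_mul, intEnd_single, getD_mask_monomial hr, one_smul]

lemma intEnd_apply_eq_zero {S T : Table} {k : ℕ} (h : mul S T = .replicate k [])
    (v : Finset (Fin 6) →₀ ℤ) : intEnd T (intEnd S v) = 0 := by
  rw [← Module.End.mul_apply, ← intEnd_mul, h, intEnd_replicate_nil, LinearMap.zero_apply]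

end Table

/-- Tables and orders for a `Splitting` of `P`, `D` and `D'`. The vectors `U j` are the rows of `U`,
the functionals `ψ j` and `q j` are the columns of `ψ` and `q`. -/
structure Certificate where
  ord : List ℕ
  N : ℤ
  U : Table
  ψ : Table
  q : Table
  h : Table
  h' : Table

namespace Certificate

/-- The identities between the tables of a certificate that make it a splitting. -/
def Valid (C : Certificate) (P D D' : Table) : Prop :=
  C.N ≠ 0 ∧ C.ord.length ≤ 64 ∧ C.U.length = C.ord.length ∧
  (∀ j : Fin C.ord.length, ∀ t ∈ (Table.mul C.U D).getD j [], (C.ord[j] : ℤ) ∣ t.2) ∧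
  Table.mul (.mul C.U P) C.ψ = (List.range C.ord.length).map (fun j => [(j, 1)]) ∧
  Table.mul D' C.ψ = .replicate 64 [] ∧
  Table.mul C.ψ (.diag C.ord) = .mul D C.q ∧
  Table.mul P (.scalar C.N) =
    .add (.mul (.add (.mul C.ψ C.U) (.mul D C.h)) (.scalar C.N)) (.mul C.h' D')

instance (C : Certificate) (P D D' : Table) : Decidable (C.Valid P D D') :=
  inferInstanceAs (Decidable (_ ∧ _))

lemma Valid.nonempty_splitting {C : Certificate} {P D D' : Table} (h : C.Valid P D D') :
    Nonempty (Splitting P.intEnd D.intEnd D'.intEnd fun j : Fin C.ord.length => C.ord[j]) := by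
  obtain ⟨N_ne_zero, hr, length_U, ord_dvd, U_P_ψ, D'_ψ, ψ_diag, homotopy⟩ := h
  refine ⟨
    { U := fun j => C.U.intEnd (single (monomial j) 1)
      ψ := fun j => lapply (monomial j) ∘ₗ C.ψ.intEnd
      q := fun j => lapply (monomial j) ∘ₗ C.q.intEnd
      h := C.h.intEnd
      h' := C.h'.intEnd
      N := C.N
      N_ne_zero := N_ne_zero
      ord_dvd := fun j f => ?_
      ψ_P_U := fun i j => ?_
      ψ_D' := fun j v => ?_
      ord_mul_ψ := fun j v => ?_
      homotopy := fun v => ?_ }⟩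
  · rw [Table.intEnd_intEnd_single_monomial hr]
    exact Table.dvd_map_eval (ord_dvd j) f
  · have row : C.ψ.intEnd (P.intEnd (C.U.intEnd (single (monomial j) 1))) =
        single (monomial j) 1 := by
      rw [← Module.End.mul_apply P.intEnd, ← Table.intEnd_mul,
        Table.intEnd_intEnd_single_monomial hr, U_P_ψ]
      simp [Sparse.eval_cons, Sparse.eval_nil, Table.term]
    simp [row, Finsupp.single_apply, Table.monomial_inj hr, eq_comm]
  · simp [Table.intEnd_apply_eq_zero D'_ψ]
  · rw [LinearMap.comp_apply, lapply_apply, LinearMap.comp_apply, lapply_apply,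
      ← Module.End.mul_apply, ← Table.intEnd_mul, ← ψ_diag, Table.intEnd_mul, Module.End.mul_apply,
      Table.intEnd_diag_apply hr]
  · have N_smul_P := LinearMap.congr_fun (congrArg Table.intEnd homotopy) v
    simp only [Table.intEnd_mul, Table.intEnd_add, Table.intEnd_scalar, Module.End.mul_apply,
      LinearMap.add_apply, LinearMap.smul_apply, Module.End.one_apply] at N_smul_P
    rw [Table.intEnd_eq_sum hr length_U] at N_smul_P
    simp only [LinearMap.comp_apply, lapply_apply]
    rw [sub_sub, smul_sub, N_smul_P]
    abel

/-- The certificate is valid in degree `m`, where `X` and `X'` are the tables of the differentials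
in degrees `m` and `m + 1`. -/
def check (C : Certificate) (m : ℕ) (X X' : Table) : Bool :=
  forceTable (X'.truncate m) fun D => forceTable (X.truncate (m + 1)) fun D' =>
    decide (C.Valid (.degree 1 (· ≤ m + 1)) D D')

/-- The certificates are valid in the degrees from `m` on. -/
def checkAll : List Certificate → ℕ → Table → Table → Bool
  | [], _, _, _ => true
  | C :: l, m, X, X' => C.check m X X' && checkAll l (m + 1) X' X

end Certificate

/-- The certificate for the cohomology in degree `1`. -/
def certificate1 : Certificate where
  ord := []
  N := 12
  U := .ofEntries 0 []
  ψ := .ofEntries 64 []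
  q := .ofEntries 64 []
  h := .ofEntries 64 []
  h' := .ofEntries 64 [0x081, 0x1048c, 0x1088c, 0x20174, 0x2048c, 0x2088c, 0x40174, 0x40274,
    0x4048c, 0x4088c, 0x80174, 0x80274, 0x8088c, 0x100484, 0x100884, 0x101088, 0x102084, 0x200484,
    0x200884, 0x20107c, 0x202084]

/-- The certificate for the cohomology in degree `2`. -/
def certificate2 : Certificate where
  ord := [0, 0, 0, 12, 3]
  N := 1
  U := .ofEntries 5 [0x381, 0x12281, 0x23081, 0x30081, 0x40481, 0x40881, 0x41082, 0x42081]
  ψ := .ofEntries 64 [0x381, 0x30081, 0x50081, 0x5017e, 0x60081, 0x90082, 0xa0081, 0xa017e, 0xc0081,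
    0x110181, 0x12007f, 0x12017f, 0x140182, 0x18007f, 0x18017f, 0x200481, 0x220181, 0x24007f,
    0x24017f, 0x280182, 0x300281]
  q := .ofEntries 64 [0x381, 0x100481, 0x200481]
  h := .ofEntries 64 [0x10481, 0x10881, 0x2017f, 0x20481, 0x20881, 0x4017f, 0x4027f, 0x40481,
    0x40881, 0x8017f, 0x8027f, 0x80881, 0x20107f]
  h' := .ofEntries 64 [0x51181, 0x5127f, 0x51481, 0x52181, 0x5227e, 0x52881, 0x6067f, 0x6207f,
    0x90c81, 0x9207e, 0xa0a7f, 0xa1181, 0xa127f, 0xa1481, 0xa2181, 0xa227e, 0xa2881, 0xc207f,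
    0x11117f, 0x12217f, 0x123081, 0x14117f, 0x14147f, 0x142281, 0x14287f, 0x14307f, 0x181281,
    0x18187f, 0x18217f, 0x183082, 0x21307f, 0x241281, 0x24217f, 0x243081, 0x28117f, 0x282281,
    0x28287f, 0x28307f]

/-- The certificate for the cohomology in degree `3`. -/
def certificate3 : Certificate where
  ord := [0, 0]
  N := 12
  U := .ofEntries 2 [0x2381, 0x10682, 0x10982, 0x10c81, 0x11181, 0x1127e, 0x11881, 0x12182, 0x1227f,
    0x1247f, 0x12881, 0x1307e]
  ψ := .ofEntries 64 [0x13017e, 0x16007f, 0x160182, 0x190081, 0x19017e, 0x1c0081, 0x230081,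
    0x26017e, 0x280181, 0x290182, 0x2c007f, 0x2c0182, 0x310182, 0x32007f, 0x320182, 0x34007f,
    0x340182, 0x38007f]
  q := .ofEntries 64 []
  h := .ofEntries 64 [0x31281, 0x3217f, 0x33081, 0x5067e, 0x5097e, 0x50c7f, 0x51282, 0x51481,
    0x5187f, 0x5217e, 0x5227f, 0x52481, 0x53083, 0x6067e, 0x6097f, 0x60c7f, 0x61281, 0x6217f,
    0x63081, 0x9067e, 0x9097e, 0x90c7f, 0x91282, 0x9217e, 0x93082, 0xa067e, 0xa097e, 0xa0a7f,
    0xa0c7f, 0xa1282, 0xa1481, 0xa187f, 0xa217e, 0xa227f, 0xa2481, 0xa3083, 0xc067f, 0xc097f,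
    0xc0c7f, 0xc1281, 0xc217f, 0xc3081, 0x11117f, 0x12127f, 0x140682, 0x140982, 0x140c81, 0x14127e,
    0x14147f, 0x141881, 0x142182, 0x14247f, 0x14307d, 0x18187f, 0x183081, 0x21307f, 0x280682,
    0x280982, 0x280c81, 0x28127e, 0x281881, 0x282182, 0x28247f, 0x28307d]
  h' := .ofEntries 64 [0x081, 0x1048c, 0x1088c, 0x20174, 0x2048c, 0x2088c, 0x30386, 0x40174,
    0x40274, 0x4048c, 0x4088c, 0x50382, 0x50784, 0x50e84, 0x5117c, 0x5217c, 0x7078c, 0x70e8c,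
    0x72174, 0x80174, 0x80274, 0x8088c, 0xb0d8c, 0xb0e74, 0xd218c, 0xe0e8c, 0xe2174, 0x100382,
    0x100484, 0x10077c, 0x100884, 0x101088, 0x102084, 0x130392, 0x130774, 0x130e74, 0x131188,
    0x13138c, 0x131684, 0x131c78, 0x132198, 0x13268c, 0x13297c, 0x13307c, 0x150d7c, 0x150e84,
    0x151584, 0x151a84, 0x15257c, 0x152a88, 0x16036e, 0x160798, 0x160e98, 0x161178, 0x161374,
    0x16167c, 0x161c94, 0x162150, 0x162668, 0x162990, 0x163084, 0x190392, 0x190768, 0x190e68,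
    0x191188, 0x19138c, 0x191690, 0x191c78, 0x1921a4, 0x192698, 0x192970, 0x192c8c, 0x19307c,
    0x1a0d88, 0x1a0e78, 0x1a1584, 0x1a1a84, 0x1a2588, 0x1a2a7c, 0x1c0774, 0x1c0e74, 0x1c138c,
    0x1c168c, 0x1c1c74, 0x1c21a4, 0x1c2698, 0x1c2974, 0x20037c, 0x200484, 0x20077c, 0x200884,
    0x20107c, 0x202084, 0x250d88, 0x250e78, 0x251584, 0x251a78, 0x252588, 0x252a7c, 0x260392,
    0x260774, 0x260e74, 0x261188, 0x261684, 0x261c78, 0x262198, 0x26268c, 0x26297c, 0x26307c,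
    0x29036e, 0x29078c, 0x290e8c, 0x291178, 0x29167c, 0x291c7c, 0x292174, 0x292984, 0x293084,
    0x2a0d7c, 0x2a0e84, 0x2a1578, 0x2a1a84, 0x2a257c, 0x2a2a88, 0x2c036e, 0x2c0798, 0x2c0e98,
    0x2c1178, 0x2c1374, 0x2c1670, 0x2c1c94, 0x2c2150, 0x2c2668, 0x2c2990, 0x2c3084, 0x31036e,
    0x31078c, 0x310d88, 0x310e84, 0x311178, 0x311584, 0x31167c, 0x311a78, 0x311c7c, 0x312174,
    0x312588, 0x312984, 0x312a7c, 0x313084, 0x31348c, 0x31388c, 0x32036e, 0x32078c, 0x320d88,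
    0x320e84, 0x321178, 0x321584, 0x32167c, 0x321a78, 0x321c7c, 0x322174, 0x322588, 0x322984,
    0x322a7c, 0x323084, 0x323174, 0x32348c, 0x32388c, 0x34036e, 0x34078c, 0x340e8c, 0x341178,
    0x34167c, 0x341c7c, 0x342174, 0x342984, 0x343084, 0x343174, 0x343274, 0x34348c, 0x34388c,
    0x383174, 0x383274, 0x38388c]

/-- The certificate for the cohomology in degree `4`. -/
def certificate4 : Certificate where
  ord := [0, 0, 0, 12, 6, 3, 3, 3]
  N := 2
  U := .ofEntries 8 [0x77f, 0xe7f, 0x1681, 0x197f, 0x1c81, 0x237f, 0x2c81, 0x13381, 0x23581,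
    0x30081, 0x40681, 0x40e82, 0x4217e, 0x4227e, 0x50481, 0x5077f, 0x50881, 0x50e7f, 0x5107f,
    0x52081, 0x52181, 0x52281, 0x60782, 0x60b7e, 0x60e82, 0x6157f, 0x61a82, 0x6217e, 0x6257e,
    0x62a81, 0x7047e, 0x70783, 0x7087e, 0x70e88, 0x71082, 0x71381, 0x7167f, 0x71c81, 0x7207e,
    0x72176, 0x72279, 0x72381, 0x7267e, 0x73081]
  ψ := .ofEntries 64 [0x381, 0x30481, 0x30582, 0x5007c, 0x50481, 0x60481, 0x60582, 0x90482, 0x90584,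
    0xa007c, 0xa0481, 0xc0481, 0xc0582, 0xd0084, 0xf0084, 0x110581, 0x120084, 0x12047f, 0x12057d,
    0x140582, 0x170082, 0x180084, 0x18047f, 0x18057d, 0x1b0082, 0x1d007e, 0x1e007c, 0x220581,
    0x240084, 0x24047f, 0x24057d, 0x27007e, 0x28007c, 0x280582, 0x290084, 0x2a0681, 0x2c0081,
    0x2d0084, 0x2e0082, 0x300587, 0x300781, 0x330181, 0x350281, 0x36007e, 0x360181, 0x390182,
    0x3a0281, 0x3c0082, 0x3c0181]
  q := .ofEntries 64 [0x381, 0x30481, 0x30581, 0x50481, 0xc0482, 0xc0582, 0x100481, 0x100581,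
    0x130485, 0x13077f, 0x150682, 0x1a067f, 0x1c047b, 0x1c0781, 0x23047b, 0x230781, 0x25067f,
    0x260485, 0x26077f, 0x29047b, 0x290781, 0x2a0682, 0x31047b, 0x31067f, 0x310781, 0x32067f,
    0x380485, 0x38077f]
  h := .ofEntries 64 [0x10481, 0x10881, 0x2017f, 0x20481, 0x20881, 0x4017f, 0x4027f, 0x40481,
    0x40881, 0x70781, 0x70e81, 0x7217f, 0x8017f, 0x8027f, 0x80881, 0xb077f, 0xb0b81, 0xb0e7f,
    0xb2181, 0xc047f, 0xc0781, 0xc087f, 0xc1081, 0xc207f, 0xd2181, 0xe0e81, 0xe217f, 0x101081,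
    0x131381, 0x15077f, 0x150b81, 0x150e7f, 0x151581, 0x151a7f, 0x152181, 0x152581, 0x161681,
    0x190781, 0x190e81, 0x19167f, 0x191981, 0x19217f, 0x192381, 0x1a1a81, 0x1c2181, 0x1c2681,
    0x230781, 0x230e81, 0x23167f, 0x23217f, 0x232381, 0x291c7f, 0x292181, 0x292681, 0x2a077f,
    0x2a0b81, 0x2a0e7f, 0x2a1a7f, 0x2a2181, 0x2a2581, 0x311c7f, 0x312181, 0x312681, 0x313481,
    0x313881, 0x32077f, 0x320e7f, 0x321681, 0x321c7f, 0x322182, 0x32237f, 0x322681, 0x32317f,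
    0x323481, 0x323881, 0x34077f, 0x340e7f, 0x341681, 0x341c7f, 0x342182, 0x34237f, 0x342681,
    0x34317f, 0x34327f, 0x343481, 0x343881, 0x38077f, 0x380e7f, 0x381681, 0x382181, 0x38237f,
    0x38317f, 0x38327f, 0x383881]
  h' := .ofEntries 64 [0x30684, 0x30982, 0x30c82, 0x5097e, 0x51282, 0x51482, 0x5187e, 0x51982,
    0x5217e, 0x5227e, 0x52482, 0x90684, 0x90c82, 0xa097e, 0xa0a7e, 0xa1282, 0xa1482, 0xa187e,
    0xa1982, 0xa217e, 0xa227e, 0xa2482, 0xc0682, 0xd0682, 0xd0982, 0xd0c81, 0xd1181, 0xd127e,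
    0xd1881, 0xd197e, 0xd2182, 0xd227f, 0xd247f, 0xd2881, 0xf197e, 0x11117e, 0x12067e, 0x120c7f,
    0x121181, 0x12127e, 0x121881, 0x12197e, 0x12227f, 0x12247f, 0x122881, 0x140682, 0x140982,
    0x140c81, 0x14117f, 0x14127e, 0x14147e, 0x141881, 0x142182, 0x142281, 0x14247f, 0x14287f,
    0x17177f, 0x17197f, 0x171d7f, 0x171e7f, 0x172781, 0x172b81, 0x172e7f, 0x18067e, 0x180c7f,
    0x181181, 0x18187f, 0x18197e, 0x18227f, 0x18247f, 0x182881, 0x1b177f, 0x1b197f, 0x1b1b7e,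
    0x1b1d7f, 0x1b1e7f, 0x1b2781, 0x1b2b7f, 0x1b2e7f, 0x1b3582, 0x1b3a82, 0x1d177f, 0x1d1981,
    0x1d1d7f, 0x1d1e81, 0x1d277f, 0x1d2b7f, 0x1d2e81, 0x1d3582, 0x1d3a82, 0x1e177e, 0x1e1982,
    0x1e277e, 0x1e2b7e, 0x1e3582, 0x1e3a82, 0x24067e, 0x240c7f, 0x241181, 0x241881, 0x24197e,
    0x24227f, 0x24247f, 0x242881, 0x271781, 0x271981, 0x271d81, 0x271e81, 0x27277f, 0x272b81,
    0x272e81, 0x27357e, 0x273a7e, 0x28117e, 0x281982, 0x282282, 0x28287e, 0x29197e, 0x291d7e,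
    0x291e7e, 0x292782, 0x292e7e, 0x293082, 0x293582, 0x293a82, 0x2b357e, 0x2b3a7e, 0x2d1782,
    0x2d197e, 0x2d1e7e, 0x2d2782, 0x2d2b82, 0x2d357e, 0x2d3a7e, 0x2e1781, 0x2e197f, 0x2e1d7f,
    0x2e1e7f, 0x2e2781, 0x2e2b81, 0x2e2e7f, 0x361781, 0x361981, 0x361d81, 0x361e81, 0x36277f,
    0x362b81, 0x362e81, 0x363382, 0x36357e, 0x363a7e, 0x391784, 0x391d82, 0x392b84, 0x392e82,
    0x393384, 0x39357a, 0x393684, 0x393a7a, 0x393c82, 0x3a3a7e, 0x3c1783, 0x3c197f, 0x3c1d81,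
    0x3c1e7f, 0x3c2781, 0x3c2b83, 0x3c2e81, 0x3c3382, 0x3c357c, 0x3c3682, 0x3c3a7c]

/-- The certificate for the cohomology in degree `5`. -/
def certificate5 : Certificate where
  ord := [2, 2]
  N := 12
  U := .ofEntries 2 [0x1681, 0x1781, 0x1d7f, 0x1e7f, 0x2781, 0x2b81, 0x2e7f, 0x1037e, 0x1067e,
    0x10c7f, 0x11181, 0x1127e, 0x11881, 0x11d82, 0x11e82, 0x12182, 0x1227f, 0x1247f, 0x1277e,
    0x12881, 0x12e82, 0x1307e, 0x1357e, 0x13a7e]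
  ψ := .ofEntries 64 [0x13017e, 0x160081, 0x19007f, 0x1c007f, 0x1c0182, 0x23007f, 0x230182,
    0x26017e, 0x280181, 0x290182, 0x2c0081, 0x310182, 0x320081, 0x340081, 0x380081, 0x38017e]
  q := .ofEntries 64 [0x5007e, 0x50184, 0x70181, 0xa007e, 0xa0184, 0xf0082, 0xf017c, 0x110082,
    0x11017d, 0x170081, 0x17017e, 0x180082, 0x18017c, 0x1b0081, 0x1b017e, 0x1d007f, 0x1d0182,
    0x1e007e, 0x1e0184, 0x21007e, 0x210184, 0x220082, 0x22017c, 0x27007f, 0x270182, 0x28017f,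
    0x2d0082, 0x2d017c, 0x2e0081, 0x2e017e, 0x330081, 0x33017e, 0x390082, 0x39017c, 0x3c0082,
    0x3c017c]
  h := .ofEntries 64 [0x50382, 0x50682, 0x50c81, 0x5127f, 0x51481, 0x51781, 0x5187f, 0x51d7f,
    0x51e7f, 0x52181, 0x5227f, 0x52481, 0x52781, 0x52b81, 0x52e7f, 0x60381, 0x90382, 0x90682,
    0x90c81, 0xa0382, 0xa0581, 0xa0682, 0xa0c81, 0xa127f, 0xa1481, 0xa1781, 0xa187f, 0xa1d7f,
    0xa1e7f, 0xa2181, 0xa227f, 0xa2481, 0xa2781, 0xa2b81, 0xa2e7f, 0xc0381, 0xc0681, 0xf177f,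
    0xf1d81, 0xf1e81, 0xf277f, 0xf2b7f, 0xf2e81, 0x11117f, 0x111281, 0x11177f, 0x11217f, 0x112b7f,
    0x113081, 0x113581, 0x113a81, 0x12127f, 0x14037e, 0x14067e, 0x140c7f, 0x14147f, 0x141881,
    0x141d81, 0x141e81, 0x14247f, 0x14277f, 0x142e81, 0x14307f, 0x14357f, 0x143a7f, 0x17177f,
    0x18177f, 0x18187f, 0x182b7f, 0x183081, 0x183581, 0x183a81, 0x1b177f, 0x1b1b7f, 0x1b2b7f,
    0x1b3581, 0x1b3a81, 0x1d1d7f, 0x1d3581, 0x1d3a81, 0x1e1d7f, 0x1e1e7f, 0x1e2e7f, 0x1e3581,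
    0x1e3a81, 0x211781, 0x212b81, 0x21307f, 0x21357f, 0x213a7f, 0x221281, 0x22177f, 0x22217f,
    0x222b7f, 0x223081, 0x223581, 0x223a81, 0x271781, 0x272b81, 0x27357f, 0x273a7f, 0x28037e,
    0x28067e, 0x280c7f, 0x281881, 0x281d81, 0x281e81, 0x28247f, 0x28277f, 0x282e81, 0x28307f,
    0x28357f, 0x283a7f, 0x2b357f, 0x2b3a7f, 0x2d1d81, 0x2d2e81, 0x2d357f, 0x2d3a7f, 0x33177f,
    0x332b7f, 0x33337f, 0x333581, 0x333a81, 0x353a81, 0x39177e, 0x392b7e, 0x39337f, 0x393582,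
    0x39397f, 0x393a82, 0x3c1d81, 0x3c2e81, 0x3c357f, 0x3c3681, 0x3c3a7f]
  h' := .ofEntries 64 [0x081, 0x1048c, 0x1088c, 0x20174, 0x2048c, 0x2088c, 0x40174, 0x40274,
    0x4048c, 0x4088c, 0x70b8c, 0x70d74, 0x70e8c, 0x80174, 0x80274, 0x8088c, 0x90386, 0xa0382,
    0xa0778, 0xa0b84, 0xa0d7c, 0xa0e7c, 0xa117c, 0xa1688, 0xa1978, 0xa1c88, 0xa2378, 0xa2c88,
    0xb0d8c, 0xb0e74, 0xd078c, 0xd0b74, 0xd0d8c, 0xe0774, 0xe0b8c, 0xe0d74, 0xe0e8c, 0xf077c,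
    0xf0e7c, 0xf1684, 0xf197c, 0xf1c84, 0xf237c, 0xf2c84, 0x10037c, 0x100484, 0x10077c, 0x100884,
    0x101088, 0x102084, 0x13037a, 0x1307bc, 0x130b6c, 0x130d94, 0x130ea8, 0x131188, 0x131388,
    0x131650, 0x1319b4, 0x131c48, 0x1323b0, 0x132688, 0x132c4c, 0x13307c, 0x133578, 0x150d7c,
    0x150e84, 0x151584, 0x151a84, 0x15257c, 0x152a88, 0x190778, 0x190b8c, 0x190d74, 0x190e84,
    0x191688, 0x191984, 0x191c88, 0x192384, 0x192c88, 0x1a0d88, 0x1a0e78, 0x1a1584, 0x1a1a84,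
    0x1a2588, 0x1a2a7c, 0x1c0386, 0x1c0754, 0x1c0b88, 0x1c0d78, 0x1c0e5c, 0x1c1178, 0x1c1384,
    0x1c16b8, 0x1c1950, 0x1c1cb4, 0x1c2354, 0x1c2684, 0x1c2cb0, 0x1c3084, 0x1c3588, 0x1f1f88,
    0x1f2f84, 0x200382, 0x200484, 0x20077c, 0x200884, 0x20107c, 0x202084, 0x230386, 0x230740,
    0x230ba0, 0x230d60, 0x230e60, 0x231178, 0x231384, 0x2316b4, 0x231948, 0x231cbc, 0x232358,
    0x232678, 0x232cb8, 0x233084, 0x233588, 0x250d88, 0x250e78, 0x251584, 0x251a78, 0x252588,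
    0x252a7c, 0x26037a, 0x2607bc, 0x260b6c, 0x260d94, 0x260ea8, 0x261188, 0x26137c, 0x261650,
    0x2619b4, 0x261c48, 0x2623b0, 0x262688, 0x262c4c, 0x26307c, 0x263578, 0x290386, 0x290754,
    0x290b88, 0x290d78, 0x290e5c, 0x291178, 0x291384, 0x2916ac, 0x291950, 0x291ca8, 0x292354,
    0x292684, 0x292cb0, 0x293084, 0x293588, 0x2a0d7c, 0x2a0e84, 0x2a1578, 0x2a1a84, 0x2a257c,
    0x2a2a88, 0x2c077c, 0x2c0e7c, 0x2c1678, 0x2c197c, 0x2c1c84, 0x2c237c, 0x2c2c84, 0x2d0778,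
    0x2d0e78, 0x2d1688, 0x2d1978, 0x2d1c88, 0x2d2378, 0x2d2c88, 0x2d357c, 0x2f1f7c, 0x2f2f84,
    0x310386, 0x31075c, 0x310b88, 0x310e5c, 0x311178, 0x311384, 0x311584, 0x3116a4, 0x311958,
    0x311a78, 0x311ca0, 0x31235c, 0x312588, 0x312684, 0x312a7c, 0x312ca8, 0x313084, 0x31348c,
    0x31358c, 0x31388c, 0x32079c, 0x320b68, 0x320da0, 0x320e7c, 0x321584, 0x321670, 0x321990,
    0x321a78, 0x321c64, 0x322384, 0x322588, 0x32268c, 0x322a7c, 0x322c70, 0x323174, 0x32348c,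
    0x323584, 0x32388c, 0x34079c, 0x340b68, 0x340d98, 0x340e84, 0x341670, 0x341990, 0x341c64,
    0x342384, 0x34268c, 0x342c70, 0x343174, 0x343274, 0x34348c, 0x343584, 0x34388c, 0x371f7c,
    0x372f84, 0x373b8c, 0x373d74, 0x373e8c, 0x38037a, 0x3807c0, 0x380b60, 0x380da0, 0x380ea0,
    0x381188, 0x38137c, 0x38164c, 0x3819b8, 0x381c44, 0x381f7c, 0x3823a8, 0x382688, 0x382c48,
    0x382f84, 0x38307c, 0x383174, 0x383274, 0x383578, 0x38388c, 0x3b1f84, 0x3b2f7c, 0x3b3d8c,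
    0x3b3e74, 0x3c077e, 0x3c0e7e, 0x3c1682, 0x3c197e, 0x3c1c82, 0x3c1f7c, 0x3c237e, 0x3c2c82,
    0x3c2f7e, 0x3c3386, 0x3c357a, 0x3d378c, 0x3d3b74, 0x3d3d8c, 0x3e3774, 0x3e3b8c, 0x3e3d74,
    0x3e3e8c]

/-- The certificate for the cohomology in degree `6`. -/
def certificate6 : Certificate where
  ord := [0, 12, 6, 6, 3, 3, 3, 3, 3]
  N := 2
  U := .ofEntries 9 [0x3f81, 0x10081, 0x20681, 0x2077e, 0x20b7e, 0x20d82, 0x20e7e, 0x21384, 0x21684,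
    0x2197c, 0x2227e, 0x22684, 0x2297c, 0x22c84, 0x30b7d, 0x30d83, 0x30e7d, 0x31383, 0x31683,
    0x3197d, 0x32683, 0x3297d, 0x32c83, 0x3357d, 0x33681, 0x33981, 0x40481, 0x40881, 0x40b7f,
    0x40d81, 0x40e7f, 0x4107f, 0x42081, 0x42281, 0x50d7e, 0x50e82, 0x5157f, 0x51a82, 0x5257e,
    0x52a81, 0x60b7f, 0x60d81, 0x60e7f, 0x61381, 0x61681, 0x6197f, 0x62681, 0x6297f, 0x62c81,
    0x7047e, 0x7077a, 0x7087e, 0x70b6e, 0x70d92, 0x70e6d, 0x71082, 0x7139d, 0x7169a, 0x71965,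
    0x7207e, 0x72279, 0x72382, 0x7269a, 0x72964, 0x72c9b, 0x73081, 0x80b82, 0x80d7e, 0x80e82,
    0x8137e, 0x8167e, 0x81982, 0x8267e, 0x82982, 0x82c7e, 0x83581]
  ψ := .ofEntries 64 [0x181, 0x30281, 0x30482, 0x3067c, 0x50281, 0x60281, 0x60482, 0x6067c, 0x90282,
    0x90484, 0x90678, 0xa0281, 0xc0281, 0xc0482, 0xc067c, 0xf0684, 0x110481, 0x12027f, 0x12047d,
    0x120688, 0x140482, 0x140678, 0x170682, 0x18027f, 0x18047d, 0x18068c, 0x1b0682, 0x1d067e,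
    0x1e067c, 0x21067c, 0x220481, 0x24027f, 0x24047d, 0x240688, 0x27067e, 0x280482, 0x280678,
    0x2a0581, 0x2c0681, 0x2d0684, 0x2e0682, 0x2f037f, 0x2f0681, 0x2f087d, 0x300487, 0x300665,
    0x300781, 0x330682, 0x350682, 0x350881, 0x390381, 0x390683, 0x390883, 0x3a0682, 0x3a0881,
    0x3c0381, 0x3c0683, 0x3c0883, 0x3f0081]
  q := .ofEntries 64 [0x181, 0x30281, 0x30481, 0x3067e, 0x50281, 0xc0282, 0xc0482, 0xc067c, 0xf0681,
    0x100281, 0x100481, 0x10067e, 0x130285, 0x13037c, 0x13077f, 0x13087e, 0x150582, 0x160682,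
    0x16087f, 0x190881, 0x1a057f, 0x1b037f, 0x1b087f, 0x1c027b, 0x1c0384, 0x1c067d, 0x1c0781,
    0x1c0883, 0x1d0381, 0x1f037e, 0x1f0681, 0x1f087d, 0x23027b, 0x230384, 0x23067f, 0x230781,
    0x230883, 0x25057f, 0x260285, 0x26037c, 0x26077f, 0x26087e, 0x29027b, 0x290384, 0x29067f,
    0x290781, 0x290882, 0x2a0582, 0x2c0683, 0x2c087f, 0x2f037e, 0x2f0681, 0x2f087d, 0x31027b,
    0x310385, 0x31057f, 0x31067f, 0x310781, 0x310883, 0x32057f, 0x37037e, 0x370681, 0x37087d,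
    0x380285, 0x38037a, 0x380682, 0x38077f, 0x38087b, 0x3b0382, 0x3b067f, 0x3b0883]
  h := .ofEntries 64 [0x10481, 0x10881, 0x2017f, 0x20481, 0x20881, 0x4017f, 0x4027f, 0x40481,
    0x40881, 0x70b81, 0x70d7f, 0x70e81, 0x8017f, 0x8027f, 0x80881, 0xb0d81, 0xb0e7f, 0xc047f,
    0xc0781, 0xc087f, 0xc1081, 0xc207f, 0xd0781, 0xd0b7f, 0xd0d81, 0xe077f, 0xe0b81, 0xe0d7f,
    0xe0e81, 0x101081, 0x131381, 0x150d81, 0x150e7f, 0x151581, 0x151a7f, 0x152581, 0x160b81,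
    0x160d7f, 0x160e81, 0x161381, 0x162382, 0x16297f, 0x163181, 0x163281, 0x16347f, 0x16387f,
    0x19137f, 0x191981, 0x19237f, 0x192981, 0x19317f, 0x19327f, 0x193481, 0x193881, 0x1a1a81,
    0x1c0781, 0x1c0b7e, 0x1c0d82, 0x1c0e7f, 0x1c137f, 0x1c1681, 0x1c237e, 0x1c2681, 0x1c2981,
    0x1c317f, 0x1c327f, 0x1c3481, 0x1c3881, 0x1f1f81, 0x1f3681, 0x23137f, 0x23237f, 0x232981,
    0x23317f, 0x23327f, 0x233481, 0x233881, 0x29137f, 0x29237f, 0x292981, 0x2a0d81, 0x2a0e7f,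
    0x2a1a7f, 0x2a2581, 0x2c0b81, 0x2c0d7f, 0x2c0e81, 0x2c1381, 0x2c167f, 0x2c2382, 0x2c297f,
    0x2c3181, 0x2c3281, 0x2c347f, 0x2c387f, 0x2f3681, 0x31137f, 0x31237f, 0x312981, 0x313481,
    0x313881, 0x323281, 0x373681, 0x373b81, 0x373d7f, 0x373e81, 0x381381, 0x382381, 0x38297f,
    0x38347f, 0x383681, 0x3b367f, 0x3b3d81, 0x3b3e7f, 0x3d3781, 0x3d3b7f, 0x3d3d81, 0x3e377f,
    0x3e3b81, 0x3e3d7f, 0x3e3e81]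
  h' := .ofEntries 64 [0x30684, 0x30c82, 0x3107e, 0x50684, 0x50c82, 0x5107e, 0x51182, 0x5127e,
    0x51482, 0x52182, 0x5227c, 0x5237e, 0x52882, 0x90684, 0x90c82, 0xa0582, 0xa0684, 0xa0c82,
    0xa107e, 0xa1182, 0xa127e, 0xa1482, 0xa2182, 0xa227c, 0xa237e, 0xa2882, 0xc0682, 0xf237e,
    0x11117e, 0x12067e, 0x120c7f, 0x121181, 0x12127e, 0x121881, 0x12227f, 0x12237e, 0x12247f,
    0x122881, 0x14067e, 0x140c7f, 0x141082, 0x14117d, 0x141282, 0x14147e, 0x14187f, 0x14217e,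
    0x142283, 0x142384, 0x142481, 0x14287d, 0x17177f, 0x171d7f, 0x171e7f, 0x17237f, 0x172781,
    0x172b81, 0x172e7f, 0x18107e, 0x181182, 0x18127e, 0x182182, 0x18227e, 0x18237c, 0x18247e,
    0x182882, 0x1b177f, 0x1b1b7e, 0x1b1d7f, 0x1b1e7f, 0x1b237f, 0x1b2781, 0x1b2b7f, 0x1b2e7f,
    0x1b3582, 0x1b3a82, 0x1c067e, 0x1c0c7f, 0x1c1082, 0x1c117f, 0x1c1282, 0x1c187f, 0x1c1d7e,
    0x1c1e7e, 0x1c217e, 0x1c2281, 0x1c2481, 0x1c2782, 0x1c287f, 0x1c2e7e, 0x1c3082, 0x1c3582,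
    0x1c3a82, 0x1d177f, 0x1d1d7f, 0x1d1e81, 0x1d2381, 0x1d277f, 0x1d2b7f, 0x1d2e81, 0x1d3582,
    0x1d3a82, 0x1e177e, 0x1e2382, 0x1e277e, 0x1e2b7e, 0x1e3582, 0x1e3a82, 0x21067e, 0x210c7f,
    0x211082, 0x21117f, 0x211282, 0x21187f, 0x21217e, 0x212281, 0x212382, 0x212481, 0x21287f,
    0x24067e, 0x240c7f, 0x241181, 0x241881, 0x24227f, 0x24237e, 0x24247f, 0x242881, 0x271781,
    0x271d81, 0x271e81, 0x272381, 0x27277f, 0x272b81, 0x272e81, 0x27357e, 0x273a7e, 0x28067e,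
    0x280c7f, 0x281082, 0x28117d, 0x281282, 0x28187f, 0x28217e, 0x282283, 0x282384, 0x282481,
    0x28287d, 0x2b357e, 0x2b3a7e, 0x2d1782, 0x2d1e7e, 0x2d237e, 0x2d2782, 0x2d2b82, 0x2d357e,
    0x2d3a7e, 0x2e1781, 0x2e1d7f, 0x2e1e7f, 0x2e237f, 0x2e2781, 0x2e2b81, 0x2e2e7f, 0x2f1782,
    0x2f1e7e, 0x2f237e, 0x2f2782, 0x2f2b82, 0x2f357e, 0x2f3684, 0x2f3a7e, 0x2f3c82, 0x33177f,
    0x331d7f, 0x331e7f, 0x33237f, 0x332781, 0x332b7f, 0x332e7f, 0x33337e, 0x333582, 0x333a82,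
    0x3a3a7e, 0x3c367e, 0x3c3c7e]

/-- The certificate for the cohomology in degree `7`. -/
def certificate7 : Certificate where
  ord := [2, 2]
  N := 12
  U := .ofEntries 2 [0x1681, 0x1781, 0x1d7f, 0x1e7f, 0x2781, 0x2b81, 0x2e7f, 0x1037e, 0x1067e,
    0x10c7f, 0x11181, 0x1127e, 0x11881, 0x11d82, 0x11e82, 0x12182, 0x1227f, 0x1247f, 0x1277e,
    0x12881, 0x12e82, 0x1307e, 0x1357e, 0x13a7e]
  ψ := .ofEntries 64 [0x13017e, 0x160081, 0x19007f, 0x1c007f, 0x1c0182, 0x23007f, 0x230182,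
    0x26017e, 0x280181, 0x290182, 0x2c0081, 0x310182, 0x320081, 0x340081, 0x380081, 0x38017e]
  q := .ofEntries 64 [0x5007e, 0x50184, 0x70181, 0xa007e, 0xa0184, 0xf0082, 0xf017c, 0x110082,
    0x11017d, 0x170081, 0x17017e, 0x180082, 0x18017c, 0x1b0081, 0x1b017e, 0x1d007f, 0x1d0182,
    0x1e007e, 0x1e0184, 0x1f007f, 0x1f0182, 0x21007e, 0x210184, 0x220082, 0x22017c, 0x27007f,
    0x270182, 0x28017f, 0x2d0082, 0x2d017c, 0x2e0081, 0x2e017e, 0x2f0081, 0x2f017e, 0x3c0081,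
    0x3c017e]
  h := .ofEntries 64 [0x50382, 0x50682, 0x50c81, 0x5127f, 0x51481, 0x51781, 0x5187f, 0x51d7f,
    0x51e7f, 0x52181, 0x5227f, 0x52481, 0x52781, 0x52b81, 0x52e7f, 0x60381, 0x90382, 0x90682,
    0x90c81, 0xa0382, 0xa0581, 0xa0682, 0xa0c81, 0xa127f, 0xa1481, 0xa1781, 0xa187f, 0xa1d7f,
    0xa1e7f, 0xa2181, 0xa227f, 0xa2481, 0xa2781, 0xa2b81, 0xa2e7f, 0xc0381, 0xc0681, 0xf177f,
    0xf1d81, 0xf1e81, 0xf277f, 0xf2b7f, 0xf2e81, 0x11117f, 0x111281, 0x11177f, 0x11217f, 0x112b7f,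
    0x113081, 0x113581, 0x113a81, 0x12127f, 0x14037e, 0x14067e, 0x140c7f, 0x14147f, 0x141881,
    0x141d81, 0x141e81, 0x14247f, 0x14277f, 0x142e81, 0x14307f, 0x14357f, 0x143a7f, 0x17177f,
    0x18177f, 0x18187f, 0x182b7f, 0x183081, 0x183581, 0x183a81, 0x1b177f, 0x1b1b7f, 0x1b2b7f,
    0x1b3581, 0x1b3a81, 0x1d1d7f, 0x1d3581, 0x1d3a81, 0x1e1d7f, 0x1e1e7f, 0x1e2e7f, 0x1e3581,
    0x1e3a81, 0x1f1781, 0x1f2b81, 0x1f3381, 0x1f357f, 0x1f3a7f, 0x211781, 0x212b81, 0x21307f,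
    0x21357f, 0x213a7f, 0x221281, 0x22177f, 0x22217f, 0x222b7f, 0x223081, 0x223581, 0x223a81,
    0x271781, 0x272b81, 0x27357f, 0x273a7f, 0x28037e, 0x28067e, 0x280c7f, 0x281881, 0x281d81,
    0x281e81, 0x28247f, 0x28277f, 0x282e81, 0x28307f, 0x28357f, 0x283a7f, 0x2b357f, 0x2b3a7f,
    0x2d1d81, 0x2d2e81, 0x2d357f, 0x2d3a7f, 0x2f177f, 0x2f2b7f, 0x2f3581, 0x2f397f, 0x2f3a81,
    0x353a81, 0x3c1781, 0x3c1d81, 0x3c2b81, 0x3c2e81, 0x3c357e, 0x3c3681, 0x3c3981, 0x3c3a7e]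
  h' := .ofEntries 64 [0x081, 0x1048c, 0x1088c, 0x20174, 0x2048c, 0x2088c, 0x40174, 0x40274,
    0x4048c, 0x4088c, 0x70b8c, 0x70d74, 0x70e8c, 0x80174, 0x80274, 0x8088c, 0x90386, 0xa0382,
    0xa0778, 0xa0b84, 0xa0d7c, 0xa0e7c, 0xa117c, 0xa1688, 0xa1978, 0xa1c88, 0xa2378, 0xa2c88,
    0xb0d8c, 0xb0e74, 0xd078c, 0xd0b74, 0xd0d8c, 0xe0774, 0xe0b8c, 0xe0d74, 0xe0e8c, 0xf077c,
    0xf0e7c, 0xf1684, 0xf197c, 0xf1c84, 0xf237c, 0xf2c84, 0x10037c, 0x100484, 0x10077c, 0x100884,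
    0x101088, 0x102084, 0x13037a, 0x1307bc, 0x130b6c, 0x130d94, 0x130ea8, 0x131188, 0x131388,
    0x131650, 0x1319b4, 0x131c48, 0x1323b0, 0x132688, 0x132c4c, 0x13307c, 0x133578, 0x150d7c,
    0x150e84, 0x151584, 0x151a84, 0x15257c, 0x152a88, 0x190778, 0x190b8c, 0x190d74, 0x190e84,
    0x191688, 0x191984, 0x191c88, 0x192384, 0x192c88, 0x1a0d88, 0x1a0e78, 0x1a1584, 0x1a1a84,
    0x1a2588, 0x1a2a7c, 0x1c0386, 0x1c0754, 0x1c0b88, 0x1c0d78, 0x1c0e5c, 0x1c1178, 0x1c1384,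
    0x1c16b8, 0x1c1950, 0x1c1cb4, 0x1c2354, 0x1c2684, 0x1c2cb0, 0x1c3084, 0x1c3588, 0x1f1f88,
    0x1f2f84, 0x200382, 0x200484, 0x20077c, 0x200884, 0x20107c, 0x202084, 0x230386, 0x230740,
    0x230ba0, 0x230d60, 0x230e60, 0x231178, 0x231384, 0x2316b4, 0x231948, 0x231cbc, 0x232358,
    0x232678, 0x232cb8, 0x233084, 0x233588, 0x250d88, 0x250e78, 0x251584, 0x251a78, 0x252588,
    0x252a7c, 0x26037a, 0x2607bc, 0x260b6c, 0x260d94, 0x260ea8, 0x261188, 0x26137c, 0x261650,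
    0x2619b4, 0x261c48, 0x2623b0, 0x262688, 0x262c4c, 0x26307c, 0x263578, 0x290386, 0x290754,
    0x290b88, 0x290d78, 0x290e5c, 0x291178, 0x291384, 0x2916ac, 0x291950, 0x291ca8, 0x292354,
    0x292684, 0x292cb0, 0x293084, 0x293588, 0x2a0d7c, 0x2a0e84, 0x2a1578, 0x2a1a84, 0x2a257c,
    0x2a2a88, 0x2c077c, 0x2c0e7c, 0x2c1678, 0x2c197c, 0x2c1c84, 0x2c237c, 0x2c2c84, 0x2d0778,
    0x2d0e78, 0x2d1688, 0x2d1978, 0x2d1c88, 0x2d2378, 0x2d2c88, 0x2d357c, 0x2f1f7c, 0x2f2f84,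
    0x310386, 0x31075c, 0x310b88, 0x310e5c, 0x311178, 0x311384, 0x311584, 0x3116a4, 0x311958,
    0x311a78, 0x311ca0, 0x31235c, 0x312588, 0x312684, 0x312a7c, 0x312ca8, 0x313084, 0x31348c,
    0x31358c, 0x31388c, 0x32079c, 0x320b68, 0x320da0, 0x320e7c, 0x321584, 0x321670, 0x321990,
    0x321a78, 0x321c64, 0x322384, 0x322588, 0x32268c, 0x322a7c, 0x322c70, 0x323174, 0x32348c,
    0x323584, 0x32388c, 0x34079c, 0x340b68, 0x340d98, 0x340e84, 0x341670, 0x341990, 0x341c64,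
    0x342384, 0x34268c, 0x342c70, 0x343174, 0x343274, 0x34348c, 0x343584, 0x34388c, 0x371f7c,
    0x372f84, 0x373b8c, 0x373d74, 0x373e8c, 0x38037a, 0x3807c0, 0x380b60, 0x380da0, 0x380ea0,
    0x381188, 0x38137c, 0x38164c, 0x3819b8, 0x381c44, 0x381f7c, 0x3823a8, 0x382688, 0x382c48,
    0x382f84, 0x38307c, 0x383174, 0x383274, 0x383578, 0x38388c, 0x3b1f84, 0x3b2f7c, 0x3b3d8c,
    0x3b3e74, 0x3c077e, 0x3c0e7e, 0x3c1682, 0x3c197e, 0x3c1c82, 0x3c1f7c, 0x3c237e, 0x3c2c82,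
    0x3c2f7e, 0x3c3386, 0x3c357a, 0x3d378c, 0x3d3b74, 0x3d3d8c, 0x3e3774, 0x3e3b8c, 0x3e3d74,
    0x3e3e8c, 0x3f3f81]

/-- The certificate for the cohomology in degree `8`. -/
def certificate8 : Certificate where
  ord := [12, 12, 6, 6, 3, 3, 3, 3, 3]
  N := 2
  U := .ofEntries 9 [0x081, 0x13f81, 0x20681, 0x2077e, 0x20b7e, 0x20d82, 0x20e7e, 0x21384, 0x21684,
    0x2197c, 0x2227e, 0x22684, 0x2297c, 0x22c84, 0x30b7d, 0x30d83, 0x30e7d, 0x31383, 0x31683,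
    0x3197d, 0x32683, 0x3297d, 0x32c83, 0x3357d, 0x33681, 0x33981, 0x40481, 0x40881, 0x40b7f,
    0x40d81, 0x40e7f, 0x4107f, 0x42081, 0x42281, 0x50d7e, 0x50e82, 0x5157f, 0x51a82, 0x5257e,
    0x52a81, 0x60b7f, 0x60d81, 0x60e7f, 0x61381, 0x61681, 0x6197f, 0x62681, 0x6297f, 0x62c81,
    0x7047e, 0x7077a, 0x7087e, 0x70b6e, 0x70d92, 0x70e6d, 0x71082, 0x7139d, 0x7169a, 0x71965,
    0x7207e, 0x72279, 0x72382, 0x7269a, 0x72964, 0x72c9b, 0x73081, 0x80b82, 0x80d7e, 0x80e82,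
    0x8137e, 0x8167e, 0x81982, 0x8267e, 0x82982, 0x82c7e, 0x83581]
  ψ := .ofEntries 64 [0x081, 0x30281, 0x30482, 0x3067c, 0x50281, 0x60281, 0x60482, 0x6067c, 0x90282,
    0x90484, 0x90678, 0xa0281, 0xc0281, 0xc0482, 0xc067c, 0xf0684, 0x110481, 0x12027f, 0x12047d,
    0x120688, 0x140482, 0x140678, 0x170682, 0x18027f, 0x18047d, 0x18068c, 0x1b0682, 0x1d067e,
    0x1e067c, 0x21067c, 0x220481, 0x24027f, 0x24047d, 0x240688, 0x27067e, 0x280482, 0x280678,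
    0x2a0581, 0x2c0681, 0x2d0684, 0x2e0682, 0x2f037f, 0x2f0681, 0x2f087d, 0x300487, 0x300665,
    0x300781, 0x330682, 0x350682, 0x350881, 0x390381, 0x390683, 0x390883, 0x3a0682, 0x3a0881,
    0x3c0381, 0x3c0683, 0x3c0883, 0x3f0181]
  q := .ofEntries 64 [0x081, 0x30281, 0x30481, 0x3067e, 0x50281, 0xc0282, 0xc0482, 0xc067c, 0xf0681,
    0x100281, 0x100481, 0x10067e, 0x130285, 0x13037c, 0x13077f, 0x13087e, 0x150582, 0x160682,
    0x16087f, 0x190881, 0x1a057f, 0x1b037f, 0x1b087f, 0x1c027b, 0x1c0384, 0x1c067d, 0x1c0781,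
    0x1c0883, 0x1d0381, 0x1f037e, 0x1f0681, 0x1f087d, 0x23027b, 0x230384, 0x23067f, 0x230781,
    0x230883, 0x25057f, 0x260285, 0x26037c, 0x26077f, 0x26087e, 0x29027b, 0x290384, 0x29067f,
    0x290781, 0x290882, 0x2a0582, 0x2c0683, 0x2c087f, 0x2f037e, 0x2f0681, 0x2f087d, 0x31027b,
    0x310385, 0x31057f, 0x31067f, 0x310781, 0x310883, 0x32057f, 0x37037e, 0x370681, 0x37087d,
    0x380285, 0x38037a, 0x380682, 0x38077f, 0x38087b, 0x3b0382, 0x3b067f, 0x3b0883, 0x3f0181]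
  h := .ofEntries 64 [0x10481, 0x10881, 0x2017f, 0x20481, 0x20881, 0x4017f, 0x4027f, 0x40481,
    0x40881, 0x70b81, 0x70d7f, 0x70e81, 0x8017f, 0x8027f, 0x80881, 0xb0d81, 0xb0e7f, 0xc047f,
    0xc0781, 0xc087f, 0xc1081, 0xc207f, 0xd0781, 0xd0b7f, 0xd0d81, 0xe077f, 0xe0b81, 0xe0d7f,
    0xe0e81, 0x101081, 0x131381, 0x150d81, 0x150e7f, 0x151581, 0x151a7f, 0x152581, 0x160b81,
    0x160d7f, 0x160e81, 0x161381, 0x162382, 0x16297f, 0x163181, 0x163281, 0x16347f, 0x16387f,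
    0x19137f, 0x191981, 0x19237f, 0x192981, 0x19317f, 0x19327f, 0x193481, 0x193881, 0x1a1a81,
    0x1c0781, 0x1c0b7e, 0x1c0d82, 0x1c0e7f, 0x1c137f, 0x1c1681, 0x1c237e, 0x1c2681, 0x1c2981,
    0x1c317f, 0x1c327f, 0x1c3481, 0x1c3881, 0x1f1f81, 0x1f3681, 0x23137f, 0x23237f, 0x232981,
    0x23317f, 0x23327f, 0x233481, 0x233881, 0x29137f, 0x29237f, 0x292981, 0x2a0d81, 0x2a0e7f,
    0x2a1a7f, 0x2a2581, 0x2c0b81, 0x2c0d7f, 0x2c0e81, 0x2c1381, 0x2c167f, 0x2c2382, 0x2c297f,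
    0x2c3181, 0x2c3281, 0x2c347f, 0x2c387f, 0x2f3681, 0x31137f, 0x31237f, 0x312981, 0x313481,
    0x313881, 0x323281, 0x373681, 0x373b81, 0x373d7f, 0x373e81, 0x381381, 0x382381, 0x38297f,
    0x38347f, 0x383681, 0x3b367f, 0x3b3d81, 0x3b3e7f, 0x3d3781, 0x3d3b7f, 0x3d3d81, 0x3e377f,
    0x3e3b81, 0x3e3d7f, 0x3e3e81]
  h' := .ofEntries 64 [0x30684, 0x30c82, 0x3107e, 0x50684, 0x50c82, 0x5107e, 0x51182, 0x5127e,
    0x51482, 0x52182, 0x5227c, 0x5237e, 0x52882, 0x90684, 0x90c82, 0xa0582, 0xa0684, 0xa0c82,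
    0xa107e, 0xa1182, 0xa127e, 0xa1482, 0xa2182, 0xa227c, 0xa237e, 0xa2882, 0xc0682, 0xf237e,
    0x11117e, 0x12067e, 0x120c7f, 0x121181, 0x12127e, 0x121881, 0x12227f, 0x12237e, 0x12247f,
    0x122881, 0x14067e, 0x140c7f, 0x141082, 0x14117d, 0x141282, 0x14147e, 0x14187f, 0x14217e,
    0x142283, 0x142384, 0x142481, 0x14287d, 0x17177f, 0x171d7f, 0x171e7f, 0x17237f, 0x172781,
    0x172b81, 0x172e7f, 0x18107e, 0x181182, 0x18127e, 0x182182, 0x18227e, 0x18237c, 0x18247e,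
    0x182882, 0x1b177f, 0x1b1b7e, 0x1b1d7f, 0x1b1e7f, 0x1b237f, 0x1b2781, 0x1b2b7f, 0x1b2e7f,
    0x1b3582, 0x1b3a82, 0x1c067e, 0x1c0c7f, 0x1c1082, 0x1c117f, 0x1c1282, 0x1c187f, 0x1c1d7e,
    0x1c1e7e, 0x1c217e, 0x1c2281, 0x1c2481, 0x1c2782, 0x1c287f, 0x1c2e7e, 0x1c3082, 0x1c3582,
    0x1c3a82, 0x1d177f, 0x1d1d7f, 0x1d1e81, 0x1d2381, 0x1d277f, 0x1d2b7f, 0x1d2e81, 0x1d3582,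
    0x1d3a82, 0x1e177e, 0x1e2382, 0x1e277e, 0x1e2b7e, 0x1e3582, 0x1e3a82, 0x21067e, 0x210c7f,
    0x211082, 0x21117f, 0x211282, 0x21187f, 0x21217e, 0x212281, 0x212382, 0x212481, 0x21287f,
    0x24067e, 0x240c7f, 0x241181, 0x241881, 0x24227f, 0x24237e, 0x24247f, 0x242881, 0x271781,
    0x271d81, 0x271e81, 0x272381, 0x27277f, 0x272b81, 0x272e81, 0x27357e, 0x273a7e, 0x28067e,
    0x280c7f, 0x281082, 0x28117d, 0x281282, 0x28187f, 0x28217e, 0x282283, 0x282384, 0x282481,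
    0x28287d, 0x2b357e, 0x2b3a7e, 0x2d1782, 0x2d1e7e, 0x2d237e, 0x2d2782, 0x2d2b82, 0x2d357e,
    0x2d3a7e, 0x2e1781, 0x2e1d7f, 0x2e1e7f, 0x2e237f, 0x2e2781, 0x2e2b81, 0x2e2e7f, 0x2f1782,
    0x2f1e7e, 0x2f237e, 0x2f2782, 0x2f2b82, 0x2f357e, 0x2f3684, 0x2f3a7e, 0x2f3c82, 0x33177f,
    0x331d7f, 0x331e7f, 0x33237f, 0x332781, 0x332b7f, 0x332e7f, 0x33337e, 0x333582, 0x333a82,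
    0x3a3a7e, 0x3c367e, 0x3c3c7e]

/-- The certificates in degrees `1` to `8`. -/
def certificates : List Certificate :=
  [certificate1, certificate2, certificate3, certificate4, certificate5, certificate6,
    certificate7, certificate8]

lemma checkAll_certificates : Certificate.checkAll certificates 0 (differentialTable 0)
    (differentialTable 1) = true := by
  have forced : (forceTable (differentialTable 0) fun X =>
      forceTable (differentialTable 1) fun X' =>
      Certificate.checkAll certificates 0 X X') = true := by decide +kernel
  rwa [forceTable_eq, forceTable_eq] at forced

lemma Certificate.check_of_checkAll {l : List Certificate} {m i : ℕ} {C : Certificate}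
    (h : checkAll l m (differentialTable m) (differentialTable (m + 1)) = true)
    (hC : l[i]? = some C) :
    C.check (m + i) (differentialTable (m + i)) (differentialTable (m + i + 1)) = true := by
  induction l generalizing m i with
  | nil => simp at hC
  | cons C₀ l ih =>
    rw [checkAll, Bool.and_eq_true, ← differentialTable_add_two m] at h
    cases i with
    | zero =>
      obtain rfl : C₀ = C := by simpa using hC
      rw [differentialTable_add_two] at h
      exact h.1
    | succ i =>
      rw [← add_assoc, add_right_comm]
      exact ih h.2 (by simpa using hC)

lemma Certificate.nonempty_splitting_boundary {C : Certificate} {m : ℕ}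
    (h : C.check m (differentialTable m) (differentialTable (m + 1)) = true) :
    Nonempty (Splitting (degreeProj ℤ _ (· ≤ m + 1)) (orbifoldKoszul.boundary m)
      (orbifoldKoszul.boundary (m + 1)) fun j : Fin C.ord.length => C.ord[j]) := by
  rw [check, forceTable_eq, forceTable_eq, ← differentialTable_add_two m] at h
  simpa only [Table.intEnd_degree, one_smul, intEnd_truncate_differentialTable] using
    (of_decide_eq_true h).nonempty_splitting

lemma nonempty_splitting_boundary {m : ℕ} {C : Certificate} (hC : certificates[m]? = some C) :
    Nonempty (Splitting (degreeProj ℤ _ (· ≤ m + 1)) (orbifoldKoszul.boundary m)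
      (orbifoldKoszul.boundary (m + 1)) fun j : Fin C.ord.length => C.ord[j]) := by
  have check := Certificate.check_of_checkAll checkAll_certificates hC
  rw [zero_add] at check
  exact Certificate.nonempty_splitting_boundary check

end Certificates

section CyclicSums

/-- The additive group `A` is the direct sum of the groups `ℤ/n` for `n` in the list `ord`; as
`ZMod 0 = ℤ`, the zeros of the list count the infinite cyclic summands. -/
def IsCyclicSum (A : Type*) [AddCommGroup A] (ord : List ℕ) : Prop :=
  Nonempty (A ≃+ ∀ j : Fin ord.length, ZMod ord[j])

namespace IsCyclicSum

variable {A B : Type*} [AddCommGroup A] [AddCommGroup B] {l l' : List ℕ}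

lemma of_addEquiv (e : A ≃+ B) : IsCyclicSum B l → IsCyclicSum A l :=
  Nonempty.map e.trans

lemma nonempty_addEquiv : IsCyclicSum A l → IsCyclicSum B l → Nonempty (A ≃+ B)
  | ⟨e⟩, ⟨f⟩ => ⟨e.trans f.symm⟩

lemma subsingleton : IsCyclicSum A [] → Subsingleton A
  | ⟨e⟩ => ⟨fun _ _ => e.injective (funext fun j => j.elim0)⟩

lemma of_subsingleton [Subsingleton A] : IsCyclicSum A [] :=
  ⟨.ofBijective (0 : A →+ _)
    ⟨fun _ _ _ => Subsingleton.elim _ _, fun _ => ⟨0, funext fun j => j.elim0⟩⟩⟩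

/-- Splitting off the first summand of a direct sum of cyclic groups. -/
def consAddEquiv (n : ℕ) (l : List ℕ) :
    (ZMod n × ∀ j : Fin l.length, ZMod l[j]) ≃+
      ∀ j : Fin (n :: l).length, ZMod (n :: l)[j] :=
  (Fin.consLinearEquiv ℤ fun j : Fin (n :: l).length => ZMod (n :: l)[j]).toAddEquiv

lemma zmod_prod {n : ℕ} : IsCyclicSum A l → IsCyclicSum (ZMod n × A) (n :: l)
  | ⟨e⟩ => ⟨((AddEquiv.refl _).prodCongr e).trans (consAddEquiv n l)⟩

lemma prod : IsCyclicSum A l → IsCyclicSum B l' → IsCyclicSum (A × B) (l ++ l')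
  | ⟨e⟩, hB => by
    refine of_addEquiv (e.prodCongr (.refl B)) ?_
    clear e
    induction l with
    | nil => exact hB.of_addEquiv (AddEquiv.uniqueProd (N := ∀ j : Fin 0, ZMod [][j]))
    | cons n l ih =>
      exact (zmod_prod ih).of_addEquiv
        (((consAddEquiv n l).symm.prodCongr (.refl B)).trans AddEquiv.prodAssoc)

lemma zmod (n : ℕ) : IsCyclicSum (ZMod n) [n] :=
  (zmod_prod of_subsingleton).of_addEquiv (AddEquiv.prodUnique (N := Unit)).symm

lemma zmod_pi (k n : ℕ) : IsCyclicSum (Fin k → ZMod n) (.replicate k n) := by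
  induction k with
  | zero => exact of_subsingleton
  | succ k ih =>
    exact (zmod_prod ih).of_addEquiv
      (Fin.consLinearEquiv ℤ fun _ : Fin (k + 1) => ZMod n).symm.toAddEquiv

end IsCyclicSum

end CyclicSums

section OrbifoldCohomology

lemma isCyclicSum_H (m : ℕ) {C : Certificate} (hC : certificates[m]? = some C) :
    IsCyclicSum (H (m + 1)) C.ord := by
  obtain ⟨S⟩ := nonempty_splitting_boundary hC
  exact orbifoldKoszul.nonempty_groupCohomology_addEquiv m S

lemma isCyclicSum_H_add_two_mul {m : ℕ} {C : Certificate} (hm : 6 ≤ m)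
    (hC : certificates[m]? = some C) (k : ℕ) : IsCyclicSum (H (m + 2 * k + 1)) C.ord := by
  obtain ⟨S⟩ := orbifoldKoszul.nonempty_splitting_add hm (nonempty_splitting_boundary hC) k
  exact orbifoldKoszul.nonempty_groupCohomology_addEquiv (m + 2 * k) S

lemma isCyclicSum_H_of_odd {i : ℕ} (hi : 7 ≤ i) (odd : Odd i) : IsCyclicSum (H i) [2, 2] := by
  obtain ⟨k, rfl⟩ := odd
  obtain ⟨k, rfl⟩ := Nat.exists_eq_add_of_le (show 3 ≤ k by lia)
  rw [mul_add]
  exact isCyclicSum_H_add_two_mul (m := 6) le_rfl rfl k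

lemma isCyclicSum_H_of_even {i : ℕ} (hi : 8 ≤ i) (even : Even i) :
    IsCyclicSum (H i) [12, 12, 6, 6, 3, 3, 3, 3, 3] := by
  obtain ⟨k, rfl⟩ := even
  obtain ⟨k, rfl⟩ := Nat.exists_eq_add_of_le (show 4 ≤ k by lia)
  rw [show 4 + k + (4 + k) = 7 + 2 * k + 1 by ring]
  exact isCyclicSum_H_add_two_mul (m := 7) (by norm_num) rfl k

end OrbifoldCohomology

theorem cohomology_of_Z12_orbifold_group :
    Subsingleton (H 1) ∧
    Nonempty (H 2 ≃+ ((Fin 3 → ℤ) × ZMod 12 × ZMod 3)) ∧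
    Nonempty (H 3 ≃+ (Fin 2 → ℤ)) ∧
    Nonempty (H 4 ≃+ ((Fin 3 → ℤ) × ZMod 12 × ZMod 6 × (Fin 3 → ZMod 3))) ∧
    Nonempty (H 5 ≃+ (Fin 2 → ZMod 2)) ∧
    Nonempty (H 6 ≃+ (ℤ × ZMod 12 × (Fin 2 → ZMod 6) × (Fin 5 → ZMod 3))) ∧
    (∀ i, 7 ≤ i → Odd i → Nonempty (H i ≃+ (Fin 2 → ZMod 2))) ∧
    (∀ i, 8 ≤ i → Even i →
      Nonempty (H i ≃+ ((Fin 2 → ZMod 12) × (Fin 2 → ZMod 6) × (Fin 5 → ZMod 3)))) := by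
  have zmod (n) : IsCyclicSum (ZMod n) [n] := .zmod n
  have pi (k n) : IsCyclicSum (Fin k → ZMod n) (.replicate k n) := .zmod_pi k n
  refine ⟨?_, ?_, ?_, ?_, ?_, ?_, fun i hi odd => ?_, fun i hi even => ?_⟩
  · exact (isCyclicSum_H 0 rfl).subsingleton
  · exact (isCyclicSum_H 1 rfl).nonempty_addEquiv ((pi 3 0).prod ((zmod 12).prod (zmod 3)))
  · exact (isCyclicSum_H 2 rfl).nonempty_addEquiv (pi 2 0)
  · exact (isCyclicSum_H 3 rfl).nonempty_addEquiv
      ((pi 3 0).prod ((zmod 12).prod ((zmod 6).prod (pi 3 3))))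
  · exact (isCyclicSum_H 4 rfl).nonempty_addEquiv (pi 2 2)
  · exact (isCyclicSum_H 5 rfl).nonempty_addEquiv
      ((zmod 0).prod ((zmod 12).prod ((pi 2 6).prod (pi 5 3))))
  · exact (isCyclicSum_H_of_odd hi odd).nonempty_addEquiv (pi 2 2)
  · exact (isCyclicSum_H_of_even hi even).nonempty_addEquiv
      ((pi 2 12).prod ((pi 2 6).prod (pi 5 3)))
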